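/- (Posterior concentration for nonparametric logistic regression.) Let a ≥ 1, d ∈ ℕ, β > 0, K ≥ 1, F ≥ 1 and ν ∈ [0,1). Suppose (X_i, Y_i), i = 1, …, n, are i.i.d. with X ∼ P_X supported on X ⊆ [−a,a]^d and Y | X ∼ Bernoulli(φ(f_0(X))), where φ(z) = (1 + e^{−z})^{−1}, f_0 ∈ H_d^β(K) and ‖f_0‖_∞ ≤ F. Consider the Bayesian model Y_i ∼ Bernoulli(φ(T_F ∘ f_{θ,ρν}(X_i))) where f_{θ,ρν} is a Leaky-ReLU DNN with architecture (L_n, (d, r_n, …, r_n, 1)), L_n = ⌈C_L log n⌉ and r_n = ⌈C_r n^{d/(2(2β+d))}⌉ for the constants C_L, C_r of the bounded-parameter approximation theorem, with a prior Π_θ on ℝ^{T_n} satisfying Assumption 1. Then for ε_n = n^{−β/(2β+d)} (log n)^γ with γ > 2 and any sequence M_n → ∞, the posterior mass Π_n( θ : ‖φ ∘ T_F ∘ f_{θ,ρν} − φ ∘ f_0‖_{2,P_X} > M_n ε_n | D^{(n)} ) converges to 0 in probability under the law P_0^n of the training data. -/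

import Mathlib

open MeasureTheory ProbabilityTheory Filter
open scoped ENNReal NNReal

noncomputable section

/-- Leaky-ReLU activation. -/
def lrelu (ν x : ℝ) : ℝ := max x (ν * x)

/-- A fully connected Leaky-ReLU network with input dimension `d` and hidden width `r`:
a first affine layer `ℝ^d → ℝ^r`, a list of inner affine layers `ℝ^r → ℝ^r`, and an
output affine layer `ℝ^r → ℝ`.  Each affine layer except the last is followed by the
componentwise Leaky-ReLU activation.  The number of hidden layers (the depth) is
`hid.length + 1`. -/
structure LNet (d r : ℕ) where
  W0 : Fin r → Fin d → ℝ
  b0 : Fin r → ℝ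
  hid : List ((Fin r → Fin r → ℝ) × (Fin r → ℝ))
  Wout : Fin r → ℝ
  bout : ℝ

/-- Evaluation of a Leaky-ReLU network. -/
def LNet.eval (ν : ℝ) {d r : ℕ} (net : LNet d r) (x : Fin d → ℝ) : ℝ :=
  let h := net.hid.foldl
    (fun (h : Fin r → ℝ) p => fun i => lrelu ν ((∑ j, p.1 i j * h j) + p.2 i))
    (fun i => lrelu ν ((∑ j, net.W0 i j * x j) + net.b0 i))
  (∑ i, net.Wout i * h i) + net.bout

/-- All weights and biases of the network are bounded by `B` in absolute value. -/
def LNet.bounded {d r : ℕ} (net : LNet d r) (B : ℝ) : Prop :=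
  (∀ i j, |net.W0 i j| ≤ B) ∧ (∀ i, |net.b0 i| ≤ B) ∧
  (∀ p ∈ net.hid, (∀ i j, |p.1 i j| ≤ B) ∧ (∀ i, |p.2 i| ≤ B)) ∧
  (∀ i, |net.Wout i| ≤ B) ∧ |net.bout| ≤ B

/-- Membership in the class `F_{ρν}^{DNN}(L, r, B)` of Leaky-ReLU networks with
architecture `(L, (d, r, …, r, 1))` and all parameters bounded by `B`. -/
def memDNN (ν : ℝ) (d L r : ℕ) (B : ℝ) (f : (Fin d → ℝ) → ℝ) : Prop :=
  ∃ net : LNet d r, net.hid.length + 1 = L ∧ net.bounded B ∧ ∀ x, f x = net.eval ν x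

/-- The cube `[−a,a]^d`. -/
def cube (a : ℝ) (d : ℕ) : Set (Fin d → ℝ) := {x | ∀ i, x i ∈ Set.Icc (-a) a}

/-- Partial derivative of `f : ℝ^d → ℝ` in coordinate `i`. -/
def pder {d : ℕ} (i : Fin d) (f : (Fin d → ℝ) → ℝ) : (Fin d → ℝ) → ℝ :=
  fun x => fderiv ℝ f x (Pi.single i 1)

/-- Multi-index partial derivative `∂^α f = ∂_1^{α 1} ⋯ ∂_d^{α d} f`. -/
def pderm {d : ℕ} (α : Fin d → ℕ) (f : (Fin d → ℝ) → ℝ) : (Fin d → ℝ) → ℝ :=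
  (List.finRange d).foldr (fun i g => (pder i)^[α i] g) f

/-- Membership in the Hölder ball `H_d^β(K)` on `[−a,a]^d`: `f` is `⌊β⌋`-times
continuously differentiable and there are bounds `S α` on `|∂^α f|` over the cube for all
multi-indices with `|α|₁ < β`, and Hölder constants `H α` for `∂^α f` (with exponent
`β − ⌊β⌋`, with respect to the sup-norm) for all multi-indices with `|α|₁ = ⌊β⌋`, whose
total sum is at most `K`. -/
def memHolder (a : ℝ) (d : ℕ) (β K : ℝ) (f : (Fin d → ℝ) → ℝ) : Prop :=
  ContDiff ℝ (⌊β⌋₊ : ℕ∞) f ∧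
  ∃ S H : (Fin d → Fin (⌊β⌋₊ + 1)) → ℝ,
    (∀ α : Fin d → Fin (⌊β⌋₊ + 1), ((∑ i, (α i : ℕ) : ℕ) : ℝ) < β →
      ∀ x ∈ cube a d, |pderm (fun i => (α i : ℕ)) f x| ≤ S α) ∧
    (∀ α : Fin d → Fin (⌊β⌋₊ + 1), (∑ i, (α i : ℕ)) = ⌊β⌋₊ →
      ∀ x₁ ∈ cube a d, ∀ x₂ ∈ cube a d, x₁ ≠ x₂ →
        |pderm (fun i => (α i : ℕ)) f x₁ - pderm (fun i => (α i : ℕ)) f x₂| ≤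
          H α * ‖x₁ - x₂‖ ^ (β - (⌊β⌋₊ : ℝ))) ∧
    (∑ α ∈ Finset.univ.filter
        (fun α : Fin d → Fin (⌊β⌋₊ + 1) => ((∑ i, (α i : ℕ) : ℕ) : ℝ) < β), S α) +
      (∑ α ∈ Finset.univ.filter
        (fun α : Fin d → Fin (⌊β⌋₊ + 1) => (∑ i, (α i : ℕ)) = ⌊β⌋₊), H α) ≤ K

/-- Index type for the parameters `θ` of a DNN with architecture `(L, (d, r, …, r, 1))`:
first-layer weights and biases, the `L−1` inner-layer weight matrices and bias vectors,
and the output-layer weights and bias.  Its cardinality is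
`T = (d+1)r + (L−1)(r+1)r + (r+1)`. -/
abbrev ParamIdx (d r L : ℕ) : Type :=
  (Fin r × Fin d) ⊕ Fin r ⊕ (Fin (L - 1) × Fin r × Fin r) ⊕ (Fin (L - 1) × Fin r) ⊕
    Fin r ⊕ Unit

/-- The Leaky-ReLU network with architecture `(L, (d, r, …, r, 1))` determined by the
parameter vector `θ`. -/
def netOfParams (ν : ℝ) (d r L : ℕ) (θ : ParamIdx d r L → ℝ) (x : Fin d → ℝ) : ℝ :=
  let h0 : Fin r → ℝ := fun i =>
    lrelu ν ((∑ j, θ (Sum.inl (i, j)) * x j) + θ (Sum.inr (Sum.inl i)))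
  let h : Fin r → ℝ := (List.finRange (L - 1)).foldl
    (fun h l => fun i =>
      lrelu ν ((∑ j, θ (Sum.inr (Sum.inr (Sum.inl (l, i, j)))) * h j) +
        θ (Sum.inr (Sum.inr (Sum.inr (Sum.inl (l, i))))))) h0
  (∑ i, θ (Sum.inr (Sum.inr (Sum.inr (Sum.inr (Sum.inl i))))) * h i) +
    θ (Sum.inr (Sum.inr (Sum.inr (Sum.inr (Sum.inr ())))))

/-- Truncation operator `T_F(x) = min(max(x, −F), F)`. -/
def trunc (F x : ℝ) : ℝ := min (max x (-F)) F

/-- The Gaussian density with mean `m` and variance `s`, evaluated at `y`. -/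
def gpdf (m s y : ℝ) : ℝ :=
  (Real.sqrt (2 * Real.pi * s))⁻¹ * Real.exp (-((y - m) ^ 2) / (2 * s))

/-- The joint law of `(X, Y)` where `X ∼ P_X` and `Y | X ∼ N(f₀(X), v)`. -/
def gaussRegLaw (d : ℕ) (PX : Measure (Fin d → ℝ)) (f₀ : (Fin d → ℝ) → ℝ) (v : ℝ≥0) :
    Measure ((Fin d → ℝ) × ℝ) :=
  PX.bind fun x => (gaussianReal (f₀ x) v).map fun y => (x, y)

/-- Posterior mass of the set `A` under prior `prior` and likelihood `lik`. -/
def postMass {α : Type*} [MeasurableSpace α] (prior : Measure α) (lik : α → ℝ)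
    (A : Set α) : ℝ≥0∞ :=
  (∫⁻ p in A, ENNReal.ofReal (lik p) ∂prior) / ∫⁻ p, ENNReal.ofReal (lik p) ∂prior

/-- The `L²(P_X)` distance `‖g − h‖_{2,P_X}`. -/
def l2dist (d : ℕ) (PX : Measure (Fin d → ℝ)) (g h : (Fin d → ℝ) → ℝ) : ℝ :=
  Real.sqrt (∫ x, (g x - h x) ^ 2 ∂PX)

/-- The Gaussian regression likelihood of `(θ, σ²)` given the data `D`. -/
def gaussLik (ν F : ℝ) (d r L : ℕ) {n : ℕ} (D : Fin n → (Fin d → ℝ) × ℝ)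
    (p : (ParamIdx d r L → ℝ) × ℝ) : ℝ :=
  ∏ i, gpdf (trunc F (netOfParams ν d r L p.1 (D i).1)) p.2 (D i).2

/-- The sigmoid function `φ(z) = (1 + e^{−z})⁻¹`. -/
def sigmoid (z : ℝ) : ℝ := (1 + Real.exp (-z))⁻¹

/-- The Bernoulli distribution on `ℝ` with success probability `p` (mass `p` at `1` and
`1 − p` at `0`). -/
def bern (p : ℝ) : Measure ℝ :=
  ENNReal.ofReal p • Measure.dirac 1 + ENNReal.ofReal (1 - p) • Measure.dirac 0

/-- The joint law of `(X, Y)` where `X ∼ P_X` and `Y | X ∼ Bernoulli(φ(f₀(X)))`. -/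
def logisticLaw (d : ℕ) (PX : Measure (Fin d → ℝ)) (f₀ : (Fin d → ℝ) → ℝ) :
    Measure ((Fin d → ℝ) × ℝ) :=
  PX.bind fun x => (bern (sigmoid (f₀ x))).map fun y => (x, y)

/-- The logistic-regression (Bernoulli) likelihood of `θ` given the data `D`. -/
def bernLik (ν F : ℝ) (d r L : ℕ) {n : ℕ} (D : Fin n → (Fin d → ℝ) × ℝ)
    (θ : ParamIdx d r L → ℝ) : ℝ :=
  ∏ i, sigmoid (trunc F (netOfParams ν d r L θ (D i).1)) ^ (D i).2 *
    (1 - sigmoid (trunc F (netOfParams ν d r L θ (D i).1))) ^ (1 - (D i).2)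

/-- The depth `L_n = ⌈C_L log n⌉` of the Bayesian model. -/
def Ldepth (CL : ℝ) (n : ℕ) : ℕ := ⌈CL * Real.log n⌉₊

/-- The width `r_n = ⌈C_r n^{d/(2(2β+d))}⌉` of the Bayesian model. -/
def rwidth (Cr β : ℝ) (d n : ℕ) : ℕ :=
  ⌈Cr * (n : ℝ) ^ ((d : ℝ) / (2 * (2 * β + d)))⌉₊


/-- A polynomial of total degree at most `k` is determined by its coefficients in a box. -/
lemma mvpoly_eq_zero_of_box {σ : Type} [Fintype σ] (p : MvPolynomial σ ℝ) (k : ℕ)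
    (hp : p.totalDegree ≤ k)
    (h : ∀ m : σ → Fin (k + 1),
      p.coeff (Finsupp.equivFunOnFinite.symm (fun s => (m s : ℕ))) = 0) : p = 0 := by
  ext m
  rw [MvPolynomial.coeff_zero]
  by_cases hm : ∀ s, m s < k + 1
  · have := h (fun s => ⟨m s, hm s⟩)
    convert this using 2
    ext s; simp
  · by_contra hne
    apply hm
    intro s
    have h1 : m ∈ p.support := by simpa [MvPolynomial.mem_support_iff] using hne
    have h2 := MvPolynomial.monomial_le_degreeOf s h1
    have h3 := MvPolynomial.degreeOf_le_totalDegree p s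
    omega

/-- Algebraic dependence of a linear form on a polynomial map, with a degree bound. -/
lemma exists_annihilator {σ : Type} [Fintype σ] (P : σ → MvPolynomial σ ℝ) (E : ℕ)
    (hP : ∀ s, (P s).totalDegree ≤ E) (u : MvPolynomial σ ℝ) (hu : u.totalDegree ≤ 1)
    (J : ℕ) (hJ : (1 + Fintype.card σ * E) ^ Fintype.card σ ≤ J) :
    ∃ C : Fin (J + 1) → MvPolynomial σ ℝ, (∃ j, C j ≠ 0) ∧
      ∀ x : σ → ℝ, ∑ j, MvPolynomial.eval (fun s => MvPolynomial.eval x (P s)) (C j) *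
        (MvPolynomial.eval x u) ^ (j : ℕ) = 0 := by
  classical
  set T := Fintype.card σ with hT
  set k := J + T * (J * E) with hk
  let w : Fin (J + 1) × (σ → Fin (J + 1)) → MvPolynomial σ ℝ :=
    fun i => u ^ (i.1 : ℕ) * ∏ s, P s ^ (i.2 s : ℕ)
  have hw : ∀ i, (w i).totalDegree ≤ k := by
    intro i
    refine (MvPolynomial.totalDegree_mul _ _).trans ?_
    have h1 : (u ^ (i.1 : ℕ)).totalDegree ≤ J := by
      refine (MvPolynomial.totalDegree_pow _ _).trans ?_
      have : (i.1 : ℕ) ≤ J := by omega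
      nlinarith
    have h2 : (∏ s, P s ^ (i.2 s : ℕ)).totalDegree ≤ T * (J * E) := by
      refine (MvPolynomial.totalDegree_finsetProd _ _).trans ?_
      have : ∀ s ∈ Finset.univ, (P s ^ (i.2 s : ℕ)).totalDegree ≤ J * E := by
        intro s _
        refine (MvPolynomial.totalDegree_pow _ _).trans ?_
        exact Nat.mul_le_mul (by omega) (hP s)
      refine (Finset.sum_le_card_nsmul _ _ _ this).trans ?_
      simp [hT]
    omega
  let Φ : (Fin (J + 1) × (σ → Fin (J + 1)) → ℝ) →ₗ[ℝ] ((σ → Fin (k + 1)) → ℝ) :=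
    { toFun := fun c m =>
        (∑ i, c i • w i).coeff (Finsupp.equivFunOnFinite.symm (fun s => (m s : ℕ)))
      map_add' := by
        intro a b; ext m
        simp [add_smul, Finset.sum_add_distrib]
      map_smul' := by
        intro a b; ext m
        simp [mul_smul, ← Finset.smul_sum, MvPolynomial.coeff_smul] }
  have hker : LinearMap.ker Φ ≠ ⊥ := by
    apply LinearMap.ker_ne_bot_of_finrank_lt
    rw [Module.finrank_fintype_fun_eq_card, Module.finrank_fintype_fun_eq_card]
    simp only [Fintype.card_prod, Fintype.card_pi, Fintype.card_fin, Finset.prod_const,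
      Finset.card_univ, ← hT]
    have h1 : k + 1 ≤ (J + 1) * (1 + T * E) := by rw [hk]; nlinarith
    calc (k + 1) ^ T ≤ ((J + 1) * (1 + T * E)) ^ T := Nat.pow_le_pow_left h1 _
      _ = (J + 1) ^ T * (1 + T * E) ^ T := by rw [mul_pow]
      _ ≤ (J + 1) ^ T * J := Nat.mul_le_mul_left _ hJ
      _ < (J + 1) * (J + 1) ^ T := by
        have : 0 < (J + 1) ^ T := by positivity
        nlinarith
  obtain ⟨c, hc, hc0⟩ := Submodule.exists_mem_ne_zero_of_ne_bot hker
  have hsum : ∑ i, c i • w i = 0 := by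
    apply mvpoly_eq_zero_of_box _ k
    · refine (MvPolynomial.totalDegree_finsetSum _ _).trans ?_
      apply Finset.sup_le
      intro i _
      exact (MvPolynomial.totalDegree_smul_le _ _).trans (hw i)
    · intro m
      have := LinearMap.mem_ker.1 hc
      exact congrFun this m
  refine ⟨fun j => ∑ α : σ → Fin (J + 1),
    MvPolynomial.monomial (Finsupp.equivFunOnFinite.symm (fun s => (α s : ℕ))) (c (j, α)), ?_, ?_⟩
  · by_contra hall
    push Not at hall
    apply hc0
    ext ⟨j, α⟩
    have h1 := congrArg (MvPolynomial.coeff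
      (Finsupp.equivFunOnFinite.symm (fun s => (α s : ℕ)))) (hall j)
    rw [MvPolynomial.coeff_sum, Finset.sum_eq_single α] at h1
    · simpa using h1
    · intro b _ hb
      rw [MvPolynomial.coeff_monomial, if_neg]
      intro heq
      apply hb
      have := Finsupp.equivFunOnFinite.symm.injective heq
      ext s
      exact congrFun this s
    · simp
  · intro x
    have h1 := congrArg (MvPolynomial.eval x) hsum
    rw [map_sum, map_zero, Fintype.sum_prod_type] at h1
    rw [← h1]
    refine Finset.sum_congr rfl fun j _ => ?_
    rw [map_sum, Finset.sum_mul]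
    refine Finset.sum_congr rfl fun α _ => ?_
    simp only [MvPolynomial.eval_monomial, MvPolynomial.smul_eval, w, map_mul, map_pow, map_prod]
    rw [Finsupp.prod_fintype _ _ (by simp)]
    simp only [Finsupp.equivFunOnFinite_symm_apply_apply]
    ring

/-- Some form `∑ i, k^i x_i` with bounded natural `k` separates a finite set of points. -/
lemma exists_separating {T N : ℕ} (y : Fin N → Fin T → ℝ) (hy : Function.Injective y) :
    ∃ k : Fin (N * N * T + 1),
      Function.Injective (fun a : Fin N => ∑ i : Fin T, ((k : ℕ) : ℝ) ^ (i : ℕ) * y a i) := by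
  classical
  let q : Fin N × Fin N → Polynomial ℝ :=
    fun ab => ∑ i : Fin T, Polynomial.monomial (i : ℕ) (y ab.1 i - y ab.2 i)
  have hq : ∀ a b, a ≠ b → q (a, b) ≠ 0 := by
    intro a b hab h0
    apply hab
    apply hy
    ext i
    have := congrArg (fun p => Polynomial.coeff p (i : ℕ)) h0
    simp only [q, Polynomial.finsetSum_coeff, Polynomial.coeff_monomial, Polynomial.coeff_zero] at this
    rw [Finset.sum_eq_single i] at this
    · simpa [sub_eq_zero] using this
    · intro b _ hb
      rw [if_neg]; exact fun h => hb (Fin.ext h)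
    · simp
  have hdeg : ∀ ab, (q ab).natDegree ≤ T := by
    intro ab
    apply Polynomial.natDegree_sum_le_of_forall_le
    intro i _
    exact (Polynomial.natDegree_monomial_le _).trans i.2.le
  let bad : Finset ℝ := Finset.univ.biUnion fun ab : Fin N × Fin N => (q ab).roots.toFinset
  have hbad : bad.card ≤ N * N * T := by
    refine (Finset.card_biUnion_le).trans ?_
    have : ∀ ab ∈ Finset.univ, (q ab).roots.toFinset.card ≤ T := fun ab _ =>
      (Multiset.toFinset_card_le _).trans ((Polynomial.card_roots' _).trans (hdeg ab))
    refine (Finset.sum_le_card_nsmul _ _ _ this).trans ?_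
    simp
  let im : Finset ℝ := Finset.univ.image (fun k : Fin (N * N * T + 1) => ((k : ℕ) : ℝ))
  have him : im.card = N * N * T + 1 := by
    rw [Finset.card_image_of_injective]
    · simp
    · intro a b h; simpa [Fin.ext_iff] using h
  obtain ⟨z, hz, hzb⟩ := Finset.exists_mem_notMem_of_card_lt_card (s := bad) (t := im) (by omega)
  obtain ⟨k, -, rfl⟩ := Finset.mem_image.1 hz
  refine ⟨k, fun a b hab => ?_⟩
  by_contra hne
  apply hzb
  refine Finset.mem_biUnion.2 ⟨(a, b), Finset.mem_univ _, ?_⟩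
  rw [Multiset.mem_toFinset, Polynomial.mem_roots (hq a b hne)]
  simp only [Polynomial.IsRoot, q, Polynomial.eval_finsetSum, Polynomial.eval_monomial]
  simp only at hab
  rw [← sub_eq_zero, ← Finset.sum_sub_distrib] at hab
  rw [← hab]
  refine Finset.sum_congr rfl fun i _ => by ring

/-- Bezout-type bound: if all values in a box have at least `N` preimages under a
polynomial map then `N` is bounded. -/
lemma card_fiber_le {T N : ℕ} (P : Fin T → MvPolynomial (Fin T) ℝ) (E : ℕ)
    (hP : ∀ s, (P s).totalDegree ≤ E) (η : ℝ) (hη : 0 < η)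
    (hN : ∀ v : Fin T → ℝ, (∀ i, v i ∈ Set.Ioo 0 η) →
      ∃ y : Fin N → Fin T → ℝ, Function.Injective y ∧
        ∀ a s, MvPolynomial.eval (y a) (P s) = v s) :
    N ≤ (1 + T * E) ^ T := by
  classical
  set J := (1 + T * E) ^ T with hJ
  let u : Fin (N * N * T + 1) → MvPolynomial (Fin T) ℝ :=
    fun k => ∑ i : Fin T, MvPolynomial.C (((k : ℕ) : ℝ) ^ (i : ℕ)) * MvPolynomial.X i
  have hu : ∀ k, (u k).totalDegree ≤ 1 := by
    intro k
    refine (MvPolynomial.totalDegree_finsetSum _ _).trans (Finset.sup_le fun i _ => ?_)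
    refine (MvPolynomial.totalDegree_mul _ _).trans ?_
    rw [MvPolynomial.totalDegree_C, MvPolynomial.totalDegree_X]
  have hann := fun k => exists_annihilator P E hP (u k) (hu k) J (by simp [hJ])
  choose C hC0 hC using hann
  choose j hj using hC0
  have hprod : ∏ k, C k (j k) ≠ 0 := Finset.prod_ne_zero_iff.2 fun k _ => hj k
  have : ∃ v : Fin T → ℝ, (∀ i, v i ∈ Set.Ioo 0 η) ∧
      MvPolynomial.eval v (∏ k, C k (j k)) ≠ 0 := by
    by_contra hcon
    push Not at hcon
    apply hprod
    apply MvPolynomial.funext_set (fun _ => Set.Ioo 0 η) (fun _ => Set.Ioo_infinite hη)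
    intro x hx
    rw [map_zero]
    exact hcon x (fun i => hx i (Set.mem_univ i))
  obtain ⟨v, hv, hv0⟩ := this
  obtain ⟨y, hyinj, hy⟩ := hN v hv
  obtain ⟨k, hk⟩ := exists_separating y hyinj
  rw [map_prod, Finset.prod_ne_zero_iff] at hv0
  let Q : Polynomial ℝ := ∑ i : Fin (J + 1), Polynomial.monomial (i : ℕ) (MvPolynomial.eval v (C k i))
  have hQ0 : Q ≠ 0 := by
    intro h0
    apply hv0 k (Finset.mem_univ _)
    have := congrArg (fun p => Polynomial.coeff p (j k : ℕ)) h0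
    simp only [Q, Polynomial.finsetSum_coeff, Polynomial.coeff_monomial, Polynomial.coeff_zero] at this
    rw [Finset.sum_eq_single (j k)] at this
    · simpa using this
    · intro b _ hb
      rw [if_neg]; exact fun h => hb (Fin.ext h)
    · simp
  have hQd : Q.natDegree ≤ J := by
    apply Polynomial.natDegree_sum_le_of_forall_le
    intro i _
    exact (Polynomial.natDegree_monomial_le _).trans (by omega)
  have hroot : ∀ a, (∑ i : Fin T, ((k : ℕ) : ℝ) ^ (i : ℕ) * y a i) ∈ Q.roots.toFinset := by
    intro a
    rw [Multiset.mem_toFinset, Polynomial.mem_roots hQ0]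
    simp only [Polynomial.IsRoot, Q, Polynomial.eval_finsetSum, Polynomial.eval_monomial]
    have h1 := hC k (y a)
    have h2 : (fun s => MvPolynomial.eval (y a) (P s)) = v := funext (hy a)
    rw [h2] at h1
    rw [← h1]
    refine Finset.sum_congr rfl fun i _ => ?_
    simp [u]
  calc N = (Finset.univ.image (fun a : Fin N => ∑ i : Fin T, ((k : ℕ) : ℝ) ^ (i : ℕ) * y a i)).card := by
        rw [Finset.card_image_of_injective _ hk]; simp
    _ ≤ Q.roots.toFinset.card := Finset.card_le_card (by
        intro z hz
        obtain ⟨a, -, rfl⟩ := Finset.mem_image.1 hz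
        exact hroot a)
    _ ≤ _ := (Multiset.toFinset_card_le _).trans ((Polynomial.card_roots' _).trans hQd)


lemma mvpoly_totalDegree_pderiv_le {σ : Type} (p : MvPolynomial σ ℝ) (i : σ) :
    (MvPolynomial.pderiv i p).totalDegree ≤ p.totalDegree := by
  classical
  conv_lhs => rw [p.as_sum, map_sum]
  refine (MvPolynomial.totalDegree_finsetSum _ _).trans (Finset.sup_le fun m hm => ?_)
  rw [MvPolynomial.pderiv_monomial]
  refine (MvPolynomial.totalDegree_monomial_le _ _).trans ?_
  refine le_trans ?_ (MvPolynomial.le_totalDegree hm)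
  have h1 : m - Finsupp.single i 1 ≤ m := tsub_le_self
  exact Finsupp.sum_le_sum_index h1 (by intro _ _ a b h; simpa using h) (by simp)

lemma mvpoly_hasDerivAt {σ : Type} [DecidableEq σ] (p : MvPolynomial σ ℝ) (i : σ) (y : σ → ℝ) :
    HasDerivAt (fun t : ℝ => MvPolynomial.eval (y + t • (Pi.single i (1 : ℝ) : σ → ℝ)) p)
      (MvPolynomial.eval y (MvPolynomial.pderiv i p)) 0 := by
  induction p using MvPolynomial.induction_on with
  | C a => simpa using hasDerivAt_const (0 : ℝ) a
  | add p q hp hq =>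
    have h := hp.add hq
    simp only [map_add]
    exact h
  | mul_X p j hp =>
    have hX : HasDerivAt (fun t : ℝ => (y + t • (Pi.single i (1 : ℝ) : σ → ℝ)) j)
        ((Pi.single i (1 : ℝ) : σ → ℝ) j) 0 := by
      have := ((hasDerivAt_id (0 : ℝ)).mul_const ((Pi.single i (1 : ℝ) : σ → ℝ) j)).const_add (y j)
      simpa using this
    have h := hp.mul hX
    have e : (MvPolynomial.eval y) (MvPolynomial.pderiv i (p * MvPolynomial.X j)) =
        (MvPolynomial.eval y) (MvPolynomial.pderiv i p) *
          (y + (0 : ℝ) • (Pi.single i (1 : ℝ) : σ → ℝ)) j +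
        (MvPolynomial.eval (y + (0 : ℝ) • (Pi.single i (1 : ℝ) : σ → ℝ))) p *
          (Pi.single i (1 : ℝ) : σ → ℝ) j := by
      rw [MvPolynomial.pderiv_mul, MvPolynomial.pderiv_X]
      by_cases hij : j = i
      · subst hij; simp
      · simp [hij]
    rw [e]
    simp only [map_mul, MvPolynomial.eval_X]
    exact h

/-- Number of strict sign patterns. -/
lemma card_strict_signs {T N : ℕ} {ι : Type} [Fintype ι] (f : ι → MvPolynomial (Fin T) ℝ)
    (D : ℕ) (hf : ∀ i, (f i).totalDegree ≤ D) (x : Fin N → Fin T → ℝ)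
    (hx0 : ∀ a i, MvPolynomial.eval (x a) (f i) ≠ 0)
    (hx : ∀ a b, (∀ i, 0 < MvPolynomial.eval (x a) (f i) ↔ 0 < MvPolynomial.eval (x b) (f i)) →
      a = b) :
    N ≤ (1 + T * (Fintype.card ι * D + 2)) ^ T := by
  classical
  -- a radius
  obtain ⟨R, hR0, hR⟩ : ∃ R : ℝ, 0 < R ∧ ∀ a, ∑ i, x a i ^ 2 < R := by
    refine ⟨1 + ∑ a, ∑ i, x a i ^ 2, by positivity, fun a => ?_⟩
    have := Finset.single_le_sum (f := fun a => ∑ i, x a i ^ 2)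
      (fun a _ => by positivity) (Finset.mem_univ a)
    linarith
  let B : MvPolynomial (Fin T) ℝ := MvPolynomial.C R - ∑ i, MvPolynomial.X i ^ 2
  let G : MvPolynomial (Fin T) ℝ := B * ∏ i, f i
  have hB : ∀ y, MvPolynomial.eval y B = R - ∑ i, y i ^ 2 := by intro y; simp [B]
  have hG : ∀ y, MvPolynomial.eval y G = (R - ∑ i, y i ^ 2) * ∏ i, MvPolynomial.eval y (f i) := by
    intro y; simp only [G, map_mul, hB, map_prod]
  have hGd : G.totalDegree ≤ Fintype.card ι * D + 2 := by
    refine (MvPolynomial.totalDegree_mul _ _).trans ?_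
    have h1 : B.totalDegree ≤ 2 := by
      refine (MvPolynomial.totalDegree_sub _ _).trans (max_le (by simp) ?_)
      refine (MvPolynomial.totalDegree_finsetSum _ _).trans (Finset.sup_le fun i _ => ?_)
      rw [MvPolynomial.totalDegree_X_pow]
    have h2 : (∏ i, f i).totalDegree ≤ Fintype.card ι * D := by
      refine (MvPolynomial.totalDegree_finsetProd _ _).trans ?_
      refine (Finset.sum_le_card_nsmul _ _ _ (fun i _ => hf i)).trans ?_
      simp
    omega
  have hGx : ∀ a, 0 < |MvPolynomial.eval (x a) G| := by
    intro a
    rw [abs_pos, hG]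
    exact mul_ne_zero (by linarith [hR a]) (Finset.prod_ne_zero_iff.2 fun i _ => hx0 a i)
  -- small slopes
  obtain ⟨η, hη, hηa⟩ : ∃ η : ℝ, 0 < η ∧
      ∀ a, 2 * (η * (T * (R + 1))) < |MvPolynomial.eval (x a) G| := by
    have hev : ∀ᶠ η : ℝ in nhdsWithin 0 (Set.Ioi 0), ∀ a, 2 * (η * (T * (R + 1))) < |MvPolynomial.eval (x a) G| := by
      rw [Filter.eventually_all]
      intro a
      have hc : Filter.Tendsto (fun η : ℝ => 2 * (η * (T * (R + 1)))) (nhdsWithin 0 (Set.Ioi 0))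
          (nhds (2 * (0 * (T * (R + 1))))) :=
        (Continuous.tendsto (by fun_prop) 0).mono_left nhdsWithin_le_nhds
      exact hc.eventually (gt_mem_nhds (by simpa using hGx a))
    obtain ⟨η, h1, h2⟩ := (hev.and self_mem_nhdsWithin).exists
    exact ⟨η, h2, h1⟩
  have hP : ∀ s, (MvPolynomial.pderiv s G).totalDegree ≤ Fintype.card ι * D + 2 :=
    fun s => (mvpoly_totalDegree_pderiv_le _ _).trans hGd
  refine card_fiber_le (fun s => MvPolynomial.pderiv s G) _ hP η hη ?_
  intro v hv
  -- for every witness there is a critical point in its cell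
  have key : ∀ a, ∃ y : Fin T → ℝ, (∀ i, 0 < MvPolynomial.eval (x a) (f i) ↔
      0 < MvPolynomial.eval y (f i)) ∧ ∀ s, MvPolynomial.eval y (MvPolynomial.pderiv s G) = v s := by
    intro a
    let sg : ι → ℝ := fun i => SignType.sign (MvPolynomial.eval (x a) (f i))
    have hsg : ∀ i, sg i * sg i = 1 ∧ 0 < sg i * MvPolynomial.eval (x a) (f i) ∧
        (0 < MvPolynomial.eval (x a) (f i) ↔ 0 < sg i) := by
      intro i
      rcases lt_or_gt_of_ne (hx0 a i) with h | h
      · simp only [sg, sign_neg h]; refine ⟨by simp, by simpa using h, ?_⟩; norm_num; exact h.le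
      · simp only [sg, sign_pos h]; refine ⟨by simp, by simpa using h, ?_⟩; norm_num; exact h
    let κ : ℝ := ∏ i, sg i
    have hκ : κ * κ = 1 := by
      simp only [κ, ← Finset.prod_mul_distrib, fun i => (hsg i).1, Finset.prod_const_one]
    have hκ1 : |κ| = 1 := by
      have : |κ| * |κ| = 1 := by rw [← abs_mul, hκ, abs_one]
      nlinarith [abs_nonneg κ]
    have hκG : ∀ y, κ * MvPolynomial.eval y G =
        (R - ∑ i, y i ^ 2) * ∏ i, (sg i * MvPolynomial.eval y (f i)) := by
      intro y
      rw [hG, Finset.prod_mul_distrib]; ring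
    have hcont : ∀ p : MvPolynomial (Fin T) ℝ, Continuous fun y => MvPolynomial.eval y p :=
      fun p => p.continuous_eval
    let Kc : Set (Fin T → ℝ) := {y | ∑ i, y i ^ 2 ≤ R} ∩
      ⋂ i, {y | 0 ≤ sg i * MvPolynomial.eval y (f i)}
    have habs : ∀ y ∈ Kc, ∀ i, |y i| ≤ R + 1 := by
      intro y hy i
      have h1 := Finset.single_le_sum (f := fun i => y i ^ 2)
        (fun a _ => by positivity) (Finset.mem_univ i)
      have h2 : ∑ i, y i ^ 2 ≤ R := hy.1
      rw [abs_le]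
      constructor <;> nlinarith [sq_nonneg (y i - 1), sq_nonneg (y i + 1)]
    have hKclosed : IsClosed Kc := by
      refine IsClosed.inter (isClosed_le (by fun_prop) continuous_const)
        (isClosed_iInter fun i => isClosed_le continuous_const ((hcont _).const_mul _))
    have hKcomp : IsCompact Kc := by
      refine (isCompact_univ_pi (fun _ : Fin T => isCompact_Icc (a := -(R + 1)) (b := R + 1))).of_isClosed_subset
        hKclosed ?_
      intro y hy i _
      exact abs_le.1 (habs y hy i)
    have hxK : x a ∈ Kc := ⟨(hR a).le, Set.mem_iInter.2 fun i => (hsg i).2.1.le⟩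
    let h : (Fin T → ℝ) → ℝ := fun y => κ * (MvPolynomial.eval y G - ∑ i, v i * y i)
    have hhc : Continuous h := by
      have := hcont G
      fun_prop
    obtain ⟨y, hyK, hymax⟩ := hKcomp.exists_isMaxOn ⟨x a, hxK⟩ hhc.continuousOn
    have hlin : ∀ z ∈ Kc, |κ * ∑ i, v i * z i| ≤ η * (T * (R + 1)) := by
      intro z hz
      rw [abs_mul, hκ1, one_mul]
      refine (Finset.abs_sum_le_sum_abs _ _).trans ?_
      have : ∀ i ∈ Finset.univ, |v i * z i| ≤ η * (R + 1) := by
        intro i _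
        rw [abs_mul]
        have h1 : |v i| ≤ η := by rw [abs_of_pos (hv i).1]; exact (hv i).2.le
        exact mul_le_mul h1 (habs z hz i) (abs_nonneg _) hη.le
      refine (Finset.sum_le_card_nsmul _ _ _ this).trans ?_
      simp; ring_nf; exact le_rfl
    have hGy : 0 < κ * MvPolynomial.eval y G := by
      have h1 : h (x a) ≤ h y := hymax hxK
      have h2 := abs_le.1 (hlin _ hxK)
      have h3 := abs_le.1 (hlin _ hyK)
      have h4 : κ * MvPolynomial.eval (x a) G = |MvPolynomial.eval (x a) G| := by
        have hp : 0 < κ * MvPolynomial.eval (x a) G := by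
          rw [hκG]
          exact mul_pos (by linarith [hR a]) (Finset.prod_pos fun i _ => (hsg i).2.1)
        rw [← abs_of_pos hp, abs_mul, hκ1, one_mul]
      have h5 := hηa a
      simp only [h, mul_sub] at h1
      linarith [h2.1, h2.2, h3.1, h3.2]
    have hyR : ∑ i, y i ^ 2 < R := by
      refine lt_of_le_of_ne hyK.1 fun heq => ?_
      rw [hκG, heq] at hGy; simp at hGy
    have hyf : ∀ i, 0 < sg i * MvPolynomial.eval y (f i) := by
      intro i
      refine lt_of_le_of_ne (Set.mem_iInter.1 hyK.2 i) fun heq => ?_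
      rw [hκG, Finset.prod_eq_zero (Finset.mem_univ i) heq.symm] at hGy; simp at hGy
    refine ⟨y, fun i => ?_, fun s => ?_⟩
    · rw [(hsg i).2.2]
      have h1 := hyf i
      constructor
      · intro h; exact pos_of_mul_pos_right h1 h.le
      · intro h; exact pos_of_mul_pos_left h1 h.le
    · have hnhds : Kc ∈ nhds y := by
        refine Filter.inter_mem ?_ (Filter.iInter_mem.2 fun i => ?_)
        · exact Filter.mem_of_superset ((isOpen_lt (f := fun z : Fin T → ℝ => ∑ i, z i ^ 2) (g := fun _ => R) (by fun_prop) continuous_const).mem_nhds hyR)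
            (fun z (hz : ∑ i, z i ^ 2 < R) => hz.le)
        · exact Filter.mem_of_superset ((isOpen_lt continuous_const ((hcont _).const_mul _)).mem_nhds (hyf i))
            (fun z (hz : 0 < sg i * MvPolynomial.eval z (f i)) => hz.le)
      have hloc : IsLocalMax h y := hymax.isLocalMax hnhds
      let q : MvPolynomial (Fin T) ℝ :=
        MvPolynomial.C κ * (G - ∑ i, MvPolynomial.C (v i) * MvPolynomial.X i)
      have hq : ∀ z, MvPolynomial.eval z q = h z := by intro z; simp [q, h]
      have hd := mvpoly_hasDerivAt q s y
      have hline : IsLocalMax (fun t : ℝ => MvPolynomial.eval (y + t • Pi.single s (1 : ℝ)) q) 0 := by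
        simp only [hq]
        have ht : Filter.Tendsto (fun t : ℝ => y + t • (Pi.single s (1 : ℝ) : Fin T → ℝ)) (nhds 0) (nhds y) := by
          have := Continuous.tendsto (f := fun t : ℝ => y + t • (Pi.single s (1 : ℝ) : Fin T → ℝ)) (by fun_prop) 0
          simpa using this
        have := ht.eventually hloc
        filter_upwards [this] with t ht
        simpa using ht
      have h0 := hline.hasDerivAt_eq_zero hd
      have hκ0 : κ ≠ 0 := by intro h; rw [h] at hκ; simp at hκ
      have e : MvPolynomial.eval y (MvPolynomial.pderiv s q) =
          κ * (MvPolynomial.eval y (MvPolynomial.pderiv s G) - v s) := by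
        simp only [q, MvPolynomial.pderiv_mul, MvPolynomial.pderiv_C, map_sub, map_sum, map_mul,
          MvPolynomial.eval_C, MvPolynomial.pderiv_X, zero_mul, zero_add]
        congr 2
        rw [Finset.sum_eq_single s]
        · simp
        · intro b _ hb; simp [hb]
        · simp
      rw [e] at h0
      rcases mul_eq_zero.1 h0 with h | h
      · exact absurd h hκ0
      · linarith
  choose y hy1 hy2 using key
  refine ⟨y, fun a b hab => ?_, hy2⟩
  apply hx a b
  intro i
  rw [hy1 a i, hy1 b i, hab]

/-- Partition into sign classes. -/
lemma exists_sign_partition {T : ℕ} {ι : Type} [Fintype ι] (f : ι → MvPolynomial (Fin T) ℝ)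
    (D : ℕ) (hf : ∀ i, (f i).totalDegree ≤ D) (B : ℕ)
    (hB : (1 + T * (Fintype.card ι * D + 2)) ^ T ≤ B) :
    ∃ pat : (Fin T → ℝ) → Fin B, ∀ θ θ', pat θ = pat θ' →
      ∀ i, (0 ≤ MvPolynomial.eval θ (f i) ↔ 0 ≤ MvPolynomial.eval θ' (f i)) := by
  classical
  let sp : (Fin T → ℝ) → (ι → Bool) := fun θ i => decide (0 ≤ MvPolynomial.eval θ (f i))
  let Rg : Finset (ι → Bool) := Finset.univ.filter fun b => ∃ θ, sp θ = b
  have hcard : Rg.card ≤ B := by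
    refine le_trans ?_ hB
    have e := Rg.equivFin
    have hw : ∀ a : Fin Rg.card, ∃ θ, sp θ = (e.symm a : ι → Bool) := fun a =>
      (Finset.mem_filter.1 (e.symm a).2).2
    choose x hx using hw
    obtain ⟨ζ, hζ, hζa⟩ : ∃ ζ : ℝ, 0 < ζ ∧ ∀ a i, MvPolynomial.eval (x a) (f i) < 0 →
        MvPolynomial.eval (x a) (f i) < -ζ := by
      have hev : ∀ᶠ ζ : ℝ in nhdsWithin 0 (Set.Ioi 0), ∀ a i, MvPolynomial.eval (x a) (f i) < 0 →
        MvPolynomial.eval (x a) (f i) < -ζ := by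
        rw [Filter.eventually_all]; intro a
        rw [Filter.eventually_all]; intro i
        by_cases h : MvPolynomial.eval (x a) (f i) < 0
        · have hc : Filter.Tendsto (fun ζ : ℝ => -ζ) (nhdsWithin 0 (Set.Ioi 0)) (nhds (-0)) :=
            (Continuous.tendsto (by fun_prop) 0).mono_left nhdsWithin_le_nhds
          filter_upwards [hc.eventually (lt_mem_nhds (by simpa using h))] with z hz _
          exact hz
        · exact Filter.Eventually.of_forall fun _ h' => absurd h' h
      obtain ⟨η, h1, h2⟩ := (hev.and self_mem_nhdsWithin).exists
      exact ⟨η, h2, h1⟩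
    have hiff : ∀ a i, 0 < MvPolynomial.eval (x a) (f i + MvPolynomial.C ζ) ↔
        0 ≤ MvPolynomial.eval (x a) (f i) := by
      intro a i
      rw [map_add, MvPolynomial.eval_C]
      constructor
      · intro h; by_contra h'; push Not at h'; linarith [hζa a i h']
      · intro h; linarith
    refine card_strict_signs (fun i => f i + MvPolynomial.C ζ) D ?_ x ?_ ?_
    · intro i
      refine (MvPolynomial.totalDegree_add _ _).trans (max_le (hf i) (by simp))
    · intro a i h0
      rw [map_add, MvPolynomial.eval_C] at h0
      linarith [hζa a i (by linarith)]
    · intro a b hab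
      apply e.symm.injective
      apply Subtype.ext
      rw [← hx a, ← hx b]
      ext i
      have := hab i
      simp only [hiff] at this
      simp [sp, this]
  have hmem : ∀ θ, sp θ ∈ Rg := fun θ => Finset.mem_filter.2 ⟨Finset.mem_univ _, θ, rfl⟩
  refine ⟨fun θ => Fin.castLE hcard (Rg.equivFin ⟨sp θ, hmem θ⟩), fun θ θ' h i => ?_⟩
  have h1 : sp θ = sp θ' := by
    have := Rg.equivFin.injective (Fin.castLE_injective hcard h)
    exact congrArg Subtype.val this
  have h2 := congrFun h1 i
  simpa [sp] using h2


/-- Bound on the number of sign classes. -/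
def signBd (T m D : ℕ) : ℕ := (1 + T * (m * D + 2)) ^ T

lemma exists_sign_partition' {σ : Type} [Fintype σ] {ι : Type} [Fintype ι]
    (f : ι → MvPolynomial σ ℝ)
    (m D : ℕ) (hf : ∀ i, (f i).totalDegree ≤ D) (hm : Fintype.card ι ≤ m) :
    ∃ pat : (σ → ℝ) → Fin (signBd (Fintype.card σ) m D), ∀ θ θ', pat θ = pat θ' →
      ∀ i, (0 ≤ MvPolynomial.eval θ (f i) ↔ 0 ≤ MvPolynomial.eval θ' (f i)) := by
  classical
  let e := Fintype.equivFin σ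
  obtain ⟨pat, hpat⟩ := exists_sign_partition (fun i => MvPolynomial.rename e (f i)) D
    (fun i => (MvPolynomial.totalDegree_rename_le _ _).trans (hf i))
    (signBd (Fintype.card σ) m D) (by
      unfold signBd
      gcongr)
  refine ⟨fun θ => pat (θ ∘ e.symm), fun θ θ' h i => ?_⟩
  have h1 := hpat _ _ h i
  simp only [MvPolynomial.eval_rename] at h1
  have h2 : ∀ θ : σ → ℝ, (θ ∘ e.symm) ∘ e = θ := by intro θ; ext s; simp
  rw [h2, h2] at h1
  exact h1

/-- `h` is given, on each class of a partition with at most `N` classes, by polynomials of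
degree at most `D` in the parameters. -/
def PolyPiece {σ κ : Type} (N D : ℕ) (h : (σ → ℝ) → κ → ℝ) : Prop :=
  ∃ pat : (σ → ℝ) → Fin N, ∃ q : Fin N → κ → MvPolynomial σ ℝ,
    (∀ a k, (q a k).totalDegree ≤ D) ∧ ∀ θ k, h θ k = MvPolynomial.eval θ (q (pat θ) k)

lemma PolyPiece.signs {σ κ : Type} [Fintype σ] [Fintype κ] {N D : ℕ} {h : (σ → ℝ) → κ → ℝ}
    (hh : PolyPiece N D h) (m : ℕ) (hm : Fintype.card κ ≤ m) :
    ∃ pat : (σ → ℝ) → Fin (N * signBd (Fintype.card σ) m D),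
      ∀ θ θ', pat θ = pat θ' → ∀ k, (0 ≤ h θ k ↔ 0 ≤ h θ' k) := by
  obtain ⟨pat, q, hq, hh⟩ := hh
  have := fun a => exists_sign_partition' (q a) m D (hq a) hm
  choose P hP using this
  refine ⟨fun θ => finProdFinEquiv (pat θ, P (pat θ) θ), fun θ θ' he k => ?_⟩
  have h1 := finProdFinEquiv.injective he
  rw [Prod.mk.injEq] at h1
  obtain ⟨h1, h2⟩ := h1
  rw [hh, hh, h1]
  rw [h1] at h2
  exact hP _ _ _ h2 k

lemma PolyPiece.lrelu {σ κ : Type} [Fintype σ] [Fintype κ] {N D : ℕ} {h : (σ → ℝ) → κ → ℝ}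
    (hh : PolyPiece N D h) (ν : ℝ) (hν1 : ν < 1)
    (m : ℕ) (hm : Fintype.card κ ≤ m) :
    PolyPiece (N * signBd (Fintype.card σ) m D) D (fun θ k => lrelu ν (h θ k)) := by
  classical
  obtain ⟨pat, q, hq, hh⟩ := hh
  have := fun a => exists_sign_partition' (q a) m D (hq a) hm
  choose P hP using this
  let B := signBd (Fintype.card σ) m D
  let s : Fin N × Fin B → κ → Prop := fun ab k =>
    ∃ θ, pat θ = ab.1 ∧ P ab.1 θ = ab.2 ∧ 0 ≤ MvPolynomial.eval θ (q ab.1 k)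
  let q' : Fin N × Fin B → κ → MvPolynomial σ ℝ := fun ab k =>
    if s ab k then q ab.1 k else ν • q ab.1 k
  refine ⟨fun θ => finProdFinEquiv (pat θ, P (pat θ) θ), fun c => q' (finProdFinEquiv.symm c),
    ?_, ?_⟩
  · intro c k
    simp only [q']
    split_ifs
    · exact hq _ _
    · exact (MvPolynomial.totalDegree_smul_le _ _).trans (hq _ _)
  · intro θ k
    simp only [Equiv.symm_apply_apply, q', hh]
    split_ifs with hs
    · obtain ⟨θ', h1, h2, h3⟩ := hs
      have h4 := (hP _ _ _ h2 k).1 h3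
      simp only at h4
      rw [_root_.lrelu, max_eq_left]
      nlinarith
    · have h4 : MvPolynomial.eval θ (q (pat θ) k) < 0 := by
        by_contra hc
        push Not at hc
        exact hs ⟨θ, rfl, rfl, hc⟩
      rw [_root_.lrelu, max_eq_right, MvPolynomial.smul_eval]
      nlinarith

/-- An affine layer with parameters among the variables. -/
lemma PolyPiece.affine {σ κ κ' : Type} {r : ℕ} {N D : ℕ}
    {h : (σ → ℝ) → κ → ℝ} (hh : PolyPiece N D h) (g : κ' → Fin r → κ)
    (w : κ' → Fin r → σ) (b : κ' → σ) :
    PolyPiece N (D + 1) (fun θ k => (∑ j, θ (w k j) * h θ (g k j)) + θ (b k)) := by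
  obtain ⟨pat, q, hq, hh⟩ := hh
  refine ⟨pat, fun a k => (∑ j, MvPolynomial.X (w k j) * q a (g k j)) + MvPolynomial.X (b k), ?_, ?_⟩
  · intro a k
    refine (MvPolynomial.totalDegree_add _ _).trans (max_le ?_ ?_)
    · refine (MvPolynomial.totalDegree_finsetSum _ _).trans (Finset.sup_le fun j _ => ?_)
      refine (MvPolynomial.totalDegree_mul _ _).trans ?_
      rw [MvPolynomial.totalDegree_X]
      have := hq a (g k j)
      omega
    · rw [MvPolynomial.totalDegree_X]; omega
  · intro θ k
    simp [hh]

lemma PolyPiece.mono {σ κ : Type} {N N' D D' : ℕ} {h : (σ → ℝ) → κ → ℝ}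
    (hh : PolyPiece N D h) (hN : N ≤ N') (hD : D ≤ D') (hN0 : 0 < N) : PolyPiece N' D' h := by
  obtain ⟨pat, q, hq, hh⟩ := hh
  refine ⟨fun θ => Fin.castLE hN (pat θ), fun c => if hc : (c : ℕ) < N then q ⟨c, hc⟩ else q ⟨0, hN0⟩,
    fun a k => ?_, fun θ k => ?_⟩
  · dsimp only
    split_ifs <;> exact (hq _ _).trans hD
  · simp [hh]

lemma signBd_mono {T m m' D D' : ℕ} (hm : m ≤ m') (hD : D ≤ D') :
    signBd T m D ≤ signBd T m' D' := by
  unfold signBd; gcongr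

lemma signBd_pos {T m D : ℕ} : 0 < signBd T m D := by unfold signBd; positivity

/-- Hidden layers of the network determined by `θ`, after the inner layers in `ls`. -/
def hidL (ν : ℝ) (d r L : ℕ) (θ : ParamIdx d r L → ℝ) (x : Fin d → ℝ) (ls : List (Fin (L - 1))) :
    Fin r → ℝ :=
  ls.foldl
    (fun h l => fun i =>
      lrelu ν ((∑ j, θ (Sum.inr (Sum.inr (Sum.inl (l, i, j)))) * h j) +
        θ (Sum.inr (Sum.inr (Sum.inr (Sum.inl (l, i)))))))
    (fun i => lrelu ν ((∑ j, θ (Sum.inl (i, j)) * x j) + θ (Sum.inr (Sum.inl i))))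

lemma hidL_append (ν : ℝ) (d r L : ℕ) (θ : ParamIdx d r L → ℝ) (x : Fin d → ℝ)
    (ls : List (Fin (L - 1))) (l : Fin (L - 1)) :
    hidL ν d r L θ x (ls ++ [l]) = fun i =>
      lrelu ν ((∑ j, θ (Sum.inr (Sum.inr (Sum.inl (l, i, j)))) * hidL ν d r L θ x ls j) +
        θ (Sum.inr (Sum.inr (Sum.inr (Sum.inl (l, i)))))) := by
  simp [hidL, List.foldl_append]

lemma netOfParams_eq (ν : ℝ) (d r L : ℕ) (θ : ParamIdx d r L → ℝ) (x : Fin d → ℝ) :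
    netOfParams ν d r L θ x =
      (∑ i, θ (Sum.inr (Sum.inr (Sum.inr (Sum.inr (Sum.inl i))))) *
        hidL ν d r L θ x (List.finRange (L - 1)) i) +
      θ (Sum.inr (Sum.inr (Sum.inr (Sum.inr (Sum.inr ()))))) := rfl

lemma polyPiece_hidL (ν : ℝ) (hν1 : ν < 1) (d r L n : ℕ) (x : Fin n → Fin d → ℝ)
    (m D : ℕ) (hm : n * r ≤ m) (ls : List (Fin (L - 1))) (hD : ls.length + 1 ≤ D) :
    PolyPiece (σ := ParamIdx d r L) (κ := Fin n × Fin r)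
      (signBd (Fintype.card (ParamIdx d r L)) m D ^ (ls.length + 1)) (ls.length + 1)
      (fun θ k => hidL ν d r L θ (x k.1) ls k.2) := by
  set B := signBd (Fintype.card (ParamIdx d r L)) m D with hB
  induction ls using List.reverseRecOn with
  | nil =>
    have h0 : PolyPiece (σ := ParamIdx d r L) (κ := Fin n × Fin d) 1 0 (fun _ k => x k.1 k.2) :=
      ⟨fun _ => 0, fun _ k => MvPolynomial.C (x k.1 k.2), by simp, by simp⟩
    have h1 := h0.affine (κ' := Fin n × Fin r) (fun k j => (k.1, j)) (fun k j => Sum.inl (k.2, j))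
      (fun k => Sum.inr (Sum.inl k.2))
    have h2 := h1.lrelu ν hν1 m (by simpa using hm)
    exact h2.mono (by simpa [hB] using signBd_mono le_rfl (by simpa using hD)) (by simp)
      (Nat.mul_pos one_pos signBd_pos)
  | append_singleton ls l ih =>
    have hl : (ls ++ [l]).length = ls.length + 1 := by simp
    rw [hl] at hD ⊢
    have h0 := ih (by omega)
    have h1 := h0.affine (κ' := Fin n × Fin r) (fun k j => (k.1, j))
      (fun k j => Sum.inr (Sum.inr (Sum.inl (l, k.2, j))))
      (fun k => Sum.inr (Sum.inr (Sum.inr (Sum.inl (l, k.2)))))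
    have h2 := h1.lrelu ν hν1 m (by simpa using hm)
    simp only [hidL_append]
    refine h2.mono ?_ le_rfl (Nat.mul_pos (pow_pos signBd_pos _) signBd_pos)
    rw [pow_succ B (ls.length + 1)]
    exact Nat.mul_le_mul_left _ (signBd_mono le_rfl (by omega))

/-- The number of threshold patterns of the network at `n` points and `k` thresholds. -/
lemma net_patterns (ν : ℝ) (hν1 : ν < 1) (d r L n k : ℕ) (x : Fin n → Fin d → ℝ)
    (t : Fin k → ℝ) :
    ∃ pat : (ParamIdx d r L → ℝ) →
        Fin (signBd (Fintype.card (ParamIdx d r L)) (n * (r + k)) (L + 2) ^ (L + 2)),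
      ∀ θ θ', pat θ = pat θ' → ∀ i j,
        (t j ≤ netOfParams ν d r L θ (x i) ↔ t j ≤ netOfParams ν d r L θ' (x i)) := by
  set m := n * (r + k) with hmdef
  have hm : n * r ≤ m := by rw [hmdef]; gcongr; omega
  have hmk : n * k ≤ m := by rw [hmdef]; gcongr; omega
  set B := signBd (Fintype.card (ParamIdx d r L)) m (L + 2) with hB
  have h0 := polyPiece_hidL ν hν1 d r L n x m (L + 2) hm (List.finRange (L - 1))
    (by simp only [List.length_finRange]; omega)
  rw [List.length_finRange] at h0
  have h1 := h0.affine (κ' := Fin n × Fin k) (fun k j => (k.1, j))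
      (fun k j => Sum.inr (Sum.inr (Sum.inr (Sum.inr (Sum.inl j)))))
      (fun k => Sum.inr (Sum.inr (Sum.inr (Sum.inr (Sum.inr ())))))
  have h2 : PolyPiece (σ := ParamIdx d r L) (κ := Fin n × Fin k)
      (signBd (Fintype.card (ParamIdx d r L)) m (L + 2) ^ (L - 1 + 1)) (L - 1 + 1 + 1)
      (fun θ k => netOfParams ν d r L θ (x k.1) - t k.2) := by
    obtain ⟨pat, q, hq, hh⟩ := h1
    refine ⟨pat, fun a k => q a k - MvPolynomial.C (t k.2), fun a k => ?_, fun θ k => ?_⟩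
    · refine (MvPolynomial.totalDegree_sub _ _).trans (max_le (hq a k) (by simp))
    · simp only [map_sub, ← hh, netOfParams_eq, MvPolynomial.eval_C]
  obtain ⟨pat, hpat⟩ := h2.signs m (by simpa using hmk)
  have hle : B ^ (L - 1 + 1) * signBd (Fintype.card (ParamIdx d r L)) m (L - 1 + 1 + 1) ≤
      B ^ (L + 2) := by
    calc _ ≤ B ^ (L - 1 + 1) * B := Nat.mul_le_mul_left _ (signBd_mono le_rfl (by omega))
      _ = B ^ (L - 1 + 1 + 1) := (pow_succ _ _).symm
      _ ≤ _ := Nat.pow_le_pow_right signBd_pos (by omega)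
  refine ⟨fun θ => Fin.castLE hle (pat θ), fun θ θ' h i j => ?_⟩
  have := hpat θ θ' (Fin.castLE_injective hle h) (i, j)
  simpa only [sub_nonneg] using this


lemma sigm_pos (z : ℝ) : 0 < sigmoid z := by unfold sigmoid; positivity

lemma sigm_lt_one (z : ℝ) : sigmoid z < 1 := by
  unfold sigmoid
  exact inv_lt_one_of_one_lt₀ (by linarith [Real.exp_pos (-z)])

lemma sigm_mono {a b : ℝ} (h : a ≤ b) : sigmoid a ≤ sigmoid b := by
  unfold sigmoid
  gcongr

lemma sigm_neg (a : ℝ) : 1 - sigmoid a = sigmoid (-a) := by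
  unfold sigmoid
  have h1 := Real.exp_pos a
  rw [Real.exp_neg, neg_neg]
  field_simp
  ring

lemma sigm_cont : Continuous sigmoid := by
  unfold sigmoid
  refine Continuous.inv₀ (by fun_prop) (fun z => ?_)
  positivity

lemma sigm_lip_aux {a b : ℝ} (h : a ≤ b) : sigmoid b - sigmoid a ≤ b - a := by
  unfold sigmoid
  have h1 : Real.exp (-b) = Real.exp (-a) * Real.exp (a - b) := by rw [← Real.exp_add]; ring_nf
  have h2 := Real.add_one_le_exp (a - b)
  have h3 : Real.exp (a - b) ≤ 1 := by rw [Real.exp_le_one_iff]; linarith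
  have hA := Real.exp_pos (-a)
  have hB := Real.exp_pos (a - b)
  rw [h1]
  set A := Real.exp (-a)
  set e := Real.exp (a - b)
  have h4 : (1 + A * e)⁻¹ - (1 + A)⁻¹ = (A * (1 - e)) / ((1 + A * e) * (1 + A)) := by
    field_simp; ring
  rw [h4, div_le_iff₀ (by positivity)]
  have h5 : A * (1 - e) ≤ A * (b - a) := mul_le_mul_of_nonneg_left (by linarith) hA.le
  have h6 : A ≤ (1 + A * e) * (1 + A) := by nlinarith [mul_pos hA hB, mul_pos (mul_pos hA hB) hA]
  nlinarith [sub_nonneg.2 h]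

lemma sigm_lip (a b : ℝ) : |sigmoid a - sigmoid b| ≤ |a - b| := by
  rcases le_total a b with h | h
  · rw [abs_sub_comm, abs_sub_comm a, abs_of_nonneg (sub_nonneg.2 (sigm_mono h)),
      abs_of_nonneg (sub_nonneg.2 h)]
    exact sigm_lip_aux h
  · rw [abs_of_nonneg (sub_nonneg.2 (sigm_mono h)), abs_of_nonneg (sub_nonneg.2 h)]
    exact sigm_lip_aux h

lemma trunc_lip (F a b : ℝ) : |trunc F a - trunc F b| ≤ |a - b| := by
  unfold trunc
  refine (abs_min_sub_min_le_max _ _ _ _).trans (max_le ?_ (by simp))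
  refine (abs_max_sub_max_le_max _ _ _ _).trans (max_le le_rfl (by simp))

lemma trunc_le (F a : ℝ) : trunc F a ≤ F := min_le_right _ _

lemma neg_le_trunc {F : ℝ} (hF : 0 ≤ F) (a : ℝ) : -F ≤ trunc F a :=
  le_min (le_max_right _ _) (by linarith)

lemma trunc_of_abs_le {F a : ℝ} (h : |a| ≤ F) : trunc F a = a := by
  have := abs_le.1 h
  unfold trunc
  rw [max_eq_left this.1, min_eq_left this.2]

lemma trunc_cont (F : ℝ) : Continuous (trunc F) := by
  unfold trunc; fun_prop

lemma lrelu_cont (ν : ℝ) : Continuous (lrelu ν) := by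
  unfold lrelu; fun_prop

lemma hidL_cont (ν : ℝ) (d r L : ℕ) (ls : List (Fin (L - 1))) (i : Fin r) :
    Continuous (fun z : (ParamIdx d r L → ℝ) × (Fin d → ℝ) => hidL ν d r L z.1 z.2 ls i) := by
  induction ls using List.reverseRecOn generalizing i with
  | nil =>
    simp only [hidL, List.foldl_nil]
    exact (lrelu_cont ν).comp (by fun_prop)
  | append_singleton ls l ih =>
    simp only [hidL_append]
    exact (lrelu_cont ν).comp (by fun_prop)

lemma net_cont (ν : ℝ) (d r L : ℕ) :
    Continuous (fun z : (ParamIdx d r L → ℝ) × (Fin d → ℝ) => netOfParams ν d r L z.1 z.2) := by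
  have := hidL_cont ν d r L (List.finRange (L - 1))
  simp only [netOfParams_eq]
  fun_prop

/-- The success probability of the model. -/
def pfun (ν F : ℝ) (d r L : ℕ) (θ : ParamIdx d r L → ℝ) (x : Fin d → ℝ) : ℝ :=
  sigmoid (trunc F (netOfParams ν d r L θ x))

lemma pfun_cont (ν F : ℝ) (d r L : ℕ) :
    Continuous (fun z : (ParamIdx d r L → ℝ) × (Fin d → ℝ) => pfun ν F d r L z.1 z.2) :=
  sigm_cont.comp ((trunc_cont F).comp (net_cont ν d r L))

/-- Existence of design points distinguishing finitely many separated functions. -/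
lemma exists_points {X Θ : Type} [MeasurableSpace X] (PX : Measure X) [IsProbabilityMeasure PX]
    (p : Θ → X → ℝ) (hpm : ∀ θ, Measurable (p θ)) (hp0 : ∀ θ x, 0 < p θ x) (hp1 : ∀ θ x, p θ x < 1)
    (S : Finset Θ) (h : ℝ) (hh : 0 < h) (n : ℕ)
    (hS : ∀ θ ∈ S, ∀ θ' ∈ S, θ ≠ θ' → 4 * h ^ 2 < ∫ x, (p θ x - p θ' x) ^ 2 ∂PX)
    (hc : (S.card : ℝ) ^ 2 * Real.exp (-(3 * h ^ 2 * n)) < 1) :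
    ∃ x : Fin n → X, ∀ θ ∈ S, ∀ θ' ∈ S, θ ≠ θ' → ∃ i, h < |p θ (x i) - p θ' (x i)| := by
  classical
  let bad : Θ × Θ → Set (Fin n → X) := fun q =>
    Set.univ.pi fun _ => {x | |p q.1 x - p q.2 x| ≤ h}
  have hbad : ∀ q ∈ S.offDiag, (Measure.pi fun _ : Fin n => PX) (bad q) ≤
      ENNReal.ofReal (Real.exp (-(3 * h ^ 2 * n))) := by
    intro q hq
    obtain ⟨h1, h2, h3⟩ := Finset.mem_offDiag.1 hq
    rw [Measure.pi_pi]
    simp only [Finset.prod_const, Finset.card_univ, Fintype.card_fin]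
    have hm : MeasurableSet {x | |p q.1 x - p q.2 x| ≤ h} :=
      measurableSet_le (((hpm _).sub (hpm _)).abs) measurable_const
    have hb : ∀ x, (p q.1 x - p q.2 x) ^ 2 ≤ 1 := by
      intro x
      have := hp0 q.1 x; have := hp0 q.2 x; have := hp1 q.1 x; have := hp1 q.2 x
      nlinarith
    have hinteg : ∫ x, (p q.1 x - p q.2 x) ^ 2 ∂PX ≤
        h ^ 2 + (1 - PX.real {x | |p q.1 x - p q.2 x| ≤ h}) := by
      have e : (1 - PX.real {x | |p q.1 x - p q.2 x| ≤ h}) =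
          ∫ x, ({x | |p q.1 x - p q.2 x| ≤ h}ᶜ).indicator 1 x ∂PX := by
        rw [integral_indicator_one hm.compl, probReal_compl_eq_one_sub hm]
      rw [e]
      have e2 : h ^ 2 + ∫ x, ({x | |p q.1 x - p q.2 x| ≤ h}ᶜ).indicator (1 : X → ℝ) x ∂PX =
          ∫ x, (h ^ 2 + ({x | |p q.1 x - p q.2 x| ≤ h}ᶜ).indicator (1 : X → ℝ) x) ∂PX := by
        have hi : Integrable (({x | |p q.1 x - p q.2 x| ≤ h}ᶜ).indicator (1 : X → ℝ)) PX :=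
          (integrable_const (1 : ℝ)).indicator hm.compl
        rw [integral_add (integrable_const _) hi]
        simp
      rw [e2]
      refine integral_mono_of_nonneg (Filter.Eventually.of_forall fun x => sq_nonneg _)
        ((integrable_const _).add ((integrable_const (1 : ℝ)).indicator hm.compl))
        (Filter.Eventually.of_forall fun x => ?_)
      by_cases hx : |p q.1 x - p q.2 x| ≤ h
      · have h1 : (p q.1 x - p q.2 x) ^ 2 ≤ h ^ 2 := sq_le_sq' (by linarith [(abs_le.1 hx).1]) (abs_le.1 hx).2
        simpa [hx] using h1
      · have h1 := hb x
        have h2 : 0 ≤ h ^ 2 := sq_nonneg _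
        simp only [Set.indicator, Set.mem_compl_iff, Set.mem_ofPred_eq, hx, not_false_eq_true, if_true,
          Pi.one_apply]
        linarith
    have hreal : PX.real {x | |p q.1 x - p q.2 x| ≤ h} ≤ Real.exp (-(3 * h ^ 2)) := by
      have h4 := hS _ h1 _ h2 h3
      have h5 := Real.add_one_le_exp (-(3 * h ^ 2))
      linarith
    have : PX {x | |p q.1 x - p q.2 x| ≤ h} ≤ ENNReal.ofReal (Real.exp (-(3 * h ^ 2))) := by
      rw [← ofReal_measureReal]
      exact ENNReal.ofReal_le_ofReal hreal
    calc _ ≤ (ENNReal.ofReal (Real.exp (-(3 * h ^ 2)))) ^ n := pow_le_pow_left' this n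
      _ = _ := by
        rw [← ENNReal.ofReal_pow (Real.exp_pos _).le, ← Real.exp_nat_mul]
        congr 2; ring
  have hU : (Measure.pi fun _ : Fin n => PX) (⋃ q ∈ S.offDiag, bad q) < 1 := by
    refine (measure_biUnion_finset_le _ _).trans_lt ?_
    refine (Finset.sum_le_card_nsmul _ _ _ hbad).trans_lt ?_
    rw [nsmul_eq_mul, ← ENNReal.ofReal_natCast, ← ENNReal.ofReal_mul (by positivity),
      ENNReal.ofReal_lt_one]
    refine lt_of_le_of_lt ?_ hc
    gcongr
    rw [Finset.offDiag_card]
    have : S.card * S.card - S.card ≤ S.card * S.card := Nat.sub_le _ _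
    calc ((S.card * S.card - S.card : ℕ) : ℝ) ≤ ((S.card * S.card : ℕ) : ℝ) := by exact_mod_cast this
      _ = _ := by push_cast; ring
  have hne : ∃ x, x ∉ ⋃ q ∈ S.offDiag, bad q := by
    by_contra hcon
    push Not at hcon
    rw [Set.eq_univ_of_forall hcon, measure_univ] at hU
    exact lt_irrefl _ hU
  obtain ⟨x, hx⟩ := hne
  refine ⟨x, fun θ hθ θ' hθ' hne => ?_⟩
  by_contra hcon
  push Not at hcon
  apply hx
  simp only [Set.mem_iUnion]
  exact ⟨(θ, θ'), Finset.mem_offDiag.2 ⟨hθ, hθ', hne⟩, fun i _ => hcon i⟩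

lemma trunc_threshold {F f g t : ℝ} (h1 : -F < t) (h2 : t ≤ F)
    (h3 : trunc F f < t) (h4 : t ≤ trunc F g) : f < t ∧ t ≤ g := by
  unfold trunc at h3 h4
  constructor
  · by_contra hc
    push Not at hc
    exact absurd h3 (not_lt.2 (le_min (le_max_of_le_left hc) h2))
  · have := le_min_iff.1 h4
    rcases le_max_iff.1 this.1 with h | h
    · exact h
    · linarith

lemma exists_threshold {F h f g : ℝ} (hF : 0 < F) (hh : 0 < h)
    (hfg : h < trunc F g - trunc F f) :
    ∃ j : Fin (⌊2 * F / h⌋₊ + 1), f < -F + (j : ℕ) * h ∧ -F + (j : ℕ) * h ≤ g := by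
  have hg := trunc_le F g
  have hg' := neg_le_trunc hF.le g
  have hf := neg_le_trunc hF.le f
  have hj : ⌊(trunc F g + F) / h⌋₊ ≤ ⌊2 * F / h⌋₊ := by
    apply Nat.floor_le_floor
    gcongr
    linarith
  have hpos : 0 ≤ (trunc F g + F) / h := div_nonneg (by linarith) hh.le
  have h1 := Nat.floor_le hpos
  have h2 := Nat.lt_floor_add_one ((trunc F g + F) / h)
  rw [le_div_iff₀ hh] at h1
  rw [div_lt_iff₀ hh] at h2
  refine ⟨⟨⌊(trunc F g + F) / h⌋₊, by omega⟩, ?_⟩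
  simp only
  apply trunc_threshold (F := F) <;> linarith

/-- The entropy bound. -/
lemma card_separated_le (ν F : ℝ) (hν1 : ν < 1) (hF : 0 < F) (d r L n : ℕ)
    (PX : Measure (Fin d → ℝ)) [IsProbabilityMeasure PX] (τ : ℝ) (hτ : 0 < τ)
    (hnτ : 128 ≤ n * τ ^ 2)
    (hNP : ((signBd (Fintype.card (ParamIdx d r L)) (n * (r + (⌊2 * F / (τ / 8)⌋₊ + 1))) (L + 2)
      ^ (L + 2) : ℕ) : ℝ) ≤ Real.exp (n * τ ^ 2 / 64))
    (S : Finset (ParamIdx d r L → ℝ))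
    (hS : ∀ θ ∈ S, ∀ θ' ∈ S, θ ≠ θ' →
      τ / 4 < l2dist d PX (pfun ν F d r L θ) (pfun ν F d r L θ')) :
    (S.card : ℝ) ≤ Real.exp (n * τ ^ 2 / 64) := by
  classical
  set V := n * τ ^ 2 / 64 with hV
  have hV2 : 2 ≤ V := by rw [hV]; linarith
  by_contra hcon
  push Not at hcon
  have hfl : ⌊Real.exp V⌋₊ + 1 ≤ S.card := by
    have := (Nat.floor_lt (Real.exp_pos V).le).2 hcon
    omega
  obtain ⟨S', hS'sub, hS'card⟩ := Finset.exists_subset_card_eq hfl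
  have hup : (S'.card : ℝ) ≤ 2 * Real.exp V := by
    rw [hS'card]
    push_cast
    have := Nat.floor_le (Real.exp_pos V).le
    have : 1 ≤ Real.exp V := Real.one_le_exp (by linarith)
    linarith
  have hlow : Real.exp V < S'.card := by
    rw [hS'card]; push_cast; exact Nat.lt_floor_add_one _
  obtain ⟨x, hx⟩ := exists_points PX (pfun ν F d r L)
    (fun θ => ((pfun_cont ν F d r L).comp (Continuous.prodMk_right θ)).measurable)
    (fun _ _ => sigm_pos _) (fun _ _ => sigm_lt_one _) S' (τ / 8) (by positivity) n
    (by
      intro θ h1 θ' h2 h3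
      have h4 := hS θ (hS'sub h1) θ' (hS'sub h2) h3
      unfold l2dist at h4
      rw [Real.lt_sqrt (by positivity)] at h4
      refine lt_of_eq_of_lt ?_ h4
      ring)
    (by
      have e : -(3 * (τ / 8) ^ 2 * n) = -V + -V + -V := by rw [hV]; ring
      rw [e, Real.exp_add, Real.exp_add]
      have h1 : Real.exp V * Real.exp (-V) = 1 := by rw [← Real.exp_add]; simp
      have h2 : (S'.card : ℝ) * Real.exp (-V) ≤ 2 := by
        calc _ ≤ 2 * Real.exp V * Real.exp (-V) := by gcongr
          _ = 2 := by rw [mul_assoc, h1, mul_one]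
      have h3 : 4 * Real.exp (-V) < 1 := by
        have h5 : 2 < Real.exp 1 := by linarith [Real.exp_one_gt_d9]
        have h6 : Real.exp 2 ≤ Real.exp V := Real.exp_le_exp.2 hV2
        have h7 : Real.exp 2 = Real.exp 1 * Real.exp 1 := by rw [← Real.exp_add]; norm_num
        have h8 : 4 < Real.exp V := by nlinarith
        have := Real.exp_pos (-V)
        nlinarith
      have h4 : 0 ≤ (S'.card : ℝ) * Real.exp (-V) := by positivity
      have h9 := Real.exp_pos (-V)
      calc (S'.card : ℝ) ^ 2 * (Real.exp (-V) * Real.exp (-V) * Real.exp (-V))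
          = ((S'.card : ℝ) * Real.exp (-V)) ^ 2 * Real.exp (-V) := by ring
        _ ≤ 2 ^ 2 * Real.exp (-V) := by gcongr
        _ < 1 := by linarith)
  obtain ⟨pat, hpat⟩ := net_patterns ν hν1 d r L n (⌊2 * F / (τ / 8)⌋₊ + 1) x
    (fun j => -F + (j : ℕ) * (τ / 8))
  have hinj : Set.InjOn pat S' := by
    intro θ h1 θ' h2 h3
    by_contra hne
    obtain ⟨i, hi⟩ := hx θ h1 θ' h2 hne
    have h4 : τ / 8 < |trunc F (netOfParams ν d r L θ (x i)) -
        trunc F (netOfParams ν d r L θ' (x i))| := lt_of_lt_of_le hi (sigm_lip _ _)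
    rcases lt_abs.1 h4 with h | h
    · obtain ⟨j, hj1, hj2⟩ := exists_threshold hF (by positivity) h
      have := hpat θ θ' h3 i j
      exact absurd (this.1 hj2) (not_le.2 hj1)
    · obtain ⟨j, hj1, hj2⟩ := exists_threshold hF (h := τ / 8) (by positivity)
        (by linarith : τ / 8 < trunc F (netOfParams ν d r L θ' (x i)) -
          trunc F (netOfParams ν d r L θ (x i)))
      have := hpat θ θ' h3 i j
      exact absurd (this.2 hj2) (not_le.2 hj1)
  have hcard := Finset.card_le_card_of_injOn pat (t := Finset.univ) (fun _ _ => Finset.mem_univ _) hinj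
  rw [Finset.card_univ, Fintype.card_fin] at hcard
  have : (S'.card : ℝ) ≤ Real.exp V := le_trans (by exact_mod_cast hcard) hNP
  linarith

/-- A finite net. -/
lemma exists_net (ν F : ℝ) (hν1 : ν < 1) (hF : 0 < F) (d r L n : ℕ)
    (PX : Measure (Fin d → ℝ)) [IsProbabilityMeasure PX] (τ : ℝ) (hτ : 0 < τ)
    (hnτ : 128 ≤ n * τ ^ 2)
    (hNP : ((signBd (Fintype.card (ParamIdx d r L)) (n * (r + (⌊2 * F / (τ / 8)⌋₊ + 1))) (L + 2)
      ^ (L + 2) : ℕ) : ℝ) ≤ Real.exp (n * τ ^ 2 / 64))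
    (A : Set (ParamIdx d r L → ℝ)) :
    ∃ S : Finset (ParamIdx d r L → ℝ), (∀ θ ∈ S, θ ∈ A) ∧
      (S.card : ℝ) ≤ Real.exp (n * τ ^ 2 / 64) ∧
      ∀ θ ∈ A, ∃ θ' ∈ S, l2dist d PX (pfun ν F d r L θ) (pfun ν F d r L θ') ≤ τ / 4 := by
  classical
  let good : Finset (ParamIdx d r L → ℝ) → Prop := fun S => (∀ θ ∈ S, θ ∈ A) ∧
    ∀ θ ∈ S, ∀ θ' ∈ S, θ ≠ θ' →
      τ / 4 < l2dist d PX (pfun ν F d r L θ) (pfun ν F d r L θ')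
  have hbd : ∀ S, good S → S.card ≤ ⌊Real.exp (n * τ ^ 2 / 64)⌋₊ := fun S hS =>
    Nat.le_floor (card_separated_le ν F hν1 hF d r L n PX τ hτ hnτ hNP S hS.2)
  let P : ℕ → Prop := fun k => ∃ S, good S ∧ S.card = k
  have hP0 : P 0 := ⟨∅, ⟨by simp, by simp⟩, rfl⟩
  obtain ⟨S, hS, hSc⟩ := Nat.findGreatest_spec (P := P) (n := ⌊Real.exp (n * τ ^ 2 / 64)⌋₊)
    (Nat.zero_le _) hP0
  refine ⟨S, hS.1, card_separated_le ν F hν1 hF d r L n PX τ hτ hnτ hNP S hS.2, ?_⟩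
  intro θ hθ
  by_contra hcon
  push Not at hcon
  have hsymm : ∀ a b, l2dist d PX a b = l2dist d PX b a := by
    intro a b; unfold l2dist; congr 1; congr 1; ext x; ring
  have hnot : θ ∉ S := by
    intro hmem
    have := hcon θ hmem
    simp [l2dist] at this
    linarith
  have hgood : good (insert θ S) := by
    refine ⟨?_, ?_⟩
    · intro t ht
      rcases Finset.mem_insert.1 ht with rfl | h
      · exact hθ
      · exact hS.1 t h
    · intro t ht t' ht' hne
      rcases Finset.mem_insert.1 ht with rfl | h
      · rcases Finset.mem_insert.1 ht' with rfl | h'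
        · exact absurd rfl hne
        · exact hcon _ h'
      · rcases Finset.mem_insert.1 ht' with rfl | h'
        · rw [hsymm]; exact hcon _ h
        · exact hS.2 t h t' h' hne
  have h1 : P (S.card + 1) := ⟨insert θ S, hgood, Finset.card_insert_of_notMem hnot⟩
  have h2 := hbd _ hgood
  rw [Finset.card_insert_of_notMem hnot] at h2
  have h3 := Nat.le_findGreatest h2 h1
  omega


/-- Bernoulli likelihood of one observation. -/
def llk (q y : ℝ) : ℝ := q ^ y * (1 - q) ^ (1 - y)

lemma llk_pos {q : ℝ} (h0 : 0 < q) (h1 : q < 1) (y : ℝ) : 0 < llk q y :=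
  mul_pos (Real.rpow_pos_of_pos h0 _) (Real.rpow_pos_of_pos (by linarith) _)

lemma llk_one (q : ℝ) : llk q 1 = q := by simp [llk]
lemma llk_zero (q : ℝ) : llk q 0 = 1 - q := by simp [llk]

/-- Joint law with success probability function `p0`. -/
def blaw {X : Type} [MeasurableSpace X] (PX : Measure X) (p0 : X → ℝ) : Measure (X × ℝ) :=
  PX.bind fun x => (bern (p0 x)).map fun y => (x, y)

lemma bern_map {X : Type} [MeasurableSpace X] (p : ℝ) (x : X) :
    (bern p).map (fun y => (x, y)) =
      ENNReal.ofReal p • Measure.dirac (x, (1:ℝ)) + ENNReal.ofReal (1 - p) • Measure.dirac (x, (0:ℝ)) := by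
  have hm : Measurable (fun y : ℝ => (x, y)) := measurable_prodMk_left
  unfold bern
  rw [Measure.map_add _ _ hm, Measure.map_smul, Measure.map_smul, Measure.map_dirac' hm,
    Measure.map_dirac' hm]

lemma lintegral_blaw {X : Type} [MeasurableSpace X] (PX : Measure X) (p0 : X → ℝ)
    (hp : Measurable p0) (g : X × ℝ → ℝ≥0∞) (hg : Measurable g) :
    ∫⁻ z, g z ∂(blaw PX p0) =
      ∫⁻ x, (ENNReal.ofReal (p0 x) * g (x, 1) + ENNReal.ofReal (1 - p0 x) * g (x, 0)) ∂PX := by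
  unfold blaw
  have hk : Measurable (fun x => (bern (p0 x)).map fun y => (x, y)) := by
    refine Measure.measurable_of_measurable_coe _ (fun s hs => ?_)
    simp only [bern_map, Measure.add_apply, Measure.smul_apply, smul_eq_mul,
      Measure.dirac_apply' _ hs]
    have h1 : Measurable (fun x : X => s.indicator (1 : X × ℝ → ℝ≥0∞) (x, (1:ℝ))) :=
      (measurable_one.indicator hs).comp (by fun_prop)
    have h0 : Measurable (fun x : X => s.indicator (1 : X × ℝ → ℝ≥0∞) (x, (0:ℝ))) :=
      (measurable_one.indicator hs).comp (by fun_prop)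
    fun_prop
  rw [Measure.lintegral_bind hk.aemeasurable hg.aemeasurable]
  refine lintegral_congr fun x => ?_
  rw [bern_map, lintegral_add_measure, lintegral_smul_measure, lintegral_smul_measure,
    lintegral_dirac' _ hg, lintegral_dirac' _ hg]
  rfl

lemma lintegral_pi_prod {Z : Type} [MeasurableSpace Z] (μ : Measure Z) [IsProbabilityMeasure μ]
    (n : ℕ) (g : Z → ℝ≥0∞) (hg : Measurable g) :
    ∫⁻ D, ∏ i, g (D i) ∂(Measure.pi fun _ : Fin n => μ) = (∫⁻ z, g z ∂μ) ^ n := by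
  have hind : iIndepFun (fun (i : Fin n) (D : Fin n → Z) => g (D i)) (Measure.pi fun _ : Fin n => μ) :=
    iIndepFun_pi (X := fun _ => g) (fun i => hg.aemeasurable)
  have := lintegral_prod_eq_prod_lintegral_of_indepFun Finset.univ
    (fun (i : Fin n) (D : Fin n → Z) => g (D i)) hind (fun i => hg.comp (measurable_pi_apply i))
  rw [this]
  have h2 : ∀ i : Fin n, ∫⁻ D : Fin n → Z, g (D i) ∂(Measure.pi fun _ : Fin n => μ) = ∫⁻ z, g z ∂μ := by
    intro i
    exact (measurePreserving_eval (fun _ : Fin n => μ) i).lintegral_comp hg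
  simp [h2]

lemma exp_le_quad {w : ℝ} (h : |w| ≤ 1) : Real.exp w ≤ 1 + w + w ^ 2 := by
  have := Real.abs_exp_sub_one_sub_id_le h
  have := (abs_le.1 this).2
  linarith

section
variable {X : Type} [MeasurableSpace X] (PX : Measure X)
  (p0 : X → ℝ)

lemma blaw_real_le [IsProbabilityMeasure (blaw PX p0)] (hp0 : Measurable p0)
    (h0 : ∀ x, 0 < p0 x) (h1 : ∀ x, p0 x < 1)
    (g : X × ℝ → ℝ) (hg : Measurable g) (hg0 : ∀ z, 0 ≤ g z)
    (b : X → ℝ) (hbi : Integrable b PX)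
    (hle : ∀ᵐ x ∂PX, p0 x * g (x, 1) + (1 - p0 x) * g (x, 0) ≤ b x) (c : ℝ) (hbc : ∫ x, b x ∂PX ≤ c)
    (n : ℕ) :
    ∫⁻ D, ∏ i, ENNReal.ofReal (g (D i)) ∂(Measure.pi fun _ : Fin n => blaw PX p0) ≤
      ENNReal.ofReal (c ^ n) := by
  rw [lintegral_pi_prod _ n (fun z => ENNReal.ofReal (g z)) hg.ennreal_ofReal]
  have hb0 : 0 ≤ᵐ[PX] b := by
    filter_upwards [hle] with x hx
    refine le_trans ?_ hx
    have := h0 x; have := h1 x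
    have := hg0 (x,1); have := hg0 (x,0)
    have : 0 ≤ 1 - p0 x := by linarith
    positivity
  have hc : 0 ≤ c := (integral_nonneg_of_ae hb0).trans hbc
  rw [ENNReal.ofReal_pow hc]
  refine pow_le_pow_left₀ (by positivity) ?_ n
  rw [lintegral_blaw PX p0 hp0 _ hg.ennreal_ofReal]
  calc _ ≤ ∫⁻ x, ENNReal.ofReal (b x) ∂PX := by
        refine lintegral_mono_ae ?_
        filter_upwards [hle] with x hx
        have := h0 x; have := h1 x
        have := hg0 (x,1); have := hg0 (x,0)
        have : 0 ≤ 1 - p0 x := by linarith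
        rw [← ENNReal.ofReal_mul (by positivity), ← ENNReal.ofReal_mul (by positivity),
          ← ENNReal.ofReal_add (by positivity) (by positivity)]
        exact ENNReal.ofReal_le_ofReal hx
    _ = ENNReal.ofReal (∫ x, b x ∂PX) := (ofReal_integral_eq_lintegral_ofReal hbi hb0).symm
    _ ≤ _ := ENNReal.ofReal_le_ofReal hbc

variable [IsProbabilityMeasure PX]

lemma pow_le_exp {x : ℝ} (hx : 0 ≤ 1 + x) (n : ℕ) : (1 + x) ^ n ≤ Real.exp (n * x) := by
  rw [Real.exp_nat_mul]
  exact pow_le_pow_left₀ hx (by linarith [Real.add_one_le_exp x]) n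

lemma integrable_of_bdd {u : X → ℝ} (hu : Measurable u) (C : ℝ) (hb : ∀ x, |u x| ≤ C) :
    Integrable u PX :=
  Integrable.of_bound hu.aestronglyMeasurable C (Filter.Eventually.of_forall hb)

/-- Type I error bound. -/
lemma type_one [IsProbabilityMeasure (blaw PX p0)] (hp0 : Measurable p0)
    (h0 : ∀ x, 0 < p0 x) (h1 : ∀ x, p0 x < 1) (u : X → ℝ) (hu : Measurable u)
    (hu1 : ∀ x, |u x| ≤ 1) (n : ℕ) :
    (Measure.pi fun _ : Fin n => blaw PX p0)
      {D | n * (∫ x, u x ^ 2 ∂PX) / 2 < ∑ i, ((D i).2 - p0 (D i).1) * u (D i).1} ≤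
      ENNReal.ofReal (Real.exp (-(n * (∫ x, u x ^ 2 ∂PX) / 16))) := by
  set s := ∫ x, u x ^ 2 ∂PX with hs
  have hs0 : 0 ≤ s := integral_nonneg fun x => sq_nonneg _
  have hu2 : Integrable (fun x => u x ^ 2) PX :=
    integrable_of_bdd PX (hu.pow_const 2) 1 (fun x => by
      rw [abs_pow]; exact pow_le_one₀ (abs_nonneg _) (hu1 x))
  have hgm : Measurable fun z : X × ℝ => Real.exp (((z.2 - p0 z.1) * u z.1) / 4) := by fun_prop
  have hkey := blaw_real_le PX p0 hp0 h0 h1 (fun z => Real.exp (((z.2 - p0 z.1) * u z.1) / 4))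
    hgm (fun z => (Real.exp_pos _).le) (fun x => 1 + u x ^ 2 / 16)
    ((integrable_const 1).add (hu2.div_const 16)) (Eventually.of_forall fun x => by
      have a0 := h0 x; have a1 := h1 x; have a2 := abs_le.1 (hu1 x)
      have e1 : Real.exp (((1:ℝ) - p0 x) * u x / 4) ≤ _ := exp_le_quad (by
        rw [abs_le]; constructor <;> nlinarith)
      have e0 : Real.exp (((0:ℝ) - p0 x) * u x / 4) ≤ _ := exp_le_quad (by
        rw [abs_le]; constructor <;> nlinarith)
      have f1 := mul_le_mul_of_nonneg_left e1 a0.le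
      have f0 := mul_le_mul_of_nonneg_left e0 (by linarith : 0 ≤ 1 - p0 x)
      have : p0 x * (1 - p0 x) * (u x)^2 ≤ (u x)^2 := by
        have : p0 x * (1 - p0 x) ≤ 1 := by nlinarith
        nlinarith [sq_nonneg (u x)]
      simp only
      nlinarith) (1 + s / 16) (by
        rw [integral_add (integrable_const 1) (hu2.div_const 16), integral_div]; simp [hs]) n
  have hsub : {D : Fin n → X × ℝ | n * s / 2 < ∑ i, ((D i).2 - p0 (D i).1) * u (D i).1} ⊆
      {D | ENNReal.ofReal (Real.exp (n * s / 8)) ≤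
        ∏ i, ENNReal.ofReal (Real.exp ((((D i).2 - p0 (D i).1) * u (D i).1) / 4))} := by
    intro D hD
    simp only [Set.mem_ofPred_eq] at hD ⊢
    rw [← ENNReal.ofReal_prod_of_nonneg (fun i _ => (Real.exp_pos _).le), ← Real.exp_sum,
      ← Finset.sum_div]
    apply ENNReal.ofReal_le_ofReal
    apply Real.exp_le_exp.2
    linarith
  refine (measure_mono hsub).trans ?_
  refine (meas_ge_le_lintegral_div (Measurable.aemeasurable ?_) (by simp [Real.exp_pos]) (by simp)).trans ?_
  · exact Finset.measurable_prod _ (fun i _ => (hgm.comp (measurable_pi_apply i)).ennreal_ofReal)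
  refine ENNReal.div_le_of_le_mul ?_
  refine hkey.trans ?_
  rw [← ENNReal.ofReal_mul (Real.exp_pos _).le, ← Real.exp_add]
  apply ENNReal.ofReal_le_ofReal
  refine (pow_le_exp (by linarith) n).trans (Real.exp_le_exp.2 ?_)
  linarith

lemma ratio_meas (hp0 : Measurable p0) (q : X → ℝ) (hq : Measurable q) :
    Measurable fun z : X × ℝ => llk (q z.1) z.2 / llk (p0 z.1) z.2 := by
  unfold llk; fun_prop

/-- Type II error bound. -/
lemma type_two [IsProbabilityMeasure (blaw PX p0)] (hp0 : Measurable p0)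
    (h0 : ∀ x, 0 < p0 x) (h1 : ∀ x, p0 x < 1) (pj q : X → ℝ) (hpj : Measurable pj)
    (hj0 : ∀ x, 0 < pj x) (hj1 : ∀ x, pj x < 1) (hq : Measurable q)
    (hq0 : ∀ x, 0 < q x) (hq1 : ∀ x, q x < 1) (s : ℝ) (hs : s = ∫ x, (pj x - p0 x) ^ 2 ∂PX)
    (hclose : ∫ x, (q x - pj x) ^ 2 ∂PX ≤ s / 16) (n : ℕ) :
    ∫⁻ D in {D | ∑ i, ((D i).2 - p0 (D i).1) * (pj (D i).1 - p0 (D i).1) ≤ n * s / 2},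
      ENNReal.ofReal (∏ i, llk (q (D i).1) (D i).2 / llk (p0 (D i).1) (D i).2)
        ∂(Measure.pi fun _ : Fin n => blaw PX p0) ≤
      ENNReal.ofReal (Real.exp (-(n * s / 64))) := by
  set u : X → ℝ := fun x => pj x - p0 x with hudef
  have hu : Measurable u := hpj.sub hp0
  have hu1 : ∀ x, |u x| ≤ 1 := fun x => by
    have := h0 x; have := h1 x; have := hj0 x; have := hj1 x
    rw [abs_le]; constructor <;> simp only [u] <;> linarith
  have hs0 : 0 ≤ s := by rw [hs]; exact integral_nonneg fun x => sq_nonneg _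
  have hs1 : s ≤ 1 := by
    rw [hs]
    have : ∫ x, (pj x - p0 x) ^ 2 ∂PX ≤ ∫ x, (1:ℝ) ∂PX := by
      refine integral_mono_of_nonneg (Eventually.of_forall fun x => sq_nonneg _) (integrable_const 1)
        (Eventually.of_forall fun x => ?_)
      have := hu1 x
      simp only
      rw [← sq_abs]; exact pow_le_one₀ (abs_nonneg _) this
    simpa using this
  have hu2 : Integrable (fun x => u x ^ 2) PX :=
    integrable_of_bdd PX (hu.pow_const 2) 1 (fun x => by
      rw [abs_pow]; exact pow_le_one₀ (abs_nonneg _) (hu1 x))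
  have hw2 : Integrable (fun x => (q x - pj x) ^ 2) PX :=
    integrable_of_bdd PX ((hq.sub hpj).pow_const 2) 1 (fun x => by
      rw [abs_pow]; refine pow_le_one₀ (abs_nonneg _) ?_
      have := hq0 x; have := hq1 x; have := hj0 x; have := hj1 x
      rw [abs_le]; constructor <;> linarith)
  have hi2 : Integrable (fun x => (q x - pj x) ^ 2 * (1 / 4) - u x ^ 2 * (6 / 64)) PX :=
    (hw2.mul_const _).sub (hu2.mul_const _)
  have hgm : Measurable fun z : X × ℝ => llk (q z.1) z.2 / llk (p0 z.1) z.2 *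
      Real.exp (-(((z.2 - p0 z.1) * u z.1) / 8)) := (ratio_meas p0 hp0 q hq).mul (by fun_prop)
  have hg0 : ∀ z : X × ℝ, 0 < llk (q z.1) z.2 / llk (p0 z.1) z.2 := fun z =>
    div_pos (llk_pos (hq0 _) (hq1 _) _) (llk_pos (h0 _) (h1 _) _)
  have hkey := blaw_real_le PX p0 hp0 h0 h1 (fun z => llk (q z.1) z.2 / llk (p0 z.1) z.2 *
      Real.exp (-(((z.2 - p0 z.1) * u z.1) / 8)))
    hgm (fun z => (mul_pos (hg0 z) (Real.exp_pos _)).le)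
    (fun x => 1 + ((q x - pj x) ^ 2 * (1 / 4) - u x ^ 2 * (6 / 64)))
    ((integrable_const 1).add hi2) (Eventually.of_forall fun x => by
      have a0 := h0 x; have a1 := h1 x; have a2 := abs_le.1 (hu1 x)
      have b0 := hq0 x; have b1 := hq1 x
      have e1 : Real.exp (-(((1:ℝ) - p0 x) * u x / 8)) ≤ _ := exp_le_quad (by
        rw [abs_le]; constructor <;> nlinarith)
      have e0 : Real.exp (-(((0:ℝ) - p0 x) * u x / 8)) ≤ _ := exp_le_quad (by
        rw [abs_le]; constructor <;> nlinarith)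
      have f1 := mul_le_mul_of_nonneg_left e1 b0.le
      have f0 := mul_le_mul_of_nonneg_left e0 (by linarith : 0 ≤ 1 - q x)
      simp only [llk_one, llk_zero]
      have g1 : p0 x * (q x / p0 x * Real.exp (-((1 - p0 x) * u x / 8))) =
        q x * Real.exp (-((1 - p0 x) * u x / 8)) := by field_simp
      have hne : 1 - p0 x ≠ 0 := by linarith
      have g0 : (1 - p0 x) * ((1 - q x) / (1 - p0 x) * Real.exp (-((0 - p0 x) * u x / 8))) =
        (1 - q x) * Real.exp (-((0 - p0 x) * u x / 8)) := by field_simp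
      rw [g1, g0]
      refine (add_le_add f1 f0).trans ?_
      have k1 : (q x * (1 - p0 x)^2 + (1 - q x) * (p0 x)^2) * (u x)^2 ≤ (u x)^2 := by
        have : q x * (1 - p0 x)^2 + (1 - q x) * (p0 x)^2 ≤ 1 := by
          have : (1 - p0 x)^2 ≤ 1 := by nlinarith
          have : (p0 x)^2 ≤ 1 := by nlinarith
          nlinarith
        nlinarith [sq_nonneg (u x)]
      have k2 : pj x = u x + p0 x := by simp [u]
      rw [k2]
      nlinarith [sq_nonneg (4 * (q x - (u x + p0 x)) + u x)]) (1 + (- (5 / 64) * s)) (by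
        rw [integral_add (integrable_const 1) hi2,
          integral_sub (hw2.mul_const _) (hu2.mul_const _), integral_mul_const, integral_mul_const]
        simp only [integral_const, probReal_univ, smul_eq_mul]
        have : ∫ x, u x ^ 2 ∂PX = s := hs.symm
        rw [this]; linarith) n
  have hms : MeasurableSet {D : Fin n → X × ℝ | ∑ i, ((D i).2 - p0 (D i).1) * u (D i).1 ≤ n * s / 2} := by
    refine measurableSet_le (Finset.measurable_sum _ fun i _ => ?_) measurable_const
    have := measurable_pi_apply (X := fun _ : Fin n => X × ℝ) i
    exact ((this.snd.sub (hp0.comp this.fst)).mul (hu.comp this.fst))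
  calc _ ≤ ∫⁻ D in {D : Fin n → X × ℝ | ∑ i, ((D i).2 - p0 (D i).1) * u (D i).1 ≤ n * s / 2},
        ENNReal.ofReal (Real.exp (n * s / 16)) * ∏ i, ENNReal.ofReal (llk (q (D i).1) (D i).2 / llk (p0 (D i).1) (D i).2 *
      Real.exp (-((((D i).2 - p0 (D i).1) * u (D i).1) / 8))) ∂(Measure.pi fun _ : Fin n => blaw PX p0) := by
        refine setLIntegral_mono' hms fun D hD => ?_
        simp only [Set.mem_ofPred_eq] at hD
        rw [← ENNReal.ofReal_prod_of_nonneg (fun i _ => (mul_pos (hg0 (D i)) (Real.exp_pos _)).le),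
          ← ENNReal.ofReal_mul (Real.exp_pos _).le, Finset.prod_mul_distrib, ← Real.exp_sum,
          Finset.sum_neg_distrib, ← Finset.sum_div, mul_left_comm, ← Real.exp_add]
        apply ENNReal.ofReal_le_ofReal
        refine le_mul_of_one_le_right (Finset.prod_nonneg fun i _ => (hg0 (D i)).le) ?_
        apply Real.one_le_exp
        linarith
    _ ≤ ∫⁻ D, ENNReal.ofReal (Real.exp (n * s / 16)) * ∏ i, ENNReal.ofReal (llk (q (D i).1) (D i).2 / llk (p0 (D i).1) (D i).2 *
      Real.exp (-((((D i).2 - p0 (D i).1) * u (D i).1) / 8))) ∂(Measure.pi fun _ : Fin n => blaw PX p0) :=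
        setLIntegral_le_lintegral _ _
    _ ≤ ENNReal.ofReal (Real.exp (n * s / 16)) * ENNReal.ofReal ((1 + (- (5 / 64) * s)) ^ n) := by
        rw [lintegral_const_mul']
        · gcongr
        · simp
    _ ≤ _ := by
        rw [← ENNReal.ofReal_mul (Real.exp_pos _).le]
        apply ENNReal.ofReal_le_ofReal
        calc _ ≤ Real.exp (n * s / 16) * Real.exp (n * (- (5 / 64) * s)) := by
              gcongr
              exact pow_le_exp (by linarith) n
          _ = _ := by rw [← Real.exp_add]; ring_nf

/-- Bound for the inverse likelihood ratio. -/
lemma inv_ratio [IsProbabilityMeasure (blaw PX p0)] (hp0 : Measurable p0)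
    (h0 : ∀ x, 0 < p0 x) (h1 : ∀ x, p0 x < 1) (q : X → ℝ) (hq : Measurable q) (c η : ℝ) (hc : 0 < c)
    (hq0 : ∀ x, c ≤ q x) (hq1 : ∀ x, c ≤ 1 - q x) (hη : ∀ᵐ x ∂PX, |q x - p0 x| ≤ η) (n : ℕ) :
    ∫⁻ D, ENNReal.ofReal (∏ i, llk (q (D i).1) (D i).2 / llk (p0 (D i).1) (D i).2)⁻¹
        ∂(Measure.pi fun _ : Fin n => blaw PX p0) ≤
      ENNReal.ofReal (Real.exp (n * (η ^ 2 / c ^ 2))) := by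
  have hg0 : ∀ z : X × ℝ, 0 < llk (q z.1) z.2 / llk (p0 z.1) z.2 := fun z =>
    div_pos (llk_pos (hc.trans_le (hq0 _)) (by linarith [hq1 z.1]) _) (llk_pos (h0 _) (h1 _) _)
  have hkey := blaw_real_le PX p0 hp0 h0 h1 (fun z => (llk (q z.1) z.2 / llk (p0 z.1) z.2)⁻¹)
    (ratio_meas p0 hp0 q hq).inv (fun z => (inv_pos.2 (hg0 z)).le)
    (fun x => 1 + η ^ 2 / c ^ 2) (integrable_const _) (by
      filter_upwards [hη] with x hx
      have a0 := hq0 x; have a1 := hq1 x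
      have b0 : 0 < q x := hc.trans_le a0
      have b1 : 0 < 1 - q x := hc.trans_le a1
      have b3 := h0 x
      have b4 : 0 < 1 - p0 x := by linarith [h1 x]
      simp only [llk_one, llk_zero, inv_div]
      have e : p0 x * (p0 x / q x) + (1 - p0 x) * ((1 - p0 x) / (1 - q x)) =
        1 + (q x - p0 x) ^ 2 / (q x * (1 - q x)) := by field_simp; ring
      rw [e]
      have : (q x - p0 x) ^ 2 ≤ η ^ 2 := by
        rw [← sq_abs (q x - p0 x)]; gcongr
      have : c ^ 2 ≤ q x * (1 - q x) := by rw [sq]; gcongr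
      gcongr) (1 + η ^ 2 / c ^ 2) (by simp) n
  refine le_trans (le_of_eq ?_) (hkey.trans (ENNReal.ofReal_le_ofReal (pow_le_exp (by positivity) n)))
  refine lintegral_congr fun D => ?_
  rw [← ENNReal.ofReal_prod_of_nonneg (fun i _ => (inv_pos.2 (hg0 (D i))).le), Finset.prod_inv_distrib]
end


/-- Likelihood ratio of the sample. -/
def lr {X : Type} (p0 q : X → ℝ) {n : ℕ} (D : Fin n → X × ℝ) : ℝ :=
  ∏ i, llk (q (D i).1) (D i).2 / llk (p0 (D i).1) (D i).2

lemma lr_pos {X : Type} (p0 : X → ℝ) (h0 : ∀ x, 0 < p0 x) (h1 : ∀ x, p0 x < 1) (q : X → ℝ)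
    (hq0 : ∀ x, 0 < q x) (hq1 : ∀ x, q x < 1) {n : ℕ} (D : Fin n → X × ℝ) : 0 < lr p0 q D :=
  Finset.prod_pos fun _ _ =>
    div_pos (llk_pos (hq0 _) (hq1 _) _) (llk_pos (h0 _) (h1 _) _)

section
variable {X Θ : Type} [MeasurableSpace X] [MeasurableSpace Θ] (PX : Measure X)
  [IsProbabilityMeasure PX] (p0 : X → ℝ) (p : Θ → X → ℝ) (Pr : Measure Θ)
  [IsProbabilityMeasure Pr]

lemma lr_meas (hp0 : Measurable p0) (hp : Measurable fun z : Θ × X => p z.1 z.2) (n : ℕ) :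
    Measurable fun z : Θ × (Fin n → X × ℝ) => lr p0 (p z.1) z.2 := by
  unfold lr llk
  refine Finset.measurable_prod _ fun i _ => ?_
  have e : Measurable fun z : Θ × (Fin n → X × ℝ) => z.2 i :=
    (measurable_pi_apply i).comp measurable_snd
  have e1 : Measurable fun z : Θ × (Fin n → X × ℝ) => p z.1 (z.2 i).1 :=
    hp.comp (measurable_fst.prodMk e.fst)
  have e2 : Measurable fun z : Θ × (Fin n → X × ℝ) => p0 (z.2 i).1 := hp0.comp e.fst
  have e3 : Measurable fun z : Θ × (Fin n → X × ℝ) => (z.2 i).2 := e.snd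
  fun_prop

attribute [irreducible] lr

lemma den_bound [IsProbabilityMeasure (blaw PX p0)] (hp0 : Measurable p0)
    (h0 : ∀ x, 0 < p0 x) (h1 : ∀ x, p0 x < 1) (hp : Measurable fun z : Θ × X => p z.1 z.2)
    (c η : ℝ) (hc : 0 < c) (hpc0 : ∀ θ x, c ≤ p θ x) (hpc1 : ∀ θ x, c ≤ 1 - p θ x)
    (B : Set Θ) (hB : MeasurableSet B) (hB0 : Pr B ≠ 0)
    (hBη : ∀ θ ∈ B, ∀ᵐ x ∂PX, |p θ x - p0 x| ≤ η) (n : ℕ) (t : ℝ) (ht : 0 < t) :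
    (Measure.pi fun _ : Fin n => blaw PX p0)
      {D | ∫⁻ θ in B, ENNReal.ofReal (lr p0 (p θ) D) ∂Pr < ENNReal.ofReal t * Pr B} ≤
      ENNReal.ofReal (t * Real.exp (n * (η ^ 2 / c ^ 2))) := by
  set P := (Measure.pi fun _ : Fin n => blaw PX p0) with hP
  have hlm := lr_meas p0 p hp0 hp n
  have hpos : ∀ θ (D : Fin n → X × ℝ), 0 < lr p0 (p θ) D := fun θ D =>
    lr_pos p0 h0 h1 _ (fun x => hc.trans_le (hpc0 θ x)) (fun x => by linarith [hpc1 θ x]) D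
  have hBfin : Pr B ≠ ∞ := measure_ne_top _ _
  have hsub : {D : Fin n → X × ℝ | ∫⁻ θ in B, ENNReal.ofReal (lr p0 (p θ) D) ∂Pr < ENNReal.ofReal t * Pr B} ⊆
      {D | Pr B ≤ ∫⁻ θ in B, ENNReal.ofReal (t * (lr p0 (p θ) D)⁻¹) ∂Pr} := by
    intro D hD
    simp only [Set.mem_ofPred_eq] at hD ⊢
    have hmD : Measurable fun θ => lr p0 (p θ) D := by
      have e : Measurable fun θ : Θ => (θ, D) := by fun_prop
      have e2 := Measurable.comp (g := fun z : Θ × (Fin n → X × ℝ) => lr p0 (p z.1) z.2) hlm e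
      simpa only [Function.comp_def] using e2
    have h2 : 2 * Pr B ≤ (ENNReal.ofReal t⁻¹ * ∫⁻ θ in B, ENNReal.ofReal (lr p0 (p θ) D) ∂Pr) +
        ∫⁻ θ in B, ENNReal.ofReal (t * (lr p0 (p θ) D)⁻¹) ∂Pr := by
      have e1 := lintegral_const_mul (μ := Pr.restrict B) (ENNReal.ofReal t⁻¹) hmD.ennreal_ofReal
      have e2 := lintegral_add_left (μ := Pr.restrict B) (hmD.ennreal_ofReal.const_mul (ENNReal.ofReal t⁻¹))
        (fun θ => ENNReal.ofReal (t * (lr p0 (p θ) D)⁻¹))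
      rw [← e1, ← e2]
      have : 2 * Pr B = ∫⁻ θ in B, 2 ∂Pr := by simp
      rw [this]
      refine lintegral_mono fun θ => ?_
      rw [← ENNReal.ofReal_mul (by positivity), ← ENNReal.ofReal_add
        (by have := hpos θ D; positivity) (by have := hpos θ D; positivity)]
      rw [← ENNReal.ofReal_ofNat]
      apply ENNReal.ofReal_le_ofReal
      have hr := hpos θ D
      set r := lr p0 (p θ) D
      have : t⁻¹ * r + t * r⁻¹ = 2 + (r - t)^2 / (t * r) := by field_simp; ring
      rw [this]
      have : 0 ≤ (r - t)^2 / (t * r) := by positivity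
      linarith
    have h3 : ENNReal.ofReal t⁻¹ * ∫⁻ θ in B, ENNReal.ofReal (lr p0 (p θ) D) ∂Pr ≤ Pr B := by
      calc _ ≤ ENNReal.ofReal t⁻¹ * (ENNReal.ofReal t * Pr B) := by gcongr
        _ = Pr B := by
          rw [← mul_assoc, ← ENNReal.ofReal_mul (by positivity), inv_mul_cancel₀ ht.ne']; simp
    have h4 := h2.trans (add_le_add_left h3 _)
    rw [two_mul] at h4
    exact (ENNReal.add_le_add_iff_left hBfin).1 h4
  refine (measure_mono hsub).trans ?_
  have hmm : Measurable fun z : (Fin n → X × ℝ) × Θ => ENNReal.ofReal (t * (lr p0 (p z.2) z.1)⁻¹) := by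
    have := hlm.comp (measurable_swap (α := Fin n → X × ℝ) (β := Θ))
    simp only [Function.comp_def, Prod.fst_swap, Prod.snd_swap] at this
    exact (measurable_const.mul this.inv).ennreal_ofReal
  refine (meas_ge_le_lintegral_div (Measurable.aemeasurable
    (Measurable.lintegral_prod_right' (f := fun z : (Fin n → X × ℝ) × Θ =>
      ENNReal.ofReal (t * (lr p0 (p z.2) z.1)⁻¹)) hmm)) hB0 hBfin).trans ?_
  refine ENNReal.div_le_of_le_mul ?_
  rw [lintegral_lintegral_swap hmm.aemeasurable]
  calc _ ≤ ∫⁻ θ in B, ENNReal.ofReal (t * Real.exp (n * (η ^ 2 / c ^ 2))) ∂Pr := by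
        refine setLIntegral_mono' hB fun θ hθ => ?_
        have := inv_ratio PX p0 hp0 h0 h1 (p θ) (hp.comp (measurable_const.prodMk measurable_id)) c η hc
          (hpc0 θ) (hpc1 θ) (hBη θ hθ) n
        simp only [ENNReal.ofReal_mul ht.le]
        rw [lintegral_const_mul' _ _ (by simp)]
        gcongr
        unfold lr
        exact this
    _ = _ := by simp

lemma num_bound [IsProbabilityMeasure (blaw PX p0)] (hp0 : Measurable p0)
    (h0 : ∀ x, 0 < p0 x) (h1 : ∀ x, p0 x < 1) (hp : Measurable fun z : Θ × X => p z.1 z.2)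
    (hq0 : ∀ θ x, 0 < p θ x) (hq1 : ∀ θ x, p θ x < 1)
    (A : Set Θ) (hA : MeasurableSet A) (S : Finset Θ) (τ2 : ℝ)
    (hS : ∀ θ ∈ S, τ2 ≤ ∫ x, (p θ x - p0 x) ^ 2 ∂PX)
    (hcov : ∀ θ ∈ A, ∃ θ' ∈ S, ∫ x, (p θ x - p θ' x) ^ 2 ∂PX ≤ τ2 / 16) (n : ℕ) :
    ∫⁻ D in {D | ∀ θ ∈ S, ∑ i, ((D i).2 - p0 (D i).1) * (p θ (D i).1 - p0 (D i).1) ≤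
          n * (∫ x, (p θ x - p0 x) ^ 2 ∂PX) / 2},
      (∫⁻ θ in A, ENNReal.ofReal (lr p0 (p θ) D) ∂Pr) ∂(Measure.pi fun _ : Fin n => blaw PX p0) ≤
      ENNReal.ofReal (Real.exp (-(n * τ2 / 64))) := by
  have hlm := lr_meas p0 p hp0 hp n
  have hmm : Measurable fun z : (Fin n → X × ℝ) × Θ => ENNReal.ofReal (lr p0 (p z.2) z.1) := by
    have := hlm.comp (measurable_swap (α := Fin n → X × ℝ) (β := Θ))
    simp only [Function.comp_def, Prod.fst_swap, Prod.snd_swap] at this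
    exact this.ennreal_ofReal
  have hpm : ∀ θ, Measurable (p θ) := fun θ => hp.comp (measurable_const.prodMk measurable_id)
  rw [lintegral_lintegral_swap hmm.aemeasurable]
  calc _ ≤ ∫⁻ θ in A, ENNReal.ofReal (Real.exp (-(n * τ2 / 64))) ∂Pr := by
        refine setLIntegral_mono' hA fun θ hθ => ?_
        obtain ⟨θ', h', hc⟩ := hcov θ hθ
        have h2 := type_two PX p0 hp0 h0 h1 (p θ') (p θ) (hpm _) (hq0 _) (hq1 _) (hpm _) (hq0 _) (hq1 _)
          _ rfl (hc.trans (by linarith [hS θ' h'])) n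
        refine le_trans ?_ (h2.trans (ENNReal.ofReal_le_ofReal (Real.exp_le_exp.2 ?_)))
        · unfold lr
          refine lintegral_mono_set ?_
          intro D hD
          exact hD θ' h'
        · have : (n:ℝ) * τ2 ≤ n * ∫ x, (p θ' x - p0 x) ^ 2 ∂PX :=
            mul_le_mul_of_nonneg_left (hS θ' h') (Nat.cast_nonneg n)
          linarith
    _ ≤ _ := by
        rw [setLIntegral_const]
        exact mul_le_of_le_one_right (by positivity) prob_le_one

/-- Main posterior bound. -/
lemma post_bound [IsProbabilityMeasure (blaw PX p0)] (hp0 : Measurable p0)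
    (h0 : ∀ x, 0 < p0 x) (h1 : ∀ x, p0 x < 1) (hp : Measurable fun z : Θ × X => p z.1 z.2)
    (c η : ℝ) (hc : 0 < c) (hpc0 : ∀ θ x, c ≤ p θ x) (hpc1 : ∀ θ x, c ≤ 1 - p θ x)
    (A : Set Θ) (hA : MeasurableSet A) (S : Finset Θ) (τ2 : ℝ)
    (hS : ∀ θ ∈ S, τ2 ≤ ∫ x, (p θ x - p0 x) ^ 2 ∂PX)
    (hcov : ∀ θ ∈ A, ∃ θ' ∈ S, ∫ x, (p θ x - p θ' x) ^ 2 ∂PX ≤ τ2 / 16)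
    (B : Set Θ) (hB : MeasurableSet B) (b : ℝ) (hb : 0 < b) (hB0 : ENNReal.ofReal b ≤ Pr B)
    (hBη : ∀ θ ∈ B, ∀ᵐ x ∂PX, |p θ x - p0 x| ≤ η) (n : ℕ) (t : ℝ) (ht : 0 < t)
    (δ : ℝ) (hδ : 0 < δ) :
    (Measure.pi fun _ : Fin n => blaw PX p0)
      {D | ENNReal.ofReal δ < postMass Pr (fun θ => ∏ i, llk (p θ (D i).1) (D i).2) A} ≤
      ENNReal.ofReal (S.card * Real.exp (-(n * τ2 / 16))) +
      ENNReal.ofReal (t * Real.exp (n * (η ^ 2 / c ^ 2))) +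
      ENNReal.ofReal (Real.exp (-(n * τ2 / 64)) / (δ * (t * b))) := by
  set P := (Measure.pi fun _ : Fin n => blaw PX p0) with hP
  have hq0 : ∀ θ x, 0 < p θ x := fun θ x => hc.trans_le (hpc0 θ x)
  have hq1 : ∀ θ x, p θ x < 1 := fun θ x => by linarith [hpc1 θ x]
  have hpm : ∀ θ, Measurable (p θ) := fun θ => hp.comp (measurable_const.prodMk measurable_id)
  have hlm := lr_meas p0 p hp0 hp n
  let s : Θ → ℝ := fun θ => ∫ x, (p θ x - p0 x) ^ 2 ∂PX
  let E : Set (Fin n → X × ℝ) := ⋃ θ ∈ S, {D | n * s θ / 2 <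
    ∑ i, ((D i).2 - p0 (D i).1) * (p θ (D i).1 - p0 (D i).1)}
  let G : Set (Fin n → X × ℝ) :=
    {D | ∫⁻ θ in B, ENNReal.ofReal (lr p0 (p θ) D) ∂Pr < ENNReal.ofReal t * Pr B}
  let Ec : Set (Fin n → X × ℝ) := {D | ∀ θ ∈ S,
    ∑ i, ((D i).2 - p0 (D i).1) * (p θ (D i).1 - p0 (D i).1) ≤ n * s θ / 2}
  let H : Set (Fin n → X × ℝ) := {D | ENNReal.ofReal (δ * (t * b)) ≤
    Ec.indicator (fun D => ∫⁻ θ in A, ENNReal.ofReal (lr p0 (p θ) D) ∂Pr) D}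
  have hEc : MeasurableSet Ec := by
    have : Ec = ⋂ θ ∈ S, {D : Fin n → X × ℝ |
        ∑ i, ((D i).2 - p0 (D i).1) * (p θ (D i).1 - p0 (D i).1) ≤ n * s θ / 2} := by
      ext D; simp [Ec]
    rw [this]
    refine Finset.measurableSet_biInter S fun θ _ => ?_
    refine measurableSet_le (Finset.measurable_sum _ fun i _ => ?_) measurable_const
    have := measurable_pi_apply (X := fun _ : Fin n => X × ℝ) i
    exact ((this.snd.sub (hp0.comp this.fst)).mul (((hpm θ).comp this.fst).sub (hp0.comp this.fst)))
  have hmm : Measurable fun z : (Fin n → X × ℝ) × Θ => ENNReal.ofReal (lr p0 (p z.2) z.1) := by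
    have := hlm.comp (measurable_swap (α := Fin n → X × ℝ) (β := Θ))
    simp only [Function.comp_def, Prod.fst_swap, Prod.snd_swap] at this
    exact this.ennreal_ofReal
  have hsub : {D | ENNReal.ofReal δ < postMass Pr (fun θ => ∏ i, llk (p θ (D i).1) (D i).2) A} ⊆
      E ∪ G ∪ H := by
    intro D hD
    by_cases hE : D ∈ E
    · exact Or.inl (Or.inl hE)
    by_cases hG : D ∈ G
    · exact Or.inl (Or.inr hG)
    refine Or.inr ?_
    have hDE : D ∈ Ec := by
      simp only [E, Set.mem_iUnion, Set.mem_ofPred_eq, not_exists, not_lt] at hE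
      exact fun θ hθ => hE θ hθ
    simp only [G, Set.mem_ofPred_eq, not_lt] at hG
    simp only [H, Set.mem_ofPred_eq, Set.indicator_of_mem hDE]
    simp only [Set.mem_ofPred_eq, postMass] at hD
    have hD2 := (ENNReal.mul_lt_of_lt_div hD).le
    -- factor out the true likelihood
    let L0 : ℝ := ∏ i, llk (p0 (D i).1) (D i).2
    have hL0 : 0 < L0 := Finset.prod_pos fun i _ => llk_pos (h0 _) (h1 _) _
    have hfac : ∀ θ, ENNReal.ofReal (∏ i, llk (p θ (D i).1) (D i).2) =
        ENNReal.ofReal L0 * ENNReal.ofReal (lr p0 (p θ) D) := by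
      intro θ
      rw [← ENNReal.ofReal_mul hL0.le]
      congr 1
      unfold lr
      simp only [L0, ← Finset.prod_mul_distrib]
      refine Finset.prod_congr rfl fun i _ => ?_
      have := llk_pos (h0 (D i).1) (h1 (D i).1) (D i).2
      field_simp
    simp only [hfac] at hD2
    rw [lintegral_const_mul' _ _ (by simp), lintegral_const_mul' _ _ (by simp), mul_left_comm,
      ENNReal.mul_le_mul_iff_right (by simpa using hL0) (by simp)] at hD2
    refine le_trans ?_ hD2
    rw [ENNReal.ofReal_mul hδ.le, ENNReal.ofReal_mul ht.le]
    gcongr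
    calc _ ≤ ENNReal.ofReal t * Pr B := by gcongr
      _ ≤ _ := hG
      _ ≤ _ := setLIntegral_le_lintegral _ _
  refine (measure_mono hsub).trans ((measure_union_le _ _).trans ?_)
  refine add_le_add ((measure_union_le _ _).trans (add_le_add ?_ ?_)) ?_
  · refine (measure_biUnion_finset_le _ _).trans ?_
    calc _ ≤ ∑ θ ∈ S, ENNReal.ofReal (Real.exp (-(n * τ2 / 16))) := by
          refine Finset.sum_le_sum fun θ hθ => ?_
          refine (type_one PX p0 hp0 h0 h1 (fun x => p θ x - p0 x) ((hpm θ).sub hp0) (fun x => ?_) n).trans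
            (ENNReal.ofReal_le_ofReal (Real.exp_le_exp.2 ?_))
          · have := h0 x; have := h1 x; have := hq0 θ x; have := hq1 θ x
            rw [abs_le]; constructor <;> linarith
          · have : (n:ℝ) * τ2 ≤ n * ∫ x, (p θ x - p0 x) ^ 2 ∂PX :=
              mul_le_mul_of_nonneg_left (hS θ hθ) (Nat.cast_nonneg n)
            linarith
      _ = _ := by
          rw [Finset.sum_const, ENNReal.ofReal_mul (by positivity), nsmul_eq_mul]; simp
  · refine den_bound PX p0 p Pr hp0 h0 h1 hp c η hc hpc0 hpc1 B hB ?_ hBη n t ht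
    exact (lt_of_lt_of_le (ENNReal.ofReal_pos.2 hb) hB0).ne'
  · refine (meas_ge_le_lintegral_div (Measurable.aemeasurable ?_) ?_ (by simp)).trans ?_
    · exact (Measurable.lintegral_prod_right' (f := fun z : (Fin n → X × ℝ) × Θ =>
        ENNReal.ofReal (lr p0 (p z.2) z.1)) hmm).indicator hEc
    · simp; positivity
    rw [lintegral_indicator hEc, ENNReal.ofReal_div_of_pos (by positivity)]
    gcongr
    exact num_bound PX p0 p Pr hp0 h0 h1 hp hq0 hq1 A hA S τ2 hS hcov n
end


lemma lrelu_lip {ν : ℝ} (h0 : 0 ≤ ν) (h1 : ν < 1) (x y : ℝ) : |lrelu ν x - lrelu ν y| ≤ |x - y| := by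
  unfold lrelu
  refine (abs_max_sub_max_le_max _ _ _ _).trans (max_le le_rfl ?_)
  rw [← mul_sub, abs_mul, abs_of_nonneg h0]
  exact mul_le_of_le_one_left (abs_nonneg _) h1.le

lemma lrelu_zero (ν : ℝ) : lrelu ν 0 = 0 := by simp [lrelu]

lemma lrelu_abs {ν : ℝ} (h0 : 0 ≤ ν) (h1 : ν < 1) (x : ℝ) : |lrelu ν x| ≤ |x| := by
  have := lrelu_lip h0 h1 x 0
  simpa [lrelu_zero] using this

lemma affine_abs {m : ℕ} (w h : Fin m → ℝ) (b κ H : ℝ) (hκ : 0 ≤ κ) (hw : ∀ j, |w j| ≤ κ)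
    (hb : |b| ≤ κ) (hh : ∀ j, |h j| ≤ H) (hH : 1 ≤ H) :
    |(∑ j, w j * h j) + b| ≤ κ * (m + 1) * H := by
  have h1 : |∑ j, w j * h j| ≤ m * (κ * H) := by
    refine (Finset.abs_sum_le_sum_abs _ _).trans ?_
    calc _ ≤ ∑ j : Fin m, κ * H := by
          refine Finset.sum_le_sum fun j _ => ?_
          rw [abs_mul]
          exact mul_le_mul (hw j) (hh j) (abs_nonneg _) hκ
      _ = _ := by simp
  refine (abs_add_le _ _).trans ?_
  nlinarith

lemma affine_diff {m : ℕ} (w w' h h' : Fin m → ℝ) (b b' κ H η Δ : ℝ) (hη : 0 ≤ η)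
    (hw : ∀ j, |w j| ≤ κ) (hww : ∀ j, |w j - w' j| ≤ η) (hbb : |b - b'| ≤ η)
    (hh : ∀ j, |h' j| ≤ H) (hH : 1 ≤ H) (hd : ∀ j, |h j - h' j| ≤ Δ) (hκ : 0 ≤ κ) :
    |((∑ j, w j * h j) + b) - ((∑ j, w' j * h' j) + b')| ≤ (m + 1) * η * H + m * κ * Δ := by
  have h1 : |∑ j, (w j * h j - w' j * h' j)| ≤ m * (κ * Δ + η * H) := by
    refine (Finset.abs_sum_le_sum_abs _ _).trans ?_
    calc _ ≤ ∑ j : Fin m, (κ * Δ + η * H) := by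
          refine Finset.sum_le_sum fun j _ => ?_
          have : w j * h j - w' j * h' j = w j * (h j - h' j) + (w j - w' j) * h' j := by ring
          rw [this]
          refine (abs_add_le _ _).trans ?_
          rw [abs_mul, abs_mul]
          exact add_le_add (mul_le_mul (hw j) (hd j) (abs_nonneg _) hκ)
            (mul_le_mul (hww j) (hh j) (abs_nonneg _) hη)
      _ = _ := by simp; ring
  have e : ((∑ j, w j * h j) + b) - ((∑ j, w' j * h' j) + b') =
      (∑ j, (w j * h j - w' j * h' j)) + (b - b') := by
    rw [Finset.sum_sub_distrib]; ring
  rw [e]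
  refine (abs_add_le _ _).trans ?_
  nlinarith

lemma one_le_Lam {κ a : ℝ} (hκ : 1 ≤ κ) (ha : 1 ≤ a) (d r : ℕ) : 1 ≤ κ * (r + d + 1) * a := by
  have h3 : (1:ℝ) ≤ r + d + 1 := by
    have : (0:ℝ) ≤ r + d := by positivity
    linarith
  have : 1 ≤ κ * (r + d + 1) := one_le_mul_of_one_le_of_one_le hκ h3
  exact one_le_mul_of_one_le_of_one_le this ha

lemma hidL_bound {ν : ℝ} (hν0 : 0 ≤ ν) (hν1 : ν < 1) (d r L : ℕ) (θ : ParamIdx d r L → ℝ)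
    (κ a : ℝ) (hκ : 1 ≤ κ) (ha : 1 ≤ a) (hθ : ∀ i, |θ i| ≤ κ) (x : Fin d → ℝ) (hx : x ∈ cube a d)
    (ls : List (Fin (L - 1))) (i : Fin r) :
    |hidL ν d r L θ x ls i| ≤ (κ * (r + d + 1) * a) ^ (ls.length + 1) := by
  have hΛ := one_le_Lam hκ ha d r
  set Λ := κ * (r + d + 1) * a with hL
  induction ls using List.reverseRecOn generalizing i with
  | nil =>
    simp only [hidL, List.foldl_nil, List.length_nil, zero_add, pow_one]
    refine (lrelu_abs hν0 hν1 _).trans ?_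
    refine (affine_abs _ _ _ κ a (by linarith) (fun j => hθ _) (hθ _)
      (fun j => abs_le.2 (hx j)) ha).trans ?_
    rw [hL]
    gcongr
    have : (0:ℝ) ≤ r := by positivity
    linarith
  | append_singleton ls l ih =>
    simp only [hidL_append, List.length_append, List.length_singleton]
    refine (lrelu_abs hν0 hν1 _).trans ?_
    refine (affine_abs _ _ _ κ _ (by linarith) (fun j => hθ _) (hθ _) ih (one_le_pow₀ hΛ)).trans ?_
    rw [pow_succ' Λ (ls.length + 1)]
    gcongr
    rw [hL]
    have h1 : κ * (r + 1) ≤ κ * (r + d + 1) := by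
      gcongr
      have : (0:ℝ) ≤ d := by positivity
      linarith
    have h2 : 0 ≤ κ * (r + d + 1) := by positivity
    nlinarith

lemma hidL_diff {ν : ℝ} (hν0 : 0 ≤ ν) (hν1 : ν < 1) (d r L : ℕ) (θ θ' : ParamIdx d r L → ℝ)
    (κ a η : ℝ) (hκ : 1 ≤ κ) (ha : 1 ≤ a) (hη : 0 ≤ η) (hθ : ∀ i, |θ i| ≤ κ) (hθ' : ∀ i, |θ' i| ≤ κ)
    (hd : ∀ i, |θ i - θ' i| ≤ η) (x : Fin d → ℝ) (hx : x ∈ cube a d)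
    (ls : List (Fin (L - 1))) (i : Fin r) :
    |hidL ν d r L θ x ls i - hidL ν d r L θ' x ls i| ≤
      (ls.length + 1 : ℕ) * η * (κ * (r + d + 1) * a) ^ (ls.length + 1) := by
  have hb := hidL_bound hν0 hν1 d r L θ' κ a hκ ha hθ' x hx
  have hΛ := one_le_Lam hκ ha d r
  have hr : (0:ℝ) ≤ r := by positivity
  have hdd : (0:ℝ) ≤ d := by positivity
  set Λ := κ * (r + d + 1) * a with hL
  have hΛ1 : (d + 1) * a ≤ Λ := by
    rw [hL]
    have : (d:ℝ) + 1 ≤ κ * (r + d + 1) := by nlinarith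
    gcongr
  have hΛ2 : (r + 1) ≤ Λ := by
    rw [hL]
    have : (r:ℝ) + 1 ≤ κ * (r + d + 1) := by nlinarith
    nlinarith
  have hΛ3 : r * κ ≤ Λ := by
    rw [hL]
    have : (r:ℝ) * κ ≤ κ * (r + d + 1) := by nlinarith
    nlinarith
  induction ls using List.reverseRecOn generalizing i with
  | nil =>
    simp only [hidL, List.foldl_nil, List.length_nil, zero_add, pow_one]
    refine (lrelu_lip hν0 hν1 _ _).trans ?_
    refine (affine_diff _ _ _ _ _ _ κ a η 0 hη (fun j => hθ _) (fun j => hd _) (hd _)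
      (fun j => abs_le.2 (hx j)) ha (fun j => by simp) (by linarith)).trans ?_
    push_cast
    nlinarith
  | append_singleton ls l ih =>
    simp only [hidL_append, List.length_append, List.length_singleton]
    refine (lrelu_lip hν0 hν1 _ _).trans ?_
    refine (affine_diff _ _ _ _ _ _ κ _ η _ hη (fun j => hθ _) (fun j => hd _) (hd _)
      (hb ls) (one_le_pow₀ hΛ) ih (by linarith)).trans ?_
    rw [pow_succ' Λ (ls.length + 1)]
    set H := Λ ^ (ls.length + 1)
    have hH : 0 ≤ H := by positivity
    push_cast
    have e1 : (r + 1) * η * H ≤ Λ * η * H := by gcongr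
    have e2 : r * κ * ((ls.length + 1 : ℝ) * η * H) ≤ Λ * ((ls.length + 1) * η * H) := by gcongr
    nlinarith

lemma net_diff {ν : ℝ} (hν0 : 0 ≤ ν) (hν1 : ν < 1) (d r L : ℕ) (θ θ' : ParamIdx d r L → ℝ)
    (κ a η : ℝ) (hκ : 1 ≤ κ) (ha : 1 ≤ a) (hη : 0 ≤ η) (hθ : ∀ i, |θ i| ≤ κ) (hθ' : ∀ i, |θ' i| ≤ κ)
    (hd : ∀ i, |θ i - θ' i| ≤ η) (x : Fin d → ℝ) (hx : x ∈ cube a d) :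
    |netOfParams ν d r L θ x - netOfParams ν d r L θ' x| ≤
      (L + 2 : ℕ) * η * (κ * (r + d + 1) * a) ^ (L + 2) := by
  have hb := hidL_bound hν0 hν1 d r L θ' κ a hκ ha hθ' x hx
  have hdiff := hidL_diff hν0 hν1 d r L θ θ' κ a η hκ ha hη hθ hθ' hd x hx
  have hΛ := one_le_Lam hκ ha d r
  have hr : (0:ℝ) ≤ r := by positivity
  have hdd : (0:ℝ) ≤ d := by positivity
  set Λ := κ * (r + d + 1) * a with hL
  have hΛ2 : (r + 1) ≤ Λ := by
    rw [hL]
    have : (r:ℝ) + 1 ≤ κ * (r + d + 1) := by nlinarith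
    nlinarith
  have hΛ3 : r * κ ≤ Λ := by
    rw [hL]
    have : (r:ℝ) * κ ≤ κ * (r + d + 1) := by nlinarith
    nlinarith
  rw [netOfParams_eq, netOfParams_eq]
  refine (affine_diff _ _ _ _ _ _ κ _ η _ hη (fun j => hθ _) (fun j => hd _) (hd _)
      (hb _) (one_le_pow₀ hΛ) (hdiff _) (by linarith)).trans ?_
  rw [List.length_finRange]
  have hle : L - 1 + 1 + 1 ≤ L + 2 := by omega
  calc _ ≤ ((L - 1 + 1 + 1 : ℕ):ℝ) * η * Λ ^ (L - 1 + 1 + 1) := by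
        rw [pow_succ' Λ (L - 1 + 1)]
        set H := Λ ^ (L - 1 + 1)
        have hH : 0 ≤ H := by positivity
        push_cast
        have e1 : (r + 1) * η * H ≤ Λ * η * H := by gcongr
        have e2 : r * κ * (((L - 1 : ℕ) + 1 : ℝ) * η * H) ≤ Λ * (((L - 1 : ℕ) + 1) * η * H) := by gcongr
        nlinarith
    _ ≤ _ := by gcongr


/-- One hidden layer. -/
def layer (ν : ℝ) {r : ℕ} (h : Fin r → ℝ) (p : (Fin r → Fin r → ℝ) × (Fin r → ℝ)) : Fin r → ℝ :=
  fun i => lrelu ν ((∑ j, p.1 i j * h j) + p.2 i)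

/-- Hidden state of a network. -/
def LNet.state (ν : ℝ) {d r : ℕ} (net : LNet d r) (x : Fin d → ℝ) : Fin r → ℝ :=
  net.hid.foldl (layer ν) (fun i => lrelu ν ((∑ j, net.W0 i j * x j) + net.b0 i))

lemma LNet.eval_eq (ν : ℝ) {d r : ℕ} (net : LNet d r) (x : Fin d → ℝ) :
    net.eval ν x = (∑ i, net.Wout i * net.state ν x i) + net.bout := rfl

lemma append_abs {m k : ℕ} {v : Fin m → ℝ} {B : ℝ} (hB : 0 ≤ B) (h : ∀ i, |v i| ≤ B)
    (i : Fin (m + k)) : |Fin.append v (0 : Fin k → ℝ) i| ≤ B := by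
  refine Fin.addCases (fun i => ?_) (fun i => ?_) i
  · simpa using h i
  · simpa using hB

/-- Zero padding of the width. -/
def LNet.widen {d r : ℕ} (k : ℕ) (net : LNet d r) : LNet d (r + k) where
  W0 := Fin.append net.W0 (fun _ _ => 0)
  b0 := Fin.append net.b0 0
  hid := net.hid.map fun p =>
    (Fin.append (fun i => Fin.append (p.1 i) (0 : Fin k → ℝ)) (fun _ _ => 0), Fin.append p.2 0)
  Wout := Fin.append net.Wout 0
  bout := net.bout

lemma LNet.widen_bounded {d r : ℕ} (k : ℕ) (net : LNet d r) {B : ℝ} (hB : 0 ≤ B)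
    (h : net.bounded B) : (net.widen k).bounded B := by
  obtain ⟨h1, h2, h3, h4, h5⟩ := h
  refine ⟨?_, append_abs hB h2, ?_, append_abs hB h4, h5⟩
  · intro i
    refine Fin.addCases (fun i j => ?_) (fun i j => ?_) i
    · simpa [LNet.widen] using h1 i j
    · simpa [LNet.widen] using hB
  · intro p hp
    simp only [LNet.widen, List.mem_map] at hp
    obtain ⟨q, hq, rfl⟩ := hp
    refine ⟨?_, append_abs hB (h3 q hq).2⟩
    intro i
    refine Fin.addCases (fun i j => ?_) (fun i j => ?_) i
    · simpa using append_abs hB ((h3 q hq).1 i) j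
    · simpa using hB

lemma LNet.widen_state (ν : ℝ) {d r : ℕ} (k : ℕ) (net : LNet d r) (x : Fin d → ℝ) :
    (net.widen k).state ν x = Fin.append (net.state ν x) (0 : Fin k → ℝ) := by
  unfold LNet.state
  have h0 : (fun i => lrelu ν ((∑ j, (net.widen k).W0 i j * x j) + (net.widen k).b0 i)) =
      Fin.append (fun i => lrelu ν ((∑ j, net.W0 i j * x j) + net.b0 i)) (0 : Fin k → ℝ) := by
    funext i
    refine Fin.addCases (fun i => ?_) (fun i => ?_) i
    · simp [LNet.widen]
    · simp [LNet.widen, lrelu_zero]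
  rw [h0]
  simp only [LNet.widen]
  generalize (fun i => lrelu ν ((∑ j, net.W0 i j * x j) + net.b0 i)) = h
  generalize net.hid = l
  induction l generalizing h with
  | nil => simp
  | cons p l ih =>
    simp only [List.map_cons, List.foldl_cons]
    rw [← ih]
    congr 1
    funext i
    refine Fin.addCases (fun i => ?_) (fun i => ?_) i
    · simp [layer, Fin.sum_univ_add]
    · simp [layer, lrelu_zero]

lemma LNet.widen_eval (ν : ℝ) {d r : ℕ} (k : ℕ) (net : LNet d r) (x : Fin d → ℝ) :
    (net.widen k).eval ν x = net.eval ν x := by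
  rw [LNet.eval_eq, LNet.eval_eq, LNet.widen_state]
  simp [LNet.widen, Fin.sum_univ_add]

/-- Add one identity layer. -/
def LNet.deepen (ν : ℝ) {d r : ℕ} (net : LNet d (r + 2)) : LNet d (r + 2) where
  W0 := net.W0
  b0 := net.b0
  hid := net.hid ++ [(fun i j => if i = 0 then net.Wout j else if i = 1 then - net.Wout j else 0,
    fun i => if i = 0 then net.bout else if i = 1 then - net.bout else 0)]
  Wout := fun i => if i = 0 then 1 / (1 + ν) else if i = 1 then - (1 / (1 + ν)) else 0
  bout := 0

lemma LNet.deepen_bounded {ν : ℝ} (hν : 0 ≤ ν) {d r : ℕ} (net : LNet d (r + 2)) {B : ℝ} (hB : 1 ≤ B)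
    (h : net.bounded B) : (net.deepen ν).bounded B := by
  obtain ⟨h1, h2, h3, h4, h5⟩ := h
  have hB0 : 0 ≤ B := by linarith
  have hi : |(1 + ν)⁻¹| ≤ B := by
    rw [abs_of_nonneg (by positivity)]
    exact (inv_le_one_of_one_le₀ (by linarith)).trans hB
  refine ⟨h1, h2, ?_, ?_, by simpa [LNet.deepen] using hB0⟩
  · intro p hp
    simp only [LNet.deepen, List.mem_append, List.mem_singleton] at hp
    rcases hp with hp | rfl
    · exact h3 p hp
    · refine ⟨fun i j => ?_, fun i => ?_⟩
      · dsimp only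
        split_ifs
        · exact h4 j
        · rw [abs_neg]; exact h4 j
        · simpa using hB0
      · dsimp only
        split_ifs
        · exact h5
        · rw [abs_neg]; exact h5
        · simpa using hB0
  · intro i
    simp only [LNet.deepen, one_div]
    split_ifs
    · exact hi
    · rw [abs_neg]; exact hi
    · simpa using hB0

lemma lrelu_id {ν : ℝ} (h0 : 0 ≤ ν) (h1 : ν < 1) (y : ℝ) :
    (1 + ν)⁻¹ * lrelu ν y + -(1 + ν)⁻¹ * lrelu ν (-y) = y := by
  have h : lrelu ν y - lrelu ν (-y) = (1 + ν) * y := by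
    unfold lrelu
    rcases le_total 0 y with hy | hy
    · rw [max_eq_left (by nlinarith), max_eq_right (by nlinarith)]; ring
    · rw [max_eq_right (by nlinarith), max_eq_left (by nlinarith)]; ring
  have h3 : (1 + ν) ≠ 0 := by positivity
  have : (1 + ν)⁻¹ * lrelu ν y + -(1 + ν)⁻¹ * lrelu ν (-y) = (1 + ν)⁻¹ * (lrelu ν y - lrelu ν (-y)) := by ring
  rw [this, h, inv_mul_cancel_left₀ h3]

lemma LNet.deepen_eval {ν : ℝ} (h0 : 0 ≤ ν) (h1 : ν < 1) {d r : ℕ} (net : LNet d (r + 2)) (x : Fin d → ℝ) :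
    (net.deepen ν).eval ν x = net.eval ν x := by
  rw [LNet.eval_eq]
  have hst : (net.deepen ν).state ν x = layer ν (net.state ν x)
      (fun i j => if i = 0 then net.Wout j else if i = 1 then - net.Wout j else 0,
    fun i => if i = 0 then net.bout else if i = 1 then - net.bout else 0) := by
    simp [LNet.state, LNet.deepen, List.foldl_append]
  rw [hst, Fin.sum_univ_succ, Fin.sum_univ_succ]
  have hz : ∀ i : Fin r, (i.succ.succ : Fin (r+2)) ≠ 0 ∧ (i.succ.succ : Fin (r+2)) ≠ 1 := by
    intro i
    constructor
    · exact Fin.succ_ne_zero _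
    · intro h
      have := congrArg Fin.val h
      simp at this
  simp only [LNet.deepen, layer, if_true, one_div, Fin.succ_zero_eq_one, (hz _).1, (hz _).2, if_false,
    zero_mul, Finset.sum_const_zero, add_zero]
  have h10 : (1 : Fin (r + 2)) ≠ 0 := by simp
  simp only [h10, if_false, neg_mul, Finset.sum_neg_distrib]
  have e := lrelu_id h0 h1 ((∑ j, net.Wout j * net.state ν x j) + net.bout)
  rw [LNet.eval_eq]
  rw [neg_add, neg_mul] at e
  exact e

lemma deepen_iter {ν : ℝ} (h0 : 0 ≤ ν) (h1 : ν < 1) {d r : ℕ} {B : ℝ} (hB : 1 ≤ B) (m : ℕ)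
    (net : LNet d (r + 2)) (hb : net.bounded B) :
    ∃ net' : LNet d (r + 2), net'.hid.length = net.hid.length + m ∧ net'.bounded B ∧
      ∀ x, net'.eval ν x = net.eval ν x := by
  induction m with
  | zero => exact ⟨net, rfl, hb, fun _ => rfl⟩
  | succ m ih =>
    obtain ⟨n', e1, e2, e3⟩ := ih
    refine ⟨n'.deepen ν, ?_, LNet.deepen_bounded h0 n' hB e2, fun x => ?_⟩
    · simp [LNet.deepen, e1]; ring
    · rw [LNet.deepen_eval h0 h1, e3]

lemma net_to_params (ν : ℝ) {d r L : ℕ} (net : LNet d r) (hL : net.hid.length = L - 1) {B : ℝ}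
    (hb : net.bounded B) :
    ∃ θ : ParamIdx d r L → ℝ, (∀ i, |θ i| ≤ B) ∧ ∀ x, netOfParams ν d r L θ x = net.eval ν x := by
  obtain ⟨h1, h2, h3, h4, h5⟩ := hb
  let g : Fin (L - 1) → (Fin r → Fin r → ℝ) × (Fin r → ℝ) := fun l => net.hid.get (Fin.cast hL.symm l)
  have hg : ∀ l, g l ∈ net.hid := fun l => List.get_mem _ _
  have hgl : net.hid = (List.finRange (L - 1)).map g := by
    refine List.ext_get (by simp [hL]) (fun n a b => ?_)
    simp [g]
  refine ⟨fun i => match i with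
    | Sum.inl (i, j) => net.W0 i j
    | Sum.inr (Sum.inl i) => net.b0 i
    | Sum.inr (Sum.inr (Sum.inl (l, i, j))) => (g l).1 i j
    | Sum.inr (Sum.inr (Sum.inr (Sum.inl (l, i)))) => (g l).2 i
    | Sum.inr (Sum.inr (Sum.inr (Sum.inr (Sum.inl i)))) => net.Wout i
    | Sum.inr (Sum.inr (Sum.inr (Sum.inr (Sum.inr ())))) => net.bout, ?_, ?_⟩
  · rintro (⟨i, j⟩ | i | ⟨l, i, j⟩ | ⟨l, i⟩ | i | _)
    · exact h1 i j
    · exact h2 i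
    · exact (h3 _ (hg l)).1 i j
    · exact (h3 _ (hg l)).2 i
    · exact h4 i
    · exact h5
  · intro x
    rw [LNet.eval_eq, LNet.state, hgl, List.foldl_map]
    rfl

lemma memDNN_params {ν : ℝ} (h0 : 0 ≤ ν) (h1 : ν < 1) {d L' r' L r : ℕ} {B : ℝ} (hB : 1 ≤ B)
    (hr : r' ≤ r) (hL : L' ≤ L) (hr2 : 2 ≤ r) {g : (Fin d → ℝ) → ℝ} (hg : memDNN ν d L' r' B g) :
    ∃ θ : ParamIdx d r L → ℝ, (∀ i, |θ i| ≤ B) ∧ ∀ x, netOfParams ν d r L θ x = g x := by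
  obtain ⟨net, hl, hb, he⟩ := hg
  obtain ⟨k, rfl⟩ := Nat.exists_eq_add_of_le hr
  have hb2 := net.widen_bounded k (by linarith) hb
  have he2 := net.widen_eval ν k
  have hl2 : (net.widen k).hid.length + 1 = L' := by simpa [LNet.widen] using hl
  generalize net.widen k = net2 at *
  generalize r' + k = R at *
  obtain ⟨m, rfl⟩ := Nat.exists_eq_add_of_le' hr2
  obtain ⟨net3, f1, f2, f3⟩ := deepen_iter h0 h1 hB (L - L') net2 hb2
  obtain ⟨θ, t1, t2⟩ := net_to_params ν (L := L) net3 (by omega) f2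
  exact ⟨θ, t1, fun x => by rw [t2, f3, he2, he]⟩

lemma memDNN_mono {ν : ℝ} {d L r : ℕ} {B B' : ℝ} (h : B ≤ B') {g : (Fin d → ℝ) → ℝ}
    (hg : memDNN ν d L r B g) : memDNN ν d L r B' g := by
  obtain ⟨net, hl, ⟨h1, h2, h3, h4, h5⟩, he⟩ := hg
  exact ⟨net, hl, ⟨fun i j => (h1 i j).trans h, fun i => (h2 i).trans h, fun p hp =>
    ⟨fun i j => ((h3 p hp).1 i j).trans h, fun i => ((h3 p hp).2 i).trans h⟩, fun i => (h4 i).trans h,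
    h5.trans h⟩, he⟩


lemma prior_ball {ι : Type} [Fintype ι] (π : (ι → ℝ) → ℝ) (κ δκ : ℝ) (hδ : 0 < δκ)
    (hlow : ∀ θ : ι → ℝ, (∀ i, |θ i| ≤ κ) → δκ ^ Fintype.card ι ≤ π θ) (θs : ι → ℝ)
    (hθs : ∀ i, |θs i| ≤ κ - 1) (η : ℝ) (hη0 : 0 < η) (hη1 : η ≤ 1) :
    ENNReal.ofReal ((δκ * (2 * η)) ^ Fintype.card ι) ≤
      (volume.withDensity fun θ => ENNReal.ofReal (π θ))
        (Set.Icc (fun i => θs i - η) (fun i => θs i + η)) := by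
  rw [withDensity_apply _ measurableSet_Icc]
  calc _ = ∫⁻ θ in Set.Icc (fun i => θs i - η) (fun i => θs i + η), ENNReal.ofReal (δκ ^ Fintype.card ι) := by
        rw [setLIntegral_const, Real.volume_Icc_pi, mul_pow, ENNReal.ofReal_mul (by positivity)]
        congr 1
        have : ∀ i, θs i + η - (θs i - η) = 2 * η := fun i => by ring
        simp only [this, Finset.prod_const, Finset.card_univ]
        rw [ENNReal.ofReal_pow (by positivity)]
    _ ≤ _ := by
        refine setLIntegral_mono' measurableSet_Icc fun θ hθ => ENNReal.ofReal_le_ofReal (hlow θ fun i => ?_)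
        have h1 := hθ.1 i
        have h2 := hθ.2 i
        have h3 := abs_le.1 (hθs i)
        simp only at h1 h2
        rw [abs_le]; constructor <;> linarith

/-- Bound of the posterior mass for a fixed sample size. -/
lemma post_fixed (a : ℝ) (ha : 1 ≤ a) (d : ℕ) (F : ℝ) (hF : 1 ≤ F) (ν : ℝ) (hν0 : 0 ≤ ν) (hν1 : ν < 1)
    (f₀ : (Fin d → ℝ) → ℝ) (hf₀ : Continuous f₀) (hf₀bd : ∀ x, |f₀ x| ≤ F)
    (PX : Measure (Fin d → ℝ)) [IsProbabilityMeasure PX] (hPX : PX (cube a d) = 1)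
    [IsProbabilityMeasure (logisticLaw d PX f₀)] (n r L : ℕ)
    (Pr : Measure (ParamIdx d r L → ℝ)) [IsProbabilityMeasure Pr] (π : (ParamIdx d r L → ℝ) → ℝ)
    (hπ : Pr = volume.withDensity fun θ => ENNReal.ofReal (π θ))
    (κ δκ : ℝ) (hκ : 1 ≤ κ) (hδκ : 0 < δκ) (hlow : ∀ θ : ParamIdx d r L → ℝ, (∀ i, |θ i| ≤ κ) →
      δκ ^ Fintype.card (ParamIdx d r L) ≤ π θ)
    (θs : ParamIdx d r L → ℝ) (hθs : ∀ i, |θs i| ≤ κ - 1) (e : ℝ)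
    (happ : ∀ x ∈ cube a d, |netOfParams ν d r L θs x - f₀ x| ≤ e)
    (η : ℝ) (hη0 : 0 < η) (hη1 : η ≤ 1) (e' : ℝ) (he' : (L + 2 : ℕ) * η * (κ * (r + d + 1) * a) ^ (L + 2) ≤ e')
    (τ : ℝ) (hτ : 0 < τ) (hnτ : 128 ≤ n * τ ^ 2)
    (hNP : ((signBd (Fintype.card (ParamIdx d r L)) (n * (r + (⌊2 * F / (τ / 8)⌋₊ + 1))) (L + 2) ^ (L + 2) : ℕ) : ℝ)
      ≤ Real.exp (n * τ ^ 2 / 64))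
    (t : ℝ) (ht : 0 < t) (δ : ℝ) (hδ : 0 < δ) :
    Measure.pi (fun _ : Fin n => logisticLaw d PX f₀)
      {D | ENNReal.ofReal δ < postMass Pr (bernLik ν F d r L D)
        {θ | τ < l2dist d PX (fun x => sigmoid (trunc F (netOfParams ν d r L θ x)))
          (fun x => sigmoid (f₀ x))}} ≤
      ENNReal.ofReal (Real.exp (n * τ ^ 2 / 64) * Real.exp (-(n * τ ^ 2 / 16))) +
      ENNReal.ofReal (t * Real.exp (n * ((e + e') ^ 2 / sigmoid (-F) ^ 2))) +
      ENNReal.ofReal (Real.exp (-(n * τ ^ 2 / 64)) /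
        (δ * (t * (δκ * (2 * η)) ^ Fintype.card (ParamIdx d r L)))) := by
  have hF0 : 0 < F := by linarith
  set p0 : (Fin d → ℝ) → ℝ := fun x => sigmoid (f₀ x) with hp0
  have hp0m : Measurable p0 := (sigm_cont.comp hf₀).measurable
  have hlaw : logisticLaw d PX f₀ = blaw PX p0 := rfl
  have : IsProbabilityMeasure (blaw PX p0) := by rw [← hlaw]; infer_instance
  have hpm : Measurable fun z : (ParamIdx d r L → ℝ) × (Fin d → ℝ) => pfun ν F d r L z.1 z.2 :=
    (pfun_cont ν F d r L).measurable
  set A : Set (ParamIdx d r L → ℝ) := {θ | τ < l2dist d PX (pfun ν F d r L θ) p0} with hA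
  have hAm : MeasurableSet A := by
    have h1 : Measurable fun θ => ∫ x, (pfun ν F d r L θ x - p0 x) ^ 2 ∂PX := by
      have : StronglyMeasurable (Function.uncurry fun (θ : ParamIdx d r L → ℝ) (x : Fin d → ℝ) =>
          (pfun ν F d r L θ x - p0 x) ^ 2) := by
        refine Measurable.stronglyMeasurable ?_
        exact (hpm.sub (hp0m.comp measurable_snd)).pow_const 2
      exact this.integral_prod_right.measurable
    exact measurableSet_lt measurable_const (Real.continuous_sqrt.measurable.comp h1)
  obtain ⟨S, hSA, hScard, hScov⟩ := exists_net ν F hν1 hF0 d r L n PX τ hτ hnτ hNP A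
  have hbase := post_bound PX p0 (pfun ν F d r L) Pr hp0m (fun x => sigm_pos _) (fun x => sigm_lt_one _)
    hpm (sigmoid (-F)) (e + e') (sigm_pos _)
    (fun θ x => sigm_mono (neg_le_trunc hF0.le _))
    (fun θ x => by
      unfold pfun
      rw [sigm_neg]
      exact sigm_mono (neg_le_neg (trunc_le _ _)))
    A hAm S (τ ^ 2)
    (fun θ hθ => by
      have := hSA θ hθ
      simp only [hA, Set.mem_ofPred_eq, l2dist] at this
      exact (Real.lt_sqrt hτ.le |>.1 this).le)
    (fun θ hθ => by
      obtain ⟨θ', h1, h2⟩ := hScov θ hθ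
      refine ⟨θ', h1, ?_⟩
      unfold l2dist at h2
      have := (Real.sqrt_le_left (by positivity)).1 h2
      nlinarith)
    (Set.Icc (fun i => θs i - η) (fun i => θs i + η)) measurableSet_Icc
    ((δκ * (2 * η)) ^ Fintype.card (ParamIdx d r L)) (by positivity)
    (by rw [hπ]; exact prior_ball π κ δκ hδκ hlow θs hθs η hη0 hη1)
    (fun θ hθ => by
      have hcube : ∀ᵐ x ∂PX, x ∈ cube a d := by
        have hmc : MeasurableSet (cube a d) := by
          have : cube a d = Set.univ.pi fun _ => Set.Icc (-a) a := by ext x; simp only [cube, Set.mem_univ_pi]; rfl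
          rw [this]
          exact MeasurableSet.univ_pi fun _ => measurableSet_Icc
        exact mem_ae_iff_prob_eq_one hmc |>.2 hPX
      filter_upwards [hcube] with x hx
      have hnd := net_diff hν0 hν1 d r L θ θs κ a η hκ ha hη0.le (fun i => by
        have h1 := hθ.1 i
        have h2 := hθ.2 i
        have h3 := abs_le.1 (hθs i)
        simp only at h1 h2
        rw [abs_le]; constructor <;> linarith) (fun i => (hθs i).trans (by linarith)) (fun i => by
        have h1 := hθ.1 i
        have h2 := hθ.2 i
        simp only at h1 h2
        rw [abs_le]; constructor <;> linarith) x hx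
      have e1 : p0 x = sigmoid (trunc F (f₀ x)) := by rw [trunc_of_abs_le (hf₀bd x)]
      rw [e1]
      unfold pfun
      refine (sigm_lip _ _).trans ((trunc_lip _ _ _).trans ?_)
      refine (abs_sub_le _ (netOfParams ν d r L θs x) _).trans ?_
      linarith [happ x hx])
    n t ht δ hδ
  refine le_trans ?_ (hbase.trans ?_)
  · rfl
  · gcongr


open Asymptotics in
/-- Polynomially bounded sequences. -/
def PolyB (f : ℕ → ℝ) : Prop := ∃ p : ℕ, f =O[atTop] fun n : ℕ => (n : ℝ) ^ p

lemma pow_bigO {p q : ℕ} (h : p ≤ q) :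
    Asymptotics.IsBigO atTop (fun n : ℕ => (n : ℝ) ^ p) fun n : ℕ => (n : ℝ) ^ q := by
  refine Asymptotics.IsBigO.of_bound 1 ?_
  filter_upwards [eventually_ge_atTop 1] with n hn
  have : (1:ℝ) ≤ n := by exact_mod_cast hn
  rw [Real.norm_of_nonneg (by positivity), Real.norm_of_nonneg (by positivity), one_mul]
  exact pow_le_pow_right₀ this h

lemma PolyB.add {f g : ℕ → ℝ} (hf : PolyB f) (hg : PolyB g) : PolyB fun n => f n + g n := by
  obtain ⟨p, hp⟩ := hf
  obtain ⟨q, hq⟩ := hg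
  exact ⟨max p q, (hp.trans (pow_bigO (le_max_left _ _))).add (hq.trans (pow_bigO (le_max_right _ _)))⟩

lemma PolyB.mul {f g : ℕ → ℝ} (hf : PolyB f) (hg : PolyB g) : PolyB fun n => f n * g n := by
  obtain ⟨p, hp⟩ := hf
  obtain ⟨q, hq⟩ := hg
  exact ⟨p + q, by simpa only [pow_add] using hp.mul hq⟩

lemma PolyB.const (c : ℝ) : PolyB fun _ => c :=
  ⟨0, by simpa using Asymptotics.isBigO_const_const c (one_ne_zero (α := ℝ)) atTop⟩

lemma PolyB.id : PolyB fun n => (n : ℝ) := ⟨1, by simpa using Asymptotics.isBigO_refl _ _⟩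

lemma PolyB.of_bigO {f g : ℕ → ℝ} (h : Asymptotics.IsBigO atTop f g) (hg : PolyB g) : PolyB f := by
  obtain ⟨q, hq⟩ := hg
  exact ⟨q, h.trans hq⟩

lemma tendsto_ell : Tendsto (fun n : ℕ => Real.log n) atTop atTop :=
  Real.tendsto_log_atTop.comp tendsto_natCast_atTop_atTop

lemma one_bigO_ell : Asymptotics.IsBigO atTop (fun _ : ℕ => (1:ℝ)) fun n : ℕ => Real.log n := by
  refine Asymptotics.IsBigO.of_bound 1 ?_
  filter_upwards [tendsto_ell.eventually_ge_atTop 1] with n hn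
  rw [Real.norm_of_nonneg (by linarith : 0 ≤ Real.log n)]
  simpa using hn

lemma const_bigO_ell (c : ℝ) : Asymptotics.IsBigO atTop (fun _ : ℕ => c) fun n : ℕ => Real.log n :=
  (Asymptotics.isBigO_const_const c one_ne_zero atTop).trans one_bigO_ell

lemma PolyB.ell : PolyB fun n : ℕ => Real.log n := by
  refine ⟨1, Asymptotics.IsBigO.of_bound 1 ?_⟩
  filter_upwards [eventually_ge_atTop 1] with n hn
  have : (1:ℝ) ≤ n := by exact_mod_cast hn
  rw [Real.norm_of_nonneg (Real.log_nonneg this), Real.norm_of_nonneg (by positivity), one_mul, pow_one]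
  exact Real.log_le_self (by linarith)

lemma PolyB.log {f : ℕ → ℝ} (hf : PolyB f) (h1 : ∀ᶠ n in atTop, 1 ≤ f n) :
    Asymptotics.IsBigO atTop (fun n => Real.log (f n)) fun n : ℕ => Real.log n := by
  obtain ⟨p, hp⟩ := hf
  obtain ⟨c, hc0, hc⟩ := hp.exists_pos
  have hb : ∀ᶠ n : ℕ in atTop, ‖Real.log (f n)‖ ≤ ‖(Real.log c + p * Real.log n : ℝ)‖ := by
    filter_upwards [h1, hc.bound, eventually_ge_atTop 1] with n h1 h2 h3
    have h4 : (1:ℝ) ≤ n := by exact_mod_cast h3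
    rw [Real.norm_of_nonneg (by linarith), Real.norm_of_nonneg (by positivity)] at h2
    have h5 : Real.log (f n) ≤ Real.log c + p * Real.log n := by
      rw [← Real.log_pow, ← Real.log_mul hc0.ne' (by positivity)]
      exact Real.log_le_log (by linarith) h2
    have h6 := Real.log_nonneg h1
    rw [Real.norm_of_nonneg h6, Real.norm_of_nonneg (by linarith)]
    exact h5
  refine (Asymptotics.IsBigO.of_bound' hb).trans ?_
  exact (const_bigO_ell _).add ((Asymptotics.isBigO_refl _ _).const_mul_left _)

section


/-- square root of the effective dimension. -/
def qseq (β : ℝ) (d : ℕ) (n : ℕ) : ℝ := (n : ℝ) ^ ((d : ℝ) / (2 * (2 * β + d)))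

lemma qseq_one_le {β : ℝ} (hβ : 0 < β) (d : ℕ) {n : ℕ} (hn : 1 ≤ n) : 1 ≤ qseq β d n := by
  have h4 : (1:ℝ) ≤ n := by exact_mod_cast hn
  exact Real.one_le_rpow h4 (by positivity)

lemma qseq_le {β : ℝ} (hβ : 0 < β) (d : ℕ) {n : ℕ} (hn : 1 ≤ n) : qseq β d n ≤ n := by
  have h4 : (1:ℝ) ≤ n := by exact_mod_cast hn
  have : (n:ℝ) ^ ((d : ℝ) / (2 * (2 * β + d))) ≤ (n:ℝ) ^ (1:ℝ) := by
    refine Real.rpow_le_rpow_of_exponent_le h4 ?_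
    have hd : (0:ℝ) ≤ d := by positivity
    rw [div_le_one (by positivity)]
    linarith
  simpa [qseq] using this

lemma qseq_tendsto {β : ℝ} (hβ : 0 < β) {d : ℕ} (hd : 0 < d) : Tendsto (qseq β d) atTop atTop := by
  have hd' : (0:ℝ) < d := by exact_mod_cast hd
  exact (tendsto_rpow_atTop (by positivity)).comp tendsto_natCast_atTop_atTop

lemma qseq_poly {β : ℝ} (hβ : 0 < β) (d : ℕ) : PolyB (qseq β d) := by
  refine PolyB.of_bigO (Asymptotics.IsBigO.of_bound 1 ?_) PolyB.id
  filter_upwards [eventually_ge_atTop 1] with n hn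
  have := qseq_one_le hβ d hn
  have := qseq_le hβ d hn
  rw [Real.norm_of_nonneg (by linarith), Real.norm_of_nonneg (by positivity)]
  linarith

lemma one_bigO_qseq {β : ℝ} (hβ : 0 < β) (d : ℕ) : Asymptotics.IsBigO atTop (fun _ : ℕ => (1:ℝ)) (qseq β d) := by
  refine Asymptotics.IsBigO.of_bound 1 ?_
  filter_upwards [eventually_ge_atTop 1] with n hn
  have := qseq_one_le hβ d hn
  rw [Real.norm_of_nonneg (by linarith : 0 ≤ qseq β d n)]
  simpa using this

lemma rwidth_bigO {β : ℝ} (hβ : 0 < β) (d : ℕ) {Cr : ℝ} (hCr : 0 < Cr) :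
    Asymptotics.IsBigO atTop (fun n => (rwidth Cr β d n : ℝ)) (qseq β d) := by
  have h1 : Asymptotics.IsBigO atTop (fun n => Cr * qseq β d n + 1) (qseq β d) :=
    ((Asymptotics.isBigO_refl _ _).const_mul_left _).add (one_bigO_qseq hβ d)
  refine (Asymptotics.IsBigO.of_bound' (Eventually.of_forall fun n => ?_)).trans h1
  have hq : 0 ≤ qseq β d n := by unfold qseq; positivity
  rw [Real.norm_of_nonneg (by positivity), Real.norm_of_nonneg (by positivity)]
  exact (Nat.ceil_lt_add_one (by unfold qseq at hq; positivity)).le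

lemma Ldepth_bigO {CL : ℝ} (hCL : 0 < CL) :
    Asymptotics.IsBigO atTop (fun n => (Ldepth CL n : ℝ)) fun n : ℕ => Real.log n := by
  have h1 : Asymptotics.IsBigO atTop (fun n : ℕ => CL * Real.log n + 1) fun n : ℕ => Real.log n :=
    ((Asymptotics.isBigO_refl _ _).const_mul_left _).add one_bigO_ell
  refine (Asymptotics.IsBigO.of_bound' ?_).trans h1
  filter_upwards [eventually_ge_atTop 1] with n hn
  have h4 : (1:ℝ) ≤ n := by exact_mod_cast hn
  have := Real.log_nonneg h4
  rw [Real.norm_of_nonneg (by positivity), Real.norm_of_nonneg (by positivity)]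
  exact (Nat.ceil_lt_add_one (by positivity)).le

lemma card_le (d r L : ℕ) : Fintype.card (ParamIdx d r L) ≤ (r + 1) ^ 2 * (L + (d + 1)) := by
  simp only [ParamIdx, Fintype.card_sum, Fintype.card_prod, Fintype.card_fin, Fintype.card_unit]
  have h : L - 1 ≤ L := Nat.sub_le _ _
  have h1 : (L - 1) * (r * r) ≤ L * (r * r) := Nat.mul_le_mul_right _ h
  have h2 : (L - 1) * r ≤ L * r := Nat.mul_le_mul_right _ h
  nlinarith [Nat.zero_le (L * r), Nat.zero_le (r * r), Nat.zero_le (r * r * d), Nat.zero_le (r * d), Nat.zero_le L]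

lemma card_bigO {β : ℝ} (hβ : 0 < β) (d : ℕ) {Cr CL : ℝ} (hCr : 0 < Cr) (hCL : 0 < CL) :
    Asymptotics.IsBigO atTop
      (fun n => (Fintype.card (ParamIdx d (rwidth Cr β d n) (Ldepth CL n)) : ℝ))
      fun n : ℕ => qseq β d n ^ 2 * Real.log n := by
  have h1 : Asymptotics.IsBigO atTop (fun n => ((rwidth Cr β d n : ℝ) + 1) ^ 2 *
      ((Ldepth CL n : ℝ) + (d + 1))) fun n : ℕ => qseq β d n ^ 2 * Real.log n :=
    (((rwidth_bigO hβ d hCr).add (one_bigO_qseq hβ d)).pow 2).mul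
      ((Ldepth_bigO hCL).add (const_bigO_ell _))
  refine (Asymptotics.IsBigO.of_bound' (Eventually.of_forall fun n => ?_)).trans h1
  rw [Real.norm_of_nonneg (by positivity), Real.norm_of_nonneg (by positivity)]
  exact_mod_cast card_le d (rwidth Cr β d n) (Ldepth CL n)
end


/-- `n ε_n²`. -/
def vseq (β : ℝ) (d : ℕ) (γ : ℝ) (n : ℕ) : ℝ := qseq β d n ^ 2 * Real.log n ^ (2 * γ)

lemma vseq_eq {β : ℝ} (hβ : 0 < β) (d : ℕ) (γ : ℝ) {n : ℕ} (hn : 1 ≤ n) :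
    n * ((n : ℝ) ^ (-(β / (2 * β + d))) * Real.log n ^ γ) ^ 2 = vseq β d γ n := by
  have h4 : (1:ℝ) ≤ n := by exact_mod_cast hn
  have h0 : (0:ℝ) < n := by linarith
  have hl := Real.log_nonneg h4
  unfold vseq qseq
  rw [mul_pow, ← mul_assoc]
  congr 1
  · rw [← Real.rpow_natCast, ← Real.rpow_mul h0.le, ← Real.rpow_natCast, ← Real.rpow_mul h0.le]
    nth_rewrite 1 [← Real.rpow_one (n:ℝ)]
    rw [← Real.rpow_add h0]
    congr 1
    have : (2 * β + d) ≠ 0 := by positivity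
    push_cast
    field_simp
    ring
  · rw [← Real.rpow_natCast, ← Real.rpow_mul hl]
    congr 1
    push_cast; ring

lemma e_eq {β : ℝ} (hβ : 0 < β) (d : ℕ) {n : ℕ} (hn : 1 ≤ n) :
    n * ((n : ℝ) ^ (-(β / (2 * β + d)))) ^ 2 = qseq β d n ^ 2 := by
  have := vseq_eq hβ d 0 hn
  simpa [vseq] using this

lemma vseq_tendsto {β : ℝ} (hβ : 0 < β) (d : ℕ) {γ : ℝ} (hγ : 2 < γ) :
    Tendsto (vseq β d γ) atTop atTop := by
  have h1 : Tendsto (fun n : ℕ => Real.log n ^ (2 * γ)) atTop atTop :=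
    (tendsto_rpow_atTop (by linarith)).comp tendsto_ell
  refine tendsto_atTop_mono' _ ?_ h1
  filter_upwards [eventually_ge_atTop 1] with n hn
  have h4 : (1:ℝ) ≤ n := by exact_mod_cast hn
  have hl := Real.log_nonneg h4
  have := qseq_one_le hβ d hn
  have h5 : 0 ≤ Real.log n ^ (2 * γ) := by positivity
  unfold vseq
  exact le_mul_of_one_le_left h5 (one_le_pow₀ this)

lemma le_vseq {β : ℝ} (hβ : 0 < β) (d : ℕ) {γ : ℝ} (hγ : 2 < γ) {g : ℕ → ℝ}
    (hg : Asymptotics.IsBigO atTop g fun n : ℕ => qseq β d n ^ 2 * Real.log n ^ 3) {c : ℝ} (hc : 0 < c) :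
    ∀ᶠ n in atTop, g n ≤ c * vseq β d γ n := by
  obtain ⟨C, hC0, hC⟩ := hg.exists_pos
  have h1 : Tendsto (fun n : ℕ => Real.log n ^ (2 * γ - 3)) atTop atTop :=
    (tendsto_rpow_atTop (by linarith)).comp tendsto_ell
  filter_upwards [hC.bound, h1.eventually_ge_atTop (C / c), tendsto_ell.eventually_ge_atTop 1] with n h2 h3 h4
  have hl : 0 < Real.log n := by linarith
  have h5 : Real.log n ^ (2 * γ) = Real.log n ^ 3 * Real.log n ^ (2 * γ - 3) := by
    rw [← Real.rpow_natCast, ← Real.rpow_add hl]; congr 1; push_cast; ring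
  rw [Real.norm_of_nonneg (by positivity : 0 ≤ qseq β d n ^ 2 * Real.log n ^ 3)] at h2
  rw [div_le_iff₀ hc] at h3
  refine (le_abs_self _).trans (h2.trans ?_)
  unfold vseq
  rw [h5]
  have : 0 ≤ qseq β d n ^ 2 * Real.log n ^ 3 := by positivity
  nlinarith

lemma q2_bigO (β : ℝ) (d : ℕ) : Asymptotics.IsBigO atTop (fun n => qseq β d n ^ 2)
    fun n : ℕ => qseq β d n ^ 2 * Real.log n ^ 3 := by
  have := (Asymptotics.isBigO_refl (fun n => qseq β d n ^ 2) atTop).mul (one_bigO_ell.pow 3)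
  simpa using this

lemma Ldepth_poly {CL : ℝ} (hCL : 0 < CL) : PolyB fun n => (Ldepth CL n : ℝ) :=
  PolyB.of_bigO (Ldepth_bigO hCL) PolyB.ell

lemma rwidth_poly {β : ℝ} (hβ : 0 < β) (d : ℕ) {Cr : ℝ} (hCr : 0 < Cr) :
    PolyB fun n => (rwidth Cr β d n : ℝ) := PolyB.of_bigO (rwidth_bigO hβ d hCr) (qseq_poly hβ d)

lemma card_poly {β : ℝ} (hβ : 0 < β) (d : ℕ) {Cr CL : ℝ} (hCr : 0 < Cr) (hCL : 0 < CL) :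
    PolyB fun n => (Fintype.card (ParamIdx d (rwidth Cr β d n) (Ldepth CL n)) : ℝ) := by
  refine PolyB.of_bigO (card_bigO hβ d hCr hCL) ?_
  have := ((qseq_poly hβ d).mul (qseq_poly hβ d)).mul PolyB.ell
  simpa only [sq] using this

/-- Entropy condition. -/
lemma entropy_ok {β : ℝ} (hβ : 0 < β) (d : ℕ) {Cr CL : ℝ} (hCr : 0 < Cr) (hCL : 0 < CL) {γ : ℝ}
    (hγ : 2 < γ) (k : ℕ → ℕ) (hk : PolyB fun n => (k n : ℝ)) :
    ∀ᶠ n in atTop, ((signBd (Fintype.card (ParamIdx d (rwidth Cr β d n) (Ldepth CL n)))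
      (n * (rwidth Cr β d n + k n)) (Ldepth CL n + 2) ^ (Ldepth CL n + 2) : ℕ) : ℝ) ≤
      Real.exp (vseq β d γ n / 64) := by
  set T : ℕ → ℝ := fun n => (Fintype.card (ParamIdx d (rwidth Cr β d n) (Ldepth CL n)) : ℝ) with hT
  let base : ℕ → ℝ := fun n => 1 + T n * ((n : ℝ) * ((rwidth Cr β d n : ℝ) + k n) * ((Ldepth CL n : ℝ) + 2) + 2)
  have hbase1 : ∀ n, 1 ≤ base n := fun n => by
    have : 0 ≤ T n * ((n : ℝ) * ((rwidth Cr β d n : ℝ) + k n) * ((Ldepth CL n : ℝ) + 2) + 2) := by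
      simp only [hT]; positivity
    simp only [base]; linarith
  have hbp : PolyB base :=
    (PolyB.const 1).add ((card_poly hβ d hCr hCL).mul
      (((PolyB.id.mul ((rwidth_poly hβ d hCr).add hk)).mul ((Ldepth_poly hCL).add (PolyB.const 2))).add
        (PolyB.const 2)))
  have hlog := hbp.log (Eventually.of_forall hbase1)
  have hbig : Asymptotics.IsBigO atTop (fun n => T n * ((Ldepth CL n : ℝ) + 2) * Real.log (base n))
      fun n : ℕ => qseq β d n ^ 2 * Real.log n ^ 3 := by
    have := ((card_bigO hβ d hCr hCL).mul ((Ldepth_bigO hCL).add (const_bigO_ell 2))).mul hlog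
    refine this.congr_right fun n => ?_
    ring
  filter_upwards [le_vseq hβ d hγ hbig (c := 1 / 64) (by norm_num)] with n hn
  have h0 : 0 < base n := by linarith [hbase1 n]
  have heq : ((signBd (Fintype.card (ParamIdx d (rwidth Cr β d n) (Ldepth CL n)))
      (n * (rwidth Cr β d n + k n)) (Ldepth CL n + 2) ^ (Ldepth CL n + 2) : ℕ) : ℝ) =
      Real.exp (T n * ((Ldepth CL n : ℝ) + 2) * Real.log (base n)) := by
    rw [mul_comm (T n * ((Ldepth CL n : ℝ) + 2)) (Real.log (base n)), Real.exp_mul, Real.exp_log h0]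
    have e1 : T n * ((Ldepth CL n : ℝ) + 2) =
      ((Fintype.card (ParamIdx d (rwidth Cr β d n) (Ldepth CL n)) * (Ldepth CL n + 2) : ℕ) : ℝ) := by
      simp only [hT]; push_cast; ring
    rw [e1, Real.rpow_natCast, pow_mul]
    unfold signBd
    simp only [base, hT]
    push_cast
    rfl
  rw [heq]
  apply Real.exp_le_exp.2
  linarith

/-- Radius of the parameter ball. -/
def etaseq (β : ℝ) (d : ℕ) (κ a Cr CL : ℝ) (n : ℕ) : ℝ :=
  (n : ℝ) ^ (-(β / (2 * β + d))) / ((Ldepth CL n + 2 : ℕ) *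
    (κ * (rwidth Cr β d n + d + 1) * a) ^ (Ldepth CL n + 2))

/-- Prior mass condition. -/
lemma prior_ok {β : ℝ} (hβ : 0 < β) (d : ℕ) {Cr CL : ℝ} (hCr : 0 < Cr) (hCL : 0 < CL) {γ : ℝ}
    (hγ : 2 < γ) {κ a δκ : ℝ} (hκ : 1 ≤ κ) (ha : 1 ≤ a) (hδ : 0 < δκ) :
    ∀ᶠ n in atTop, Real.exp (- vseq β d γ n) ≤
      (δκ * (2 * etaseq β d κ a Cr CL n)) ^ Fintype.card (ParamIdx d (rwidth Cr β d n) (Ldepth CL n)) := by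
  set T : ℕ → ℝ := fun n => (Fintype.card (ParamIdx d (rwidth Cr β d n) (Ldepth CL n)) : ℝ) with hT
  let Λ : ℕ → ℝ := fun n => κ * (rwidth Cr β d n + d + 1) * a
  have hΛ1 : ∀ n, 1 ≤ Λ n := fun n => one_le_Lam hκ ha d (rwidth Cr β d n)
  have hΛp : PolyB Λ :=
    ((PolyB.const κ).mul (((rwidth_poly hβ d hCr).add (PolyB.const d)).add (PolyB.const 1))).mul
      (PolyB.const a)
  have hΛlog := hΛp.log (Eventually.of_forall hΛ1)
  have hLlog := ((Ldepth_poly hCL).add (PolyB.const 2)).log (Eventually.of_forall fun n => by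
    have : (0:ℝ) ≤ Ldepth CL n := by positivity
    linarith)
  let ex : ℕ → ℝ := fun n => -Real.log (2 * δκ) + (β / (2 * β + d)) * Real.log n +
    Real.log ((Ldepth CL n : ℝ) + 2) + ((Ldepth CL n : ℝ) + 2) * Real.log (Λ n)
  have hell2 : Asymptotics.IsBigO atTop (fun n : ℕ => Real.log n) fun n : ℕ => Real.log n * Real.log n := by
    simpa using one_bigO_ell.mul (Asymptotics.isBigO_refl (fun n : ℕ => Real.log n) atTop)
  have hex : Asymptotics.IsBigO atTop ex fun n : ℕ => Real.log n * Real.log n := by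
    refine Asymptotics.IsBigO.add (Asymptotics.IsBigO.trans (Asymptotics.IsBigO.add
      (Asymptotics.IsBigO.add (const_bigO_ell _) ((Asymptotics.isBigO_refl _ _).const_mul_left _)) hLlog) hell2) ?_
    exact ((Ldepth_bigO hCL).add (const_bigO_ell 2)).mul hΛlog
  have hbig : Asymptotics.IsBigO atTop (fun n => T n * ex n)
      fun n : ℕ => qseq β d n ^ 2 * Real.log n ^ 3 := by
    refine ((card_bigO hβ d hCr hCL).mul hex).congr_right fun n => ?_
    ring
  filter_upwards [le_vseq hβ d hγ hbig (c := 1) (by norm_num), eventually_ge_atTop 1] with n hn hn1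
  have h4 : (1:ℝ) ≤ n := by exact_mod_cast hn1
  have h0 : (0:ℝ) < n := by linarith
  have hL0 : (0:ℝ) < (Ldepth CL n : ℝ) + 2 := by positivity
  have hΛ0 : 0 < Λ n := by linarith [hΛ1 n]
  have heta : δκ * (2 * etaseq β d κ a Cr CL n) = Real.exp (- ex n) := by
    have : - ex n = Real.log (2 * δκ) + (Real.log n * (-(β / (2 * β + d)))) +
      (-(Real.log ((Ldepth CL n : ℝ) + 2)) + -(Real.log (Λ n) * ((Ldepth CL n : ℝ) + 2))) := by
      simp only [ex]; ring
    rw [this, Real.exp_add, Real.exp_add, Real.exp_log (by positivity), Real.exp_mul, Real.exp_log h0,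
      Real.exp_add, Real.exp_neg, Real.exp_neg, Real.exp_log hL0, Real.exp_mul, Real.exp_log hΛ0]
    have e1 : ((Ldepth CL n : ℝ) + 2) = ((Ldepth CL n + 2 : ℕ) : ℝ) := by push_cast; rfl
    rw [e1, Real.rpow_natCast]
    unfold etaseq
    simp only [Λ]
    rw [div_eq_mul_inv, mul_inv]
    ring
  rw [heta, ← Real.exp_nat_mul]
  apply Real.exp_le_exp.2
  have : (Fintype.card (ParamIdx d (rwidth Cr β d n) (Ldepth CL n)) : ℝ) * -ex n = - (T n * ex n) := by
    simp only [hT]; ring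
  rw [this]
  linarith


/-- Resolution of the approximating network. -/
def mseq (β : ℝ) (d : ℕ) (n : ℕ) : ℕ := ⌊(n : ℝ) ^ (1 / (2 * (2 * β + d)))⌋₊

lemma mseq_tendsto {β : ℝ} (hβ : 0 < β) (d : ℕ) : Tendsto (mseq β d) atTop atTop := by
  have h : Tendsto (fun n : ℕ => (n : ℝ) ^ (1 / (2 * (2 * β + d)))) atTop atTop :=
    (tendsto_rpow_atTop (by positivity)).comp tendsto_natCast_atTop_atTop
  exact tendsto_nat_floor_atTop.comp h

lemma approx_ok {a : ℝ} {d : ℕ} (hd : 0 < d) {β : ℝ} (hβ : 0 < β) {ν : ℝ} (hν0 : 0 ≤ ν) (hν1 : ν < 1)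
    (f₀ : (Fin d → ℝ) → ℝ) {CL Cr CB c₁ : ℝ} (hCL : 0 < CL) (hCr : 0 < Cr) (hc₁ : 0 < c₁)
    (happ : ∃ M₀ : ℕ, ∀ M : ℕ, M₀ ≤ M →
        ∃ g : (Fin d → ℝ) → ℝ,
          memDNN ν d ⌈CL * Real.logb 2 M⌉₊ ⌈Cr * (M : ℝ) ^ d⌉₊ CB g ∧
          ∀ x ∈ cube a d, |g x - f₀ x| ≤ c₁ / (M : ℝ) ^ (2 * β)) :
    ∀ᶠ n in atTop, ∃ θ : ParamIdx d (rwidth Cr β d n) (Ldepth CL n) → ℝ,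
      (∀ i, |θ i| ≤ max CB 1) ∧ ∀ x ∈ cube a d,
        |netOfParams ν d (rwidth Cr β d n) (Ldepth CL n) θ x - f₀ x| ≤
          c₁ * 2 ^ (2 * β) * (n : ℝ) ^ (-(β / (2 * β + d))) := by
  obtain ⟨M₀, hM₀⟩ := happ
  have hd1 : (1:ℝ) ≤ d := by exact_mod_cast hd
  filter_upwards [(mseq_tendsto hβ d).eventually_ge_atTop (max M₀ 1), eventually_ge_atTop 1,
    (qseq_tendsto hβ hd).eventually_ge_atTop (2 / Cr)] with n hm hn hq
  have hn1 : (1:ℝ) ≤ n := by exact_mod_cast hn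
  have hn0 : (0:ℝ) < n := by linarith
  obtain ⟨g, hg, hga⟩ := hM₀ (mseq β d n) (le_trans (le_max_left _ _) hm)
  have hm1 : 1 ≤ mseq β d n := le_trans (le_max_right _ _) hm
  have hm1' : (1:ℝ) ≤ mseq β d n := by exact_mod_cast hm1
  have hx0 : 0 ≤ (n : ℝ) ^ (1 / (2 * (2 * β + d))) := by positivity
  have hmle : (mseq β d n : ℝ) ≤ (n : ℝ) ^ (1 / (2 * (2 * β + d))) := Nat.floor_le hx0
  have hmge : (n : ℝ) ^ (1 / (2 * (2 * β + d))) / 2 ≤ mseq β d n := by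
    have : (n : ℝ) ^ (1 / (2 * (2 * β + d))) < mseq β d n + 1 := Nat.lt_floor_add_one _
    linarith
  have hr : ⌈Cr * (mseq β d n : ℝ) ^ d⌉₊ ≤ rwidth Cr β d n := by
    unfold rwidth
    refine Nat.ceil_le_ceil (mul_le_mul_of_nonneg_left ?_ hCr.le)
    refine (pow_le_pow_left₀ (by positivity) hmle d).trans (le_of_eq ?_)
    rw [← Real.rpow_natCast, ← Real.rpow_mul hn0.le]
    congr 1
    field_simp
  have hL : ⌈CL * Real.logb 2 (mseq β d n)⌉₊ ≤ Ldepth CL n := by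
    unfold Ldepth
    refine Nat.ceil_le_ceil (mul_le_mul_of_nonneg_left ?_ hCL.le)
    have h1 : Real.log (mseq β d n) ≤ 1 / (2 * (2 * β + d)) * Real.log n := by
      rw [← Real.log_rpow hn0]
      exact Real.log_le_log (by linarith) hmle
    have h2 : (0.6931471803:ℝ) < Real.log 2 := Real.log_two_gt_d9
    have h3 := Real.log_nonneg hn1
    unfold Real.logb
    rw [div_le_iff₀ (by linarith)]
    refine h1.trans ?_
    rw [mul_comm]
    refine mul_le_mul_of_nonneg_left ?_ h3
    rw [div_le_iff₀ (by positivity)]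
    nlinarith
  have hr2 : 2 ≤ rwidth Cr β d n := by
    have h1 : (2:ℝ) ≤ Cr * qseq β d n := by
      rw [div_le_iff₀ hCr] at hq; linarith
    have h2 : Cr * qseq β d n ≤ rwidth Cr β d n := Nat.le_ceil _
    exact_mod_cast h1.trans h2
  obtain ⟨θ, hθ, hθg⟩ := memDNN_params hν0 hν1 (le_max_right CB 1) hr hL hr2
    (memDNN_mono (le_max_left CB 1) hg)
  refine ⟨θ, hθ, fun x hx => ?_⟩
  rw [hθg]
  refine (hga x hx).trans ?_
  have hp : ((n : ℝ) ^ (1 / (2 * (2 * β + d))) / 2) ^ (2 * β) ≤ (mseq β d n : ℝ) ^ (2 * β) :=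
    Real.rpow_le_rpow (by positivity) hmge (by positivity)
  have hpe : ((n : ℝ) ^ (1 / (2 * (2 * β + d))) / 2) ^ (2 * β) =
      (n : ℝ) ^ (β / (2 * β + d)) / 2 ^ (2 * β) := by
    rw [Real.div_rpow hx0 (by norm_num), ← Real.rpow_mul hn0.le]
    congr 2
    field_simp
  rw [hpe] at hp
  calc c₁ / (mseq β d n : ℝ) ^ (2 * β) ≤ c₁ / ((n : ℝ) ^ (β / (2 * β + d)) / 2 ^ (2 * β)) :=
        div_le_div_of_nonneg_left hc₁.le (by positivity) hp
    _ = _ := by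
        rw [Real.rpow_neg hn0.le]
        field_simp

lemma eps_lower {β : ℝ} (hβ : 0 < β) (d : ℕ) {γ : ℝ} (hγ : 2 < γ) :
    ∀ᶠ n : ℕ in atTop, 1 / (n : ℝ) ≤ (n : ℝ) ^ (-(β / (2 * β + d))) * Real.log n ^ γ := by
  filter_upwards [tendsto_ell.eventually_ge_atTop 1, eventually_ge_atTop 1] with n hl hn
  have hn1 : (1:ℝ) ≤ n := by exact_mod_cast hn
  have h1 : (1:ℝ) ≤ Real.log n ^ γ := Real.one_le_rpow hl (by linarith)
  have h2 : 1 / (n:ℝ) ≤ (n : ℝ) ^ (-(β / (2 * β + d))) := by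
    have : 1 / (n:ℝ) = (n:ℝ) ^ (-1 : ℝ) := by rw [Real.rpow_neg_one, one_div]
    rw [this]
    refine Real.rpow_le_rpow_of_exponent_le hn1 ?_
    have hd : (0:ℝ) ≤ d := by positivity
    have : β / (2 * β + d) ≤ 1 := by
      rw [div_le_one (by positivity)]; linarith
    linarith
  have h3 : (0:ℝ) ≤ (n : ℝ) ^ (-(β / (2 * β + d))) := by positivity
  nlinarith

lemma kseq_poly {F : ℝ} (hF : 1 ≤ F) (τ : ℕ → ℝ) (hτ : ∀ᶠ n : ℕ in atTop, 1 / (n : ℝ) ≤ τ n) :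
    PolyB fun n => ((⌊2 * F / (τ n / 8)⌋₊ + 1 : ℕ) : ℝ) := by
  have h1 : PolyB fun n : ℕ => 16 * F * (n : ℝ) + 1 :=
    ((PolyB.const (16 * F)).mul PolyB.id).add (PolyB.const 1)
  refine PolyB.of_bigO (Asymptotics.IsBigO.of_bound' ?_) h1
  filter_upwards [hτ, eventually_ge_atTop 1] with n h hn
  have hn1 : (1:ℝ) ≤ n := by exact_mod_cast hn
  have hp : 0 < 1 / (n:ℝ) := by positivity
  have ht : 0 < τ n := by linarith
  rw [Real.norm_of_nonneg (by positivity), Real.norm_of_nonneg (by positivity)]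
  push_cast
  have h2 : (⌊2 * F / (τ n / 8)⌋₊ : ℝ) ≤ 2 * F / (τ n / 8) := Nat.floor_le (by positivity)
  have h3 : 2 * F / (τ n / 8) ≤ 16 * F * n := by
    rw [div_le_iff₀ (by positivity)]
    have h4 : 1 ≤ τ n * n := by rwa [div_le_iff₀ (by linarith)] at h
    nlinarith
  linarith

lemma eta_props {β : ℝ} (hβ : 0 < β) (d : ℕ) {κ a Cr CL : ℝ} (hκ : 1 ≤ κ) (ha : 1 ≤ a)
    {n : ℕ} (hn : 1 ≤ n) :
    0 < etaseq β d κ a Cr CL n ∧ etaseq β d κ a Cr CL n ≤ 1 ∧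
    (Ldepth CL n + 2 : ℕ) * etaseq β d κ a Cr CL n *
      (κ * (rwidth Cr β d n + d + 1) * a) ^ (Ldepth CL n + 2) ≤ (n : ℝ) ^ (-(β / (2 * β + d))) := by
  have hn1 : (1:ℝ) ≤ n := by exact_mod_cast hn
  have hΛ := one_le_Lam hκ ha d (rwidth Cr β d n)
  have hΛp := one_le_pow₀ (n := Ldepth CL n + 2) hΛ
  have hL : (1:ℝ) ≤ ((Ldepth CL n + 2 : ℕ) : ℝ) := by exact_mod_cast (by omega)
  have he : (n : ℝ) ^ (-(β / (2 * β + d))) ≤ 1 :=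
    Real.rpow_le_one_of_one_le_of_nonpos hn1 (by simp only [Left.neg_nonpos_iff]; positivity)
  have he0 : 0 < (n : ℝ) ^ (-(β / (2 * β + d))) := by positivity
  unfold etaseq
  generalize (n : ℝ) ^ (-(β / (2 * β + d))) = e at *
  generalize (κ * ((rwidth Cr β d n : ℝ) + d + 1) * a) ^ (Ldepth CL n + 2) = P at *
  generalize ((Ldepth CL n + 2 : ℕ) : ℝ) = Q at *
  have hPQ : 1 ≤ Q * P := by nlinarith
  have hP : 0 < P := by linarith
  have hQ : 0 < Q := by linarith
  refine ⟨by positivity, ?_, ?_⟩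
  · rw [div_le_one (by positivity)]; linarith
  · refine le_of_eq ?_
    field_simp

lemma final_bound (V R M2 q C δ T P : ℝ) (hδ : 0 < δ) (hV : 0 ≤ V) (hM2 : 192 ≤ M2) (hR : R = M2 * V)
    (hq : C ≤ 1 / 2 * V) (hP : Real.exp (-V) ≤ P) :
    ENNReal.ofReal (Real.exp (R / 64) * Real.exp (-(R / 16))) +
      ENNReal.ofReal (Real.exp (-V) * Real.exp C) +
      ENNReal.ofReal (Real.exp (-(R / 64)) / (δ * (Real.exp (-V) * P))) ≤
    ENNReal.ofReal ((2 + 1 / δ) * Real.exp (-(V / 2))) := by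
  have hRV : 192 * V ≤ R := by rw [hR]; nlinarith
  have hP0 : 0 < P := lt_of_lt_of_le (Real.exp_pos _) hP
  rw [← ENNReal.ofReal_add (by positivity) (by positivity), ← ENNReal.ofReal_add (by positivity) (by positivity)]
  apply ENNReal.ofReal_le_ofReal
  have h1 : Real.exp (R / 64) * Real.exp (-(R / 16)) ≤ Real.exp (-(V / 2)) := by
    rw [← Real.exp_add]; apply Real.exp_le_exp.2; linarith
  have h2 : Real.exp (-V) * Real.exp C ≤ Real.exp (-(V / 2)) := by
    rw [← Real.exp_add]; apply Real.exp_le_exp.2; linarith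
  have h3 : Real.exp (-(R / 64)) / (δ * (Real.exp (-V) * P)) ≤ 1 / δ * Real.exp (-(V / 2)) := by
    rw [div_le_iff₀ (by positivity)]
    have h4 : 1 / δ * Real.exp (-(V / 2)) * (δ * (Real.exp (-V) * P)) =
        Real.exp (-(V / 2)) * Real.exp (-V) * P := by field_simp
    rw [h4]
    calc Real.exp (-(R / 64)) ≤ Real.exp (-(V / 2)) * Real.exp (-V) * Real.exp (-V) := by
          rw [← Real.exp_add, ← Real.exp_add]; apply Real.exp_le_exp.2; linarith
      _ ≤ _ := mul_le_mul_of_nonneg_left hP (by positivity)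
  linarith


/-- posterior concentration for nonparametric logistic regression with fully
connected Bayesian neural networks.  Under Assumption 1 on the prior for the network
parameters, and with the architecture determined by constants `C_L, C_r` satisfying the
bounded-parameter approximation theorem, the posterior mass of
`{θ : ‖φ ∘ T_F ∘ f_{θ,ρν} − φ ∘ f₀‖_{2,P_X} > M_n ε_n}` with
`ε_n = n^{−β/(2β+d)} (log n)^γ`, `γ > 2`, converges to `0` in `P₀ⁿ`-probability. -/
theorem posterior_concentration_logistic_regression
    (a : ℝ) (ha : 1 ≤ a) (d : ℕ) (hd : 0 < d)
    (β K F : ℝ) (hβ : 0 < β) (hK : 1 ≤ K) (hF : 1 ≤ F)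
    (ν : ℝ) (hν0 : 0 ≤ ν) (hν1 : ν < 1)
    -- the true log-odds function
    (f₀ : (Fin d → ℝ) → ℝ) (hf₀ : memHolder a d β K f₀) (hf₀bd : ∀ x, |f₀ x| ≤ F)
    -- the covariate distribution, supported in the cube `[−a,a]^d`
    (PX : Measure (Fin d → ℝ)) (hPXprob : IsProbabilityMeasure PX)
    (hPXsupp : PX (cube a d) = 1)
    -- the law of one observation `(X, Y)`:  `X ∼ P_X`, `Y | X ∼ Bernoulli(φ(f₀(X)))`
    (μD : Measure ((Fin d → ℝ) × ℝ)) (hμDprob : IsProbabilityMeasure μD)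
    (hμD : μD = logisticLaw d PX f₀)
    -- the constants of the bounded-parameter approximation theorem
    (CL Cr CB c₁ : ℝ) (hCL : 0 < CL) (hCr : 0 < Cr) (hCB : 0 < CB) (hc₁ : 0 < c₁)
    (happrox : ∀ f : (Fin d → ℝ) → ℝ, memHolder a d β K f →
      ∃ M₀ : ℕ, ∀ M : ℕ, M₀ ≤ M →
        ∃ g : (Fin d → ℝ) → ℝ,
          memDNN ν d ⌈CL * Real.logb 2 M⌉₊ ⌈Cr * (M : ℝ) ^ d⌉₊ CB g ∧
          ∀ x ∈ cube a d, |g x - f x| ≤ c₁ / (M : ℝ) ^ (2 * β))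
    -- the prior on the network parameters, with density satisfying Assumption 1
    (Prθ : ∀ n : ℕ, Measure (ParamIdx d (rwidth Cr β d n) (Ldepth CL n) → ℝ))
    (hPrθprob : ∀ n, IsProbabilityMeasure (Prθ n))
    (πθ : ∀ n : ℕ, (ParamIdx d (rwidth Cr β d n) (Ldepth CL n) → ℝ) → ℝ)
    (hπθmeas : ∀ n, Measurable (πθ n)) (hπθnn : ∀ n θ, 0 ≤ πθ n θ)
    (hπθdens : ∀ n, Prθ n = volume.withDensity fun θ => ENNReal.ofReal (πθ n θ))
    (hπθlow : ∀ κ : ℝ, 0 < κ → ∃ δκ : ℝ, 0 < δκ ∧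
      ∀ n : ℕ, ∀ θ : ParamIdx d (rwidth Cr β d n) (Ldepth CL n) → ℝ,
        (∀ i, |θ i| ≤ κ) →
          δκ ^ Fintype.card (ParamIdx d (rwidth Cr β d n) (Ldepth CL n)) ≤ πθ n θ)
    -- the rate `ε_n = n^{−β/(2β+d)} (log n)^γ` with `γ > 2`, and any `M_n → ∞`
    (γ : ℝ) (hγ : 2 < γ)
    (ε : ℕ → ℝ)
    (hε : ∀ n : ℕ, ε n = (n : ℝ) ^ (-(β / (2 * β + d))) * Real.log n ^ γ)
    (M : ℕ → ℝ) (hM : Tendsto M atTop atTop) :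
    ∀ δ : ℝ, 0 < δ →
      Tendsto
        (fun n : ℕ =>
          Measure.pi (fun _ : Fin n => μD)
            {D | ENNReal.ofReal δ <
              postMass (Prθ n)
                (bernLik ν F d (rwidth Cr β d n) (Ldepth CL n) D)
                {θ | M n * ε n <
                  l2dist d PX
                    (fun x => sigmoid
                      (trunc F (netOfParams ν d (rwidth Cr β d n) (Ldepth CL n) θ x)))
                    (fun x => sigmoid (f₀ x))}})
        atTop (nhds 0) := by
  intro δ hδ
  subst hμD
  have hf₀c : Continuous f₀ := hf₀.1.continuous
  set κ : ℝ := max CB 1 + 1 with hκdef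
  have hκ : 1 ≤ κ := by
    have := le_max_right CB 1
    linarith
  obtain ⟨δκ, hδκ, hlow⟩ := hπθlow κ (by linarith)
  set τ : ℕ → ℝ := fun n => M n * ε n with hτdef
  have hτlow : ∀ᶠ n : ℕ in atTop, 1 / (n : ℝ) ≤ τ n := by
    filter_upwards [eps_lower hβ d hγ, hM.eventually_ge_atTop 1] with n h1 h2
    rw [← hε n] at h1
    have h3 : 0 ≤ 1 / (n : ℝ) := by positivity
    simp only [hτdef]
    nlinarith
  set Cq : ℝ := (c₁ * 2 ^ (2 * β) + 1) ^ 2 / sigmoid (-F) ^ 2 with hCq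
  have hlim : Tendsto (fun n => ENNReal.ofReal ((2 + 1 / δ) * Real.exp (-(vseq β d γ n / 2))))
      atTop (nhds 0) := by
    have h1 : Tendsto (fun n => vseq β d γ n / 2) atTop atTop :=
      (vseq_tendsto hβ d hγ).atTop_div_const (by norm_num)
    have h2 := (Real.tendsto_exp_neg_atTop_nhds_zero.comp h1).const_mul (2 + 1 / δ)
    have h3 := ENNReal.tendsto_ofReal h2
    simpa using h3
  refine tendsto_of_tendsto_of_tendsto_of_le_of_le' tendsto_const_nhds hlim
    (Eventually.of_forall fun n => zero_le) ?_
  filter_upwards [approx_ok hd hβ hν0 hν1 f₀ hCL hCr hc₁ (happrox f₀ hf₀),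
    entropy_ok hβ d hCr hCL hγ _ (kseq_poly hF τ hτlow),
    prior_ok hβ d hCr hCL hγ hκ ha hδκ,
    le_vseq hβ d hγ ((q2_bigO β d).const_mul_left Cq) (c := 1 / 2) (by norm_num),
    (vseq_tendsto hβ d hγ).eventually_ge_atTop 1,
    hM.eventually_ge_atTop 192, hτlow, eventually_ge_atTop 1] with n hap hent hpri hqv hv1 hM192 hτn hn
  obtain ⟨θs, hθs, hθa⟩ := hap
  obtain ⟨hη0, hη1, hη2⟩ := eta_props (Cr := Cr) (CL := CL) hβ d hκ ha hn
  have hn1 : (1:ℝ) ≤ n := by exact_mod_cast hn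
  have hτ0 : 0 < τ n := lt_of_lt_of_le (by positivity) hτn
  have hR : n * τ n ^ 2 = M n ^ 2 * vseq β d γ n := by
    rw [← vseq_eq hβ d γ hn, ← hε n]
    simp only [hτdef]
    ring
  have hM2 : 192 ≤ M n ^ 2 := by nlinarith
  have hRV : 192 * vseq β d γ n ≤ n * τ n ^ 2 := by rw [hR]; nlinarith
  have hPrn := hPrθprob n
  have hmain := post_fixed a ha d F hF ν hν0 hν1 f₀ hf₀c hf₀bd PX hPXsupp n (rwidth Cr β d n)
    (Ldepth CL n) (Prθ n) (πθ n) (hπθdens n) κ δκ hκ hδκ (hlow n) θs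
    (fun i => (hθs i).trans (by simp [hκdef])) _ hθa (etaseq β d κ a Cr CL n) hη0 hη1 _ hη2
    (τ n) hτ0 (by linarith)
    (hent.trans (Real.exp_le_exp.2 (by linarith)))
    (Real.exp (-vseq β d γ n)) (Real.exp_pos _) δ hδ
  refine hmain.trans ?_
  have hqeq : n * ((c₁ * 2 ^ (2 * β) * (n : ℝ) ^ (-(β / (2 * β + d))) +
      (n : ℝ) ^ (-(β / (2 * β + d)))) ^ 2 / sigmoid (-F) ^ 2) = Cq * qseq β d n ^ 2 := by
    rw [← e_eq hβ d hn, hCq]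
    ring
  rw [hqeq]
  exact final_bound _ _ (M n ^ 2) 0 _ δ 0 _ hδ (by linarith) hM2 hR hqv hpri
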